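/- Let G be a countable discrete amenable group acting continuously on a compact metric space (X,d), let μ be a G-invariant, G-ergodic Borel probability measure on X, and let {F_n} be a tempered Følner sequence in G with lim_{n→∞} |F_n|/log n = ∞. Then for μ-almost every x ∈ X, lim_{δ→0} liminf_{n→∞} −(1/|F_n|) log μ(B_{F_n}(x,δ)) = lim_{δ→0} limsup_{n→∞} −(1/|F_n|) log μ(B_{F_n}(x,δ)) = h_μ(X,G). -/

import Mathlib

open Filter Set MeasureTheory Topology ENNReal Pointwise

variable {G X : Type*}

section Defs

variable [Group G] [MetricSpace X] [MulAction G X]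

/-- The Bowen ball `B_F(x,ε) = {y : d(gx,gy) < ε for all g ∈ F}`. -/
def bowenBall (F : Finset G) (x : X) (ε : ℝ) : Set X :=
  {y : X | ∀ g ∈ F, dist (g • x) (g • y) < ε}

/-- A Følner sequence: `|F_n ∆ gF_n|/|F_n| → 0` for every `g ∈ G`. -/
def IsFolnerSeq (F : ℕ → Finset G) : Prop :=
  ∀ g : G, Tendsto
    (fun n => ((symmDiff (F n : Set G) ((g * ·) '' (F n : Set G))).ncard : ℝ) / (F n).card)
    atTop (𝓝 0)

/-- A tempered sequence: `|⋃_{k<n} F_k⁻¹ F_n| ≤ C |F_n|` for all `n`. -/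
def IsTemperedSeq (F : ℕ → Finset G) : Prop :=
  ∃ C : ℝ, 0 < C ∧ ∀ n : ℕ,
    ((⋃ k ∈ Finset.range n, ((F k : Set G)⁻¹ * (F n : Set G))).ncard : ℝ) ≤ C * (F n).card

/-- The growth condition `lim_n |F_n| / log n = ∞`. -/
def GrowthCond (F : ℕ → Finset G) : Prop :=
  Tendsto (fun n : ℕ => ((F n).card : ℝ) / Real.log n) atTop atTop

/-- `M(Z,N,ε,s,{F_n})`: infimum of `∑ exp(-s |F_{n_i}|)` over countable families of Bowen
balls `B_{F_{n_i}}(x_i,ε)`, `n_i ≥ N`, covering `Z`. -/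
noncomputable def ballM (F : ℕ → Finset G) (Z : Set X) (N : ℕ) (ε s : ℝ) : ℝ≥0∞ :=
  ⨅ (I : Set (X × ℕ)) (_ : I.Countable) (_ : ∀ p ∈ I, N ≤ p.2)
    (_ : Z ⊆ ⋃ p ∈ I, bowenBall (F p.2) p.1 ε),
    ∑' p : I, ENNReal.ofReal (Real.exp (-s * ((F (p : X × ℕ).2).card : ℝ)))

/-- `M(Z,ε,s,{F_n}) = lim_{N→∞} M(Z,N,ε,s,{F_n})` (the quantity is nondecreasing in `N`). -/
noncomputable def ballMN (F : ℕ → Finset G) (Z : Set X) (ε s : ℝ) : ℝ≥0∞ :=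
  ⨆ N : ℕ, ballM F Z N ε s

/-- `M(Z,s,{F_n}) = lim_{ε→0} M(Z,ε,s,{F_n})` (the quantity is nondecreasing as `ε` decreases). -/
noncomputable def ballMtot (F : ℕ → Finset G) (Z : Set X) (s : ℝ) : ℝ≥0∞ :=
  ⨆ (ε : ℝ) (_ : 0 < ε), ballMN F Z ε s

/-- The Bowen topological entropy of `Z` along `{F_n}`: the critical value of `s` at which
`M(Z,s,{F_n})` jumps from `+∞` to `0`, i.e. `inf {s : M(Z,s,{F_n}) = 0}`. -/
noncomputable def bowenEnt (F : ℕ → Finset G) (Z : Set X) : ℝ≥0∞ :=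
  ⨅ (s : ℝ) (_ : ballMtot F Z s = 0), ENNReal.ofReal s

/-- The weighted quantity `W(f,N,ε,s,{F_n})`. -/
noncomputable def wtW (F : ℕ → Finset G) (f : X → ℝ≥0∞) (N : ℕ) (ε s : ℝ) : ℝ≥0∞ :=
  ⨅ (I : Set (X × ℕ)) (c : X × ℕ → ℝ≥0∞) (_ : I.Countable)
    (_ : ∀ p ∈ I, N ≤ p.2 ∧ 0 < c p ∧ c p < ⊤)
    (_ : ∀ x : X, f x ≤ ∑' p : I, c (p : X × ℕ) *
        (bowenBall (F (p : X × ℕ).2) (p : X × ℕ).1 ε).indicator (fun _ => (1 : ℝ≥0∞)) x),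
    ∑' p : I, c (p : X × ℕ) * ENNReal.ofReal (Real.exp (-s * ((F (p : X × ℕ).2).card : ℝ)))

/-- `W(Z,N,ε,s,{F_n}) = W(χ_Z,N,ε,s,{F_n})`. -/
noncomputable def wtWset (F : ℕ → Finset G) (Z : Set X) (N : ℕ) (ε s : ℝ) : ℝ≥0∞ :=
  wtW F (Z.indicator fun _ => (1 : ℝ≥0∞)) N ε s

/-- `W(Z,ε,s,{F_n}) = lim_{N→∞} W(Z,N,ε,s,{F_n})`. -/
noncomputable def wtWN (F : ℕ → Finset G) (Z : Set X) (ε s : ℝ) : ℝ≥0∞ :=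
  ⨆ N : ℕ, wtWset F Z N ε s

/-- `W(Z,s,{F_n}) = lim_{ε→0} W(Z,ε,s,{F_n})`. -/
noncomputable def wtWtot (F : ℕ → Finset G) (Z : Set X) (s : ℝ) : ℝ≥0∞ :=
  ⨆ (ε : ℝ) (_ : 0 < ε), wtWN F Z ε s

/-- The weighted Bowen topological entropy of `Z` along `{F_n}`. -/
noncomputable def wtBowenEnt (F : ℕ → Finset G) (Z : Set X) : ℝ≥0∞ :=
  ⨅ (s : ℝ) (_ : wtWtot F Z s = 0), ENNReal.ofReal s

/-- A finite open cover of `X`. -/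
def IsFinOpenCover (𝒰 : Finset (Set X)) : Prop :=
  (∀ U ∈ 𝒰, IsOpen U) ∧ ⋃₀ (𝒰 : Set (Set X)) = Set.univ

/-- `N(⋁_{g∈F} g⁻¹𝒰)`: the minimal cardinality of a subcover of the refined cover, whose members
are the sets `X(𝐔) = ⋂_{g∈F} g⁻¹ U_g` with `U_g ∈ 𝒰`. -/
noncomputable def coverNum (𝒰 : Finset (Set X)) (F : Finset G) : ℕ :=
  sInf {k : ℕ | ∃ Λ : Finset (G → Set X), Λ.card = k ∧
    (∀ u ∈ Λ, ∀ g ∈ F, u g ∈ 𝒰) ∧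
    (⋃ u ∈ Λ, ⋂ g ∈ F, (fun y => g • y) ⁻¹' u g) = Set.univ}

/-- `h_top(G,𝒰) = lim_n (1/|F_n|) log N(⋁_{g∈F_n} g⁻¹𝒰)` (the limit exists by Ornstein–Weiss,
hence equals the `limsup`). -/
noncomputable def coverTopEnt (F : ℕ → Finset G) (𝒰 : Finset (Set X)) : ℝ :=
  limsup (fun n => Real.log (coverNum 𝒰 (F n)) / (F n).card) atTop

/-- The topological entropy `h_top(X,G)`, the supremum over finite open covers. -/
noncomputable def topEnt (X : Type*) [MetricSpace X] [MulAction G X] (F : ℕ → Finset G) : ℝ≥0∞ :=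
  ⨆ (𝒰 : Finset (Set X)) (_ : IsFinOpenCover 𝒰), ENNReal.ofReal (coverTopEnt F 𝒰)

/-- `M(Z,𝒰,N,s,{F_n})`: infimum of `∑_{𝐔∈Λ} exp(-s m(𝐔))` over collections
`Λ ⊆ ⋃_{j≥N} 𝒲_{F_j}(𝒰)` covering `Z`; an element `𝐔 ∈ 𝒲_{F_j}(𝒰)` is encoded as a pair
`(j, u)` with `u g ∈ 𝒰` for `g ∈ F_j` (and `u g = ∅` elsewhere), `X(𝐔) = ⋂_{g∈F_j} g⁻¹ (u g)`
and `m(𝐔) = |F_j|`. -/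
noncomputable def covM (F : ℕ → Finset G) (𝒰 : Finset (Set X)) (Z : Set X) (N : ℕ) (s : ℝ) :
    ℝ≥0∞ :=
  ⨅ (Λ : Set (ℕ × (G → Set X)))
    (_ : ∀ p ∈ Λ, N ≤ p.1 ∧ (∀ g ∈ F p.1, p.2 g ∈ 𝒰) ∧ (∀ g ∉ F p.1, p.2 g = ∅))
    (_ : Z ⊆ ⋃ p ∈ Λ, ⋂ g ∈ F p.1, (fun y => g • y) ⁻¹' p.2 g),
    ∑' p : Λ, ENNReal.ofReal (Real.exp (-s * ((F (p : ℕ × (G → Set X)).1).card : ℝ)))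

/-- `M(Z,𝒰,s,{F_n}) = lim_{N→∞} M(Z,𝒰,N,s,{F_n})`. -/
noncomputable def covMtot (F : ℕ → Finset G) (𝒰 : Finset (Set X)) (Z : Set X) (s : ℝ) : ℝ≥0∞ :=
  ⨆ N : ℕ, covM F 𝒰 Z N s

/-- The cover-based Bowen topological entropy `h^B_top(𝒰,Z,{F_n}) = inf {s : M(Z,𝒰,s,{F_n}) = 0}`. -/
noncomputable def covBowenEnt (F : ℕ → Finset G) (𝒰 : Finset (Set X)) (Z : Set X) : ℝ≥0∞ :=
  ⨅ (s : ℝ) (_ : covMtot F 𝒰 Z s = 0), ENNReal.ofReal s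

/-- `diam(𝒰) = max {diam U : U ∈ 𝒰}`. -/
noncomputable def coverDiam (𝒰 : Finset (Set X)) : ℝ≥0∞ :=
  ⨆ U ∈ 𝒰, EMetric.diam U

end Defs

section MeasureDefs

variable [Group G] [MetricSpace X] [MulAction G X] [MeasurableSpace X]

/-- The quantity `-(1/m) log μ(B)`, with value `+∞` when `μ B = 0`. -/
noncomputable def locTerm (μ : Measure X) (B : Set X) (m : ℕ) : ℝ≥0∞ :=
  if μ B = 0 then ⊤ else ENNReal.ofReal (-(Real.log ((μ B).toReal)) / (m : ℝ))

/-- The lower local entropy `h̲_μ^{loc}(x,ε,{F_n}) = liminf_n -(1/|F_n|) log μ(B_{F_n}(x,ε))`. -/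
noncomputable def lowLoc (μ : Measure X) (F : ℕ → Finset G) (x : X) (ε : ℝ) : ℝ≥0∞ :=
  liminf (fun n => locTerm μ (bowenBall (F n) x ε) (F n).card) atTop

/-- The upper local entropy `limsup_n -(1/|F_n|) log μ(B_{F_n}(x,ε))`. -/
noncomputable def upLoc (μ : Measure X) (F : ℕ → Finset G) (x : X) (ε : ℝ) : ℝ≥0∞ :=
  limsup (fun n => locTerm μ (bowenBall (F n) x ε) (F n).card) atTop

/-- `h̲_μ^{loc}(x,{F_n}) = lim_{ε→0} h̲_μ^{loc}(x,ε,{F_n})` (a monotone limit, i.e. the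
supremum over `ε > 0`). -/
noncomputable def lowLocPt (μ : Measure X) (F : ℕ → Finset G) (x : X) : ℝ≥0∞ :=
  ⨆ (ε : ℝ) (_ : 0 < ε), lowLoc μ F x ε

/-- `h̲_μ^{loc}({F_n}) = ∫_X h̲_μ^{loc}(x,{F_n}) dμ(x)`. -/
noncomputable def lowLocEnt (μ : Measure X) (F : ℕ → Finset G) : ℝ≥0∞ :=
  ∫⁻ x, lowLocPt μ F x ∂μ

/-- A finite measurable partition of `X`, presented as `P : Fin k → Set X`. -/
def IsMeasPartition {k : ℕ} (P : Fin k → Set X) : Prop :=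
  (∀ i, MeasurableSet (P i)) ∧ Pairwise (Function.onFun Disjoint P) ∧ (⋃ i, P i) = Set.univ

/-- The static entropy `H_μ(𝒫_F)` of the join `𝒫_F = ⋁_{g∈F} g⁻¹𝒫`; its atoms are the
nonempty sets `⋂_{g∈F} g⁻¹ P(u g)` (distinct choices `u` yield disjoint atoms, and empty
atoms contribute `0`). -/
noncomputable def partH (μ : Measure X) {k : ℕ} (P : Fin k → Set X) (F : Finset G) : ℝ :=
  letI := Classical.decEq G
  ∑ u : (↥F → Fin k),
    Real.negMulLog ((μ (⋂ g : ↥F, (fun y => (g : G) • y) ⁻¹' P (u g))).toReal)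

/-- `h_μ(G,𝒫) = liminf_n (1/|F_n|) H_μ(𝒫_{F_n})`. -/
noncomputable def partEnt (μ : Measure X) (F : ℕ → Finset G) {k : ℕ} (P : Fin k → Set X) : ℝ :=
  liminf (fun n => partH μ P (F n) / (F n).card) atTop

/-- The measure-theoretic entropy `h_μ(X,G) = sup_𝒫 h_μ(G,𝒫)` (it is independent of the
Følner sequence used to compute it). -/
noncomputable def measEnt (μ : Measure X) (F : ℕ → Finset G) : ℝ≥0∞ :=
  ⨆ (k : ℕ) (P : Fin k → Set X) (_ : IsMeasPartition P), ENNReal.ofReal (partEnt μ F P)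

/-- Ergodicity of the `G`-action w.r.t. `μ`. -/
def IsErgodicGAction (G : Type*) [Group G] [MulAction G X] (μ : Measure X) : Prop :=
  ∀ A : Set X, MeasurableSet A → (∀ g : G, (g • ·) ⁻¹' A = A) → μ A = 0 ∨ μ A = 1

end MeasureDefs

/-!
By the Shannon–McMillan–Breiman theorem, the atom of `⋁_{g∈F n} g⁻¹𝒫` around almost every point
has measure `exp (-(h_μ(G,𝒫) + o(1)) * #(F n))`. Bowen balls of radius `δ` contain such atoms as
soon as the parts of `𝒫` have diameter less than `δ`, which bounds the upper local entropy. For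
the lower one, approximate `𝒫` by a labelling `q` that agrees with the label in `𝒫` of every
`δ`-close point outside a set `B` of small measure. Then the name of `x` under `𝒫` and the names
under `q` of all points of the Bowen ball of `x` differ only at the visits of `x` to `B`, which are
rare by the ergodic theorem. Hence the distribution of `q`-names, with a little independent noise
added, charges the name of `x` almost as much as `μ` charges the Bowen ball; and by Barron's lemma
no distribution charges the name of a typical point exponentially more than the true one does.

In the Shannon–McMillan–Breiman theorem, too, upper bounds on the information come from comparing
with explicit distributions. The geometric mean over `c` of the products of the `μ`-distributions
of the names on the translates of a set `K` by `c` has mass at most `1` by Finner's inequality, and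
the ergodic theorem evaluates it on typical names: the information grows at most at the entropy
rate. If it grew more slowly infinitely often on a set of positive measure, the windows where it
does would, by Lindenstrauss' covering argument, tile a fixed proportion of almost every long orbit
segment, and describing names tile by tile would beat the entropy rate almost everywhere.
-/

section Covering

open scoped RightActions

/-- The sets `A c`, `c ∈ I`, are `η`-quasi-disjoint: shrinking each of them to a part `E c` of
relative size at least `1 - η` makes them disjoint without changing their union. -/
structure IsQuasiDisjoint {ι β : Type*} [DecidableEq β] (η : ℝ) (I : Finset ι)
    (A E : ι → Finset β) : Prop where
  subset : ∀ c ∈ I, E c ⊆ A c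
  le_card : ∀ c ∈ I, (1 - η) * ((A c).card : ℝ) ≤ (E c).card
  pairwiseDisjoint : (I : Set ι).PairwiseDisjoint E
  biUnion_eq : I.biUnion E = I.biUnion A

namespace IsQuasiDisjoint

variable {ι β : Type*} [DecidableEq β] {η : ℝ} {I I' : Finset ι} {A E E' : ι → Finset β}

lemma empty : IsQuasiDisjoint η ∅ A E := by
  constructor <;> simp

lemma sum_card_eq (h : IsQuasiDisjoint η I A E) :
    ∑ c ∈ I, ((E c).card : ℝ) = (I.biUnion A).card := by
  rw [← h.biUnion_eq, Finset.card_biUnion h.pairwiseDisjoint, Nat.cast_sum]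

lemma mul_sum_card_le (h : IsQuasiDisjoint η I A E) :
    (1 - η) * ∑ c ∈ I, ((A c).card : ℝ) ≤ (I.biUnion A).card := by
  rw [Finset.mul_sum, ← h.sum_card_eq]
  exact Finset.sum_le_sum h.le_card

variable [DecidableEq ι]

lemma insert (h : IsQuasiDisjoint η I A E) {c : ι} (hc : c ∉ I)
    (hlt : ((A c ∩ I.biUnion A).card : ℝ) ≤ η * (A c).card) :
    IsQuasiDisjoint η (insert c I) A (Function.update E c (A c \ I.biUnion A)) := by
  have hE : ∀ b ∈ I, Function.update E c (A c \ I.biUnion A) b = E b := fun b hb =>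
    Function.update_of_ne (ne_of_mem_of_not_mem hb hc) _ _
  refine ⟨?_, ?_, ?_, ?_⟩
  · refine Finset.forall_mem_insert .. |>.2 ⟨?_, fun b hb => hE b hb ▸ h.subset b hb⟩
    simpa only [Function.update_self] using Finset.sdiff_subset
  · refine Finset.forall_mem_insert .. |>.2 ⟨?_, fun b hb => hE b hb ▸ h.le_card b hb⟩
    have : ((A c \ I.biUnion A).card : ℝ) + (A c ∩ I.biUnion A).card = (A c).card :=
      mod_cast Finset.card_sdiff_add_card_inter (A c) (I.biUnion A)
    rw [Function.update_self]
    linarith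
  · rw [Finset.coe_insert, Set.pairwiseDisjoint_insert_of_notMem (mod_cast hc)]
    refine ⟨fun a ha b hb hab => ?_, fun b hb => ?_⟩
    · simpa only [Function.onFun, hE a ha, hE b hb] using h.pairwiseDisjoint ha hb hab
    · rw [Function.update_self, hE b hb]
      exact Finset.sdiff_disjoint.mono_right
        ((h.subset b hb).trans (Finset.subset_biUnion_of_mem A hb))
  · rw [Finset.biUnion_insert, Finset.biUnion_insert, Function.update_self,
      Finset.biUnion_congr rfl hE, h.biUnion_eq, Finset.sdiff_union_self_eq_union]

lemma union (h : IsQuasiDisjoint η I A E) (h' : IsQuasiDisjoint η I' A E')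
    (hdisj : ∀ c ∈ I', c ∉ I ∧ Disjoint (A c) (I.biUnion A)) :
    IsQuasiDisjoint η (I ∪ I') A (fun c => if c ∈ I then E c else E' c) := by
  have hE : ∀ c ∈ I, (if c ∈ I then E c else E' c) = E c := fun c hc => if_pos hc
  have hE' : ∀ c ∈ I', (if c ∈ I then E c else E' c) = E' c := fun c hc =>
    if_neg (hdisj c hc).1
  have hcross : ∀ c ∈ I, ∀ c' ∈ I', Disjoint (E c) (E' c') := fun c hc c' hc' =>
    ((hdisj c' hc').2.mono (h'.subset c' hc')
      ((h.subset c hc).trans (Finset.subset_biUnion_of_mem A hc))).symm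
  refine ⟨?_, ?_, ?_, ?_⟩
  · exact Finset.forall_mem_union.2
      ⟨fun c hc => by simpa only [hE c hc] using h.subset c hc,
        fun c hc => by simpa only [hE' c hc] using h'.subset c hc⟩
  · exact Finset.forall_mem_union.2
      ⟨fun c hc => by simpa only [hE c hc] using h.le_card c hc,
        fun c hc => by simpa only [hE' c hc] using h'.le_card c hc⟩
  · intro a ha b hb hab
    simp only [Function.onFun]
    rcases Finset.mem_union.1 ha with ha | ha <;> rcases Finset.mem_union.1 hb with hb | hb
    · rw [hE a ha, hE b hb]; exact h.pairwiseDisjoint ha hb hab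
    · rw [hE a ha, hE' b hb]; exact hcross a ha b hb
    · rw [hE' a ha, hE b hb]; exact (hcross b hb a ha).symm
    · rw [hE' a ha, hE' b hb]; exact h'.pairwiseDisjoint ha hb hab
  · rw [Finset.union_biUnion, Finset.union_biUnion, Finset.biUnion_congr rfl hE,
      Finset.biUnion_congr rfl hE', h.biUnion_eq, h'.biUnion_eq]

end IsQuasiDisjoint

lemma exists_maximal_isQuasiDisjoint {ι β : Type*} [DecidableEq β] {η : ℝ} (hη : η ≤ 1)
    (A : ι → Finset β) (D : Finset ι) :
    ∃ I ⊆ D, ∃ E, IsQuasiDisjoint η I A E ∧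
      ∀ c ∈ D, η * ((A c).card : ℝ) ≤ (A c ∩ I.biUnion A).card := by
  classical
  induction D using Finset.induction_on with
  | empty => exact ⟨∅, subset_rfl, fun _ => ∅, .empty, by simp⟩
  | insert c D hc ih =>
    obtain ⟨I, hI, E, hE, hmax⟩ := ih
    by_cases hcI : η * ((A c).card : ℝ) ≤ (A c ∩ I.biUnion A).card
    · exact ⟨I, hI.trans (Finset.subset_insert _ _), E, hE,
        Finset.forall_mem_insert .. |>.2 ⟨hcI, hmax⟩⟩
    refine ⟨insert c I, Finset.insert_subset_insert _ hI, _,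
      hE.insert (fun h => hc (hI h)) (not_le.1 hcI).le,
      Finset.forall_mem_insert .. |>.2 ⟨?_, fun b hb => (hmax b hb).trans ?_⟩⟩
    · rw [Finset.biUnion_insert, Finset.inter_eq_left.2 Finset.subset_union_left]
      exact mul_le_of_le_one_left (Nat.cast_nonneg _) hη
    · exact_mod_cast Finset.card_le_card (Finset.inter_subset_inter_left
        (Finset.biUnion_subset_biUnion_of_subset_left A (Finset.subset_insert c I)))

variable [Group G] [DecidableEq G]

lemma mem_rightTranslate_iff {A : Finset G} {c g : G} : g ∈ A <• c ↔ g * c⁻¹ ∈ A := by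
  rw [← Finset.inv_smul_mem_iff]
  rfl

lemma sum_rightTranslate {M : Type*} [AddCommMonoid M] (A : Finset G) (c : G) (f : G → M) :
    ∑ g ∈ A <• c, f g = ∑ g ∈ A, f (g * c) :=
  Finset.sum_image (MulAction.injective (MulOpposite.op c)).injOn

lemma sum_card_rightTranslate_inter_le (A T D : Finset G) :
    ∑ c ∈ D, (A <• c ∩ T).card ≤ A.card * T.card := by
  have hswap : ∑ c ∈ D, (A <• c ∩ T).card = ∑ t ∈ T, {c ∈ D | t ∈ A <• c}.card := by
    simp only [Finset.card_filter]
    rw [Finset.sum_comm]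
    refine Finset.sum_congr rfl fun _ _ => ?_
    rw [Finset.inter_comm, ← Finset.filter_mem_eq_inter, Finset.card_filter]
  rw [hswap, mul_comm, ← smul_eq_mul]
  refine Finset.sum_le_card_nsmul _ _ _ fun t _ =>
    Finset.card_le_card_of_injOn (fun c => t * c⁻¹)
      (fun _ hc => mem_rightTranslate_iff.1 (Finset.mem_filter.1 hc).2) ?_
  exact ((mul_right_injective t).comp inv_injective).injOn

lemma mul_card_le_of_rightTranslate_inter {A D T : Finset G} {η : ℝ} (hA : A.Nonempty)
    (h : ∀ c ∈ D, η * (A.card : ℝ) ≤ (A <• c ∩ T).card) : η * D.card ≤ T.card := by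
  refine le_of_mul_le_mul_right ?_ (Nat.cast_pos.2 hA.card_pos : (0 : ℝ) < A.card)
  calc η * D.card * A.card = ∑ _c ∈ D, η * (A.card : ℝ) := by
        rw [Finset.sum_const, nsmul_eq_mul]; ring
    _ ≤ ∑ c ∈ D, ((A <• c ∩ T).card : ℝ) := Finset.sum_le_sum h
    _ ≤ T.card * A.card := by
        rw [mul_comm (T.card : ℝ)]
        exact_mod_cast sum_card_rightTranslate_inter_le A T D

lemma IsTemperedSeq.exists_card_biUnion_le {F : ℕ → Finset G} (hF : IsTemperedSeq F) :
    ∃ C : ℝ, 0 < C ∧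
      ∀ n, (((Finset.range n).biUnion fun k => (F k)⁻¹ * F n).card : ℝ) ≤ C * (F n).card := by
  obtain ⟨C, hC, h⟩ := hF
  refine ⟨C, hC, fun n => ?_⟩
  rw [← Set.ncard_coe_finset]
  simpa only [Finset.coe_biUnion, Finset.coe_mul, Finset.coe_inv, Finset.coe_range,
    Finset.mem_range, Set.mem_Iio] using h n

section Tempered

variable {F : ℕ → Finset G} {C η : ℝ} {n : G → ℕ}

lemma exists_isQuasiDisjoint_mul_card_le (hη : η ≤ 1) {m : ℕ} {D : Finset G}
    (hD : ∀ c ∈ D, n c = m ∧ (F (n c)).Nonempty) :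
    ∃ I ⊆ D, ∃ E, IsQuasiDisjoint η I (fun c => F (n c) <• c) E ∧
      η * D.card ≤ (I.biUnion fun c => F (n c) <• c).card := by
  obtain ⟨I, hI, E, hE, hmax⟩ := exists_maximal_isQuasiDisjoint hη (fun c => F (n c) <• c) D
  refine ⟨I, hI, E, hE, ?_⟩
  rcases D.eq_empty_or_nonempty with rfl | ⟨c, hc⟩
  · simp
  refine mul_card_le_of_rightTranslate_inter (A := F m) ((hD c hc).1 ▸ (hD c hc).2) fun b hb => ?_
  simpa only [Finset.card_smul_finset, (hD b hb).1] using hmax b hb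

-- A tile of level `k < m` meeting a tile `F m <• b` has its center in the translate by `b` of the
-- set `⋃ k < m, (F k)⁻¹ * F m`, whose size temperedness controls.
lemma card_le_of_not_disjoint_biUnion
    (hC : ∀ m, (((Finset.range m).biUnion fun k => (F k)⁻¹ * F m).card : ℝ) ≤ C * (F m).card)
    (hC0 : 0 ≤ C) (hη : η < 1) {m : ℕ} {I D : Finset G} {E : G → Finset G} (hI : ∀ b ∈ I, n b = m)
    (hE : IsQuasiDisjoint η I (fun c => F (n c) <• c) E)
    (hD : ∀ c ∈ D, n c < m ∧ ¬ Disjoint (F (n c) <• c) (I.biUnion fun c => F (n c) <• c)) :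
    (D.card : ℝ) ≤ C / (1 - η) * (I.biUnion fun c => F (n c) <• c).card := by
  set U := (Finset.range m).biUnion fun k => (F k)⁻¹ * F m
  have hsub : D ⊆ I.biUnion fun b => U <• b := by
    intro c hc
    obtain ⟨hcm, hmeet⟩ := hD c hc
    obtain ⟨_, hgc, hgI⟩ := Finset.not_disjoint_iff.1 hmeet
    obtain ⟨b, hb, hgb⟩ := Finset.mem_biUnion.1 hgI
    obtain ⟨a, ha, rfl⟩ := Finset.mem_smul_finset.1 hgc
    rw [hI b hb, mem_rightTranslate_iff] at hgb
    refine Finset.mem_biUnion.2 ⟨b, hb, mem_rightTranslate_iff.2 (Finset.mem_biUnion.2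
      ⟨n c, Finset.mem_range.2 hcm, ?_⟩)⟩
    simpa [mul_assoc] using Finset.mul_mem_mul (Finset.inv_mem_inv ha) hgb
  calc (D.card : ℝ) ≤ ∑ b ∈ I, ((U <• b).card : ℝ) :=
        mod_cast (Finset.card_le_card hsub).trans Finset.card_biUnion_le
    _ ≤ ∑ b ∈ I, C * ((F (n b) <• b).card : ℝ) := by
        refine Finset.sum_le_sum fun b hb => ?_
        rw [Finset.card_smul_finset, Finset.card_smul_finset, hI b hb]
        exact hC m
    _ ≤ C / (1 - η) * (I.biUnion fun c => F (n c) <• c).card := by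
        rw [← Finset.mul_sum, div_mul_eq_mul_div, le_div_iff₀ (sub_pos.2 hη), mul_assoc,
          mul_comm _ (1 - η)]
        exact mul_le_mul_of_nonneg_left hE.mul_sum_card_le hC0

-- Lindenstrauss' covering argument: choose tiles greedily from the highest level downwards,
-- discarding at each level the tiles that meet those already chosen.
lemma exists_isQuasiDisjoint_card_le
    (hC : ∀ m, (((Finset.range m).biUnion fun k => (F k)⁻¹ * F m).card : ℝ) ≤ C * (F m).card)
    (hC0 : 0 ≤ C) (hη0 : 0 < η) (hη1 : η < 1) (M : ℕ) (D : Finset G)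
    (hD : ∀ c ∈ D, n c < M ∧ (F (n c)).Nonempty) :
    ∃ I ⊆ D, ∃ E, IsQuasiDisjoint η I (fun c => F (n c) <• c) E ∧
      (D.card : ℝ) ≤ (1 / η + C / (1 - η)) * (I.biUnion fun c => F (n c) <• c).card := by
  induction M generalizing D with
  | zero =>
    obtain rfl : D = ∅ := Finset.eq_empty_of_forall_notMem fun c hc => by simpa using (hD c hc).1
    exact ⟨∅, subset_rfl, fun _ => ∅, .empty, by simp⟩
  | succ m ih =>
    set Dtop := {c ∈ D | n c = m}
    obtain ⟨I, hI, E, hE, htop⟩ := exists_isQuasiDisjoint_mul_card_le hη1.le (D := Dtop) fun c hc =>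
      have hc := Finset.mem_filter.1 hc
      ⟨hc.2, (hD c hc.1).2⟩
    set T := I.biUnion fun c => F (n c) <• c
    set Dmeet := {c ∈ D | n c ≠ m ∧ ¬ Disjoint (F (n c) <• c) T}
    set Dfree := {c ∈ D | n c ≠ m ∧ Disjoint (F (n c) <• c) T}
    have hlt : ∀ c ∈ D, n c ≠ m → n c < m := fun c hc hne =>
      lt_of_le_of_ne (Nat.lt_succ_iff.1 (hD c hc).1) hne
    obtain ⟨I', hI', E', hE', hcard'⟩ := ih Dfree fun c hc =>
      have hc := Finset.mem_filter.1 hc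
      ⟨hlt c hc.1 hc.2.1, (hD c hc.1).2⟩
    have hIm : ∀ b ∈ I, n b = m := fun b hb => (Finset.mem_filter.1 (hI hb)).2
    have hfree : ∀ c ∈ I', n c ≠ m ∧ Disjoint (F (n c) <• c) T := fun c hc =>
      (Finset.mem_filter.1 (hI' hc)).2
    have hmeet : (Dmeet.card : ℝ) ≤ C / (1 - η) * T.card :=
      card_le_of_not_disjoint_biUnion hC hC0 hη1 hIm hE fun c hc =>
        have hc := Finset.mem_filter.1 hc
        ⟨hlt c hc.1 hc.2.1, hc.2.2⟩
    have hsplit : (D.card : ℝ) ≤ Dtop.card + Dmeet.card + Dfree.card := by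
      have : D ⊆ Dtop ∪ Dmeet ∪ Dfree := fun c hc => by
        simp only [Dtop, Dmeet, Dfree, Finset.mem_union, Finset.mem_filter, hc, true_and]
        tauto
      exact_mod_cast (Finset.card_le_card this).trans ((Finset.card_union_le _ _).trans
        (Nat.add_le_add_right (Finset.card_union_le _ _) _))
    refine ⟨I ∪ I', Finset.union_subset (hI.trans (Finset.filter_subset _ _))
      (hI'.trans (Finset.filter_subset _ _)), _,
      hE.union hE' fun c hc => ⟨fun h => (hfree c hc).1 (hIm c h), (hfree c hc).2⟩, ?_⟩
    rw [Finset.union_biUnion, Finset.card_union_of_disjoint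
      ((Finset.disjoint_biUnion_right ..).2 fun c hc => (hfree c hc).2.symm), Nat.cast_add]
    have htop' : (Dtop.card : ℝ) ≤ 1 / η * T.card := by
      rwa [one_div_mul_eq_div, le_div_iff₀' hη0]
    linarith

end Tempered

end Covering

section Folner

variable [Group G] {F : ℕ → Finset G}

lemma IsFolnerSeq.tendsto_card_symmDiff [DecidableEq G] (hF : IsFolnerSeq F) (g : G) :
    Tendsto (fun n => ((symmDiff (F n) (g • F n)).card : ℝ) / (F n).card) atTop (𝓝 0) := by
  refine (hF g).congr fun n => ?_
  rw [← Set.ncard_coe_finset (symmDiff _ _), Finset.coe_symmDiff, Finset.coe_smul_finset]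
  rfl

lemma IsFolnerSeq.tendsto_card_filter [DecidableEq G] (hF : IsFolnerSeq F) (g : G) :
    Tendsto (fun n => (((F n).filter fun a => g * a ∉ F n).card : ℝ) / (F n).card)
      atTop (𝓝 0) := by
  refine squeeze_zero (fun n => by positivity) (fun n => ?_) (hF.tendsto_card_symmDiff g)
  gcongr ?_ / _
  refine Nat.cast_le.2 ?_
  refine Finset.card_le_card_of_injOn (g * ·) (fun a ha => ?_) (mul_right_injective g).injOn
  obtain ⟨ha, hga⟩ := Finset.mem_filter.1 ha
  exact Finset.mem_symmDiff.2 (.inr ⟨Finset.smul_mem_smul_finset ha, hga⟩)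

lemma abs_sum_sub_sum_le_card_symmDiff {ι : Type*} [DecidableEq ι] {r : ι → ℝ} {M : ℝ}
    (hM : ∀ i, |r i| ≤ M) (A B : Finset ι) :
    |∑ i ∈ A, r i - ∑ i ∈ B, r i| ≤ (symmDiff A B).card * M := by
  have hbound (S : Finset ι) : |∑ i ∈ S, r i| ≤ S.card * M := by
    rw [← nsmul_eq_mul]
    exact (Finset.abs_sum_le_sum_abs _ _).trans (Finset.sum_le_card_nsmul _ _ M fun i _ => hM i)
  calc |∑ i ∈ A, r i - ∑ i ∈ B, r i| = |∑ i ∈ A \ B, r i - ∑ i ∈ B \ A, r i| := by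
        rw [Finset.sum_sdiff_sub_sum_sdiff]
    _ ≤ (A \ B).card * M + (B \ A).card * M :=
        (abs_sub _ _).trans (add_le_add (hbound _) (hbound _))
    _ = (symmDiff A B).card * M := by
        rw [symmDiff, Finset.sup_eq_union, Finset.card_union_of_disjoint disjoint_sdiff_sdiff]
        push_cast
        ring

open scoped BigOperators in
lemma IsFolnerSeq.tendsto_expect_sub_mul_left (hF : IsFolnerSeq F) {r : G → ℝ} {M : ℝ}
    (hM : ∀ a, |r a| ≤ M) (g : G) :
    Tendsto (fun n => 𝔼 a ∈ F n, (r a - r (g * a))) atTop (𝓝 0) := by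
  classical
  have hlim := (hF.tendsto_card_symmDiff g).mul_const M
  rw [zero_mul] at hlim
  refine squeeze_zero_norm (fun n => ?_) hlim
  have hsum : ∑ a ∈ F n, r (g * a) = ∑ a ∈ g • F n, r a := by
    rw [Finset.smul_finset_def, Finset.sum_image (MulAction.injective g).injOn]
    rfl
  rw [Finset.expect_eq_sum_div_card, Finset.sum_sub_distrib, hsum, Real.norm_eq_abs, abs_div,
    Nat.abs_cast, div_mul_eq_mul_div]
  gcongr
  exact abs_sum_sub_sum_le_card_symmDiff hM _ _

end Folner

section Ergodic

open scoped BigOperators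

lemma exists_mem_forall_smul_eq {Γ E : Type*} [NormedAddCommGroup E] [InnerProductSpace ℝ E]
    [CompleteSpace E] [SMul Γ E] [IsIsometricSMul Γ E] (hΓ : ∀ g : Γ, g • (0 : E) = 0)
    {K : Set E} (hne : K.Nonempty) (hclosed : IsClosed K) (hconv : Convex ℝ K)
    (hK : ∀ g : Γ, ∀ w ∈ K, g • w ∈ K) : ∃ v ∈ K, ∀ g : Γ, g • v = v := by
  obtain ⟨v, hvK, hmin⟩ :=
    exists_norm_eq_iInf_of_complete_convex hne hclosed.isComplete hconv 0
  refine ⟨v, hvK, fun g => ?_⟩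
  have hinner := (norm_eq_iInf_iff_real_inner_le_zero hconv hvK).1 hmin _ (hK g v hvK)
  have hnorm : ‖g • v‖ = ‖v‖ := by
    simpa only [hΓ, dist_zero_right] using dist_smul g v 0
  rw [zero_sub, inner_neg_left, inner_sub_right, real_inner_self_eq_norm_sq,
    real_inner_comm] at hinner
  have hsq : ‖g • v - v‖ ^ 2 ≤ 0 := by
    rw [norm_sub_sq_real, hnorm]
    linarith
  exact sub_eq_zero.1 (norm_eq_zero.1 (pow_eq_zero_iff two_ne_zero |>.1
    (hsq.antisymm (sq_nonneg _))))

lemma smul_mem_closure_convexHull_orbit {Γ E : Type*} [Monoid Γ] [NormedAddCommGroup E]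
    [NormedSpace ℝ E] [DistribMulAction Γ E] [SMulCommClass Γ ℝ E] [ContinuousConstSMul Γ E]
    (x : E) (g : Γ) {w : E} (hw : w ∈ closure (convexHull ℝ (MulAction.orbit Γ x))) :
    g • w ∈ closure (convexHull ℝ (MulAction.orbit Γ x)) := by
  refine map_mem_closure (continuous_const_smul g) hw fun y hy => ?_
  have himage := (DistribSMul.toLinearMap ℝ E g).image_convexHull (MulAction.orbit Γ x)
  refine convexHull_mono ?_ (himage ▸ mem_image_of_mem _ hy)
  rintro _ ⟨z, hz, rfl⟩
  exact MulAction.mem_orbit_of_mem_orbit g hz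

variable [Group G] [MulAction G X] [MeasurableSpace X] {μ : Measure X} {F : ℕ → Finset G}

lemma IsErgodicGAction.ergodicSMul [Countable G] [MeasurableConstSMul G X]
    [IsProbabilityMeasure μ] [SMulInvariantMeasure G X μ] (herg : IsErgodicGAction G μ) :
    ErgodicSMul G X μ where
  aeconst_of_forall_preimage_smul_ae_eq {s} hs hinv := by
    -- an almost invariant set agrees a.e. with the invariant set `⋂ g, g⁻¹ s`
    set A : Set X := ⋂ g : G, (g • ·) ⁻¹' s with hA
    have hAs : A =ᵐ[μ] s := by
      have hall : ∀ᵐ x ∂μ, ∀ g : G, g • x ∈ s ↔ x ∈ s :=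
        ae_all_iff.2 fun g => (hinv g).mem_iff
      filter_upwards [hall] with x hx
      simp only [eq_iff_iff]
      exact mem_iInter.trans ((forall_congr' hx).trans (forall_const G))
    have hA_inv (g : G) : (g • ·) ⁻¹' A = A := by
      simp only [hA, preimage_iInter, preimage_preimage, smul_smul]
      exact (mul_right_surjective g).iInter_comp fun k => (k • ·) ⁻¹' s
    have hA_meas : MeasurableSet A := .iInter fun g => measurable_const_smul g hs
    refine EventuallyConst.congr ?_ hAs
    rw [eventuallyConst_set']
    rcases herg A hA_meas hA_inv with h | h
    · exact .inl (ae_eq_empty.2 h)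
    · exact .inr (eventuallyEq_univ.2 ((mem_ae_iff_prob_eq_one hA_meas).2 h))

lemma ae_eq_const_of_forall_ae_eq_smul {Y : Type*} [Nonempty Y] [MeasurableSpace Y]
    [MeasurableSpace.CountablySeparated Y] [ErgodicSMul G X μ] {v : X → Y} (hv : Measurable v)
    (hinv : ∀ g : G, (fun x => v (g • x)) =ᵐ[μ] v) : ∃ c, v =ᵐ[μ] Function.const X c :=
  exists_eventuallyEq_const_of_forall_separating MeasurableSet fun U hU =>
    eventuallyConst_set.1 <| aeconst_of_forall_preimage_smul_ae_eq G
      (hv hU).nullMeasurableSet fun g => (hinv g).preimage U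

/-- `u` is a measurable function bounded by `M` with the same mean as `f`, whose averages along
`F` are asymptotic to those of `f` at every point. -/
structure IsAveragingReplacement (μ : Measure X) (F : ℕ → Finset G) (M : ℝ) (f u : X → ℝ) :
    Prop where
  measurable : Measurable u
  abs_apply_le : ∀ x, |u x| ≤ M
  integral_eq : ∫ x, u x ∂μ = ∫ x, f x ∂μ
  tendsto : ∀ x, Tendsto (fun n => 𝔼 g ∈ F n, (f (g • x) - u (g • x))) atTop (𝓝 0)

namespace IsAveragingReplacement

variable {M : ℝ} {f u v : X → ℝ}

lemma comp_smul [MeasurableConstSMul G X] [SMulInvariantMeasure G X μ] (hF : IsFolnerSeq F)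
    (hf : Measurable f) (hM : ∀ x, |f x| ≤ M) (g : G) :
    IsAveragingReplacement μ F M f fun x => f (g • x) where
  measurable := hf.comp (measurable_const_smul g)
  abs_apply_le _ := hM _
  integral_eq := integral_smul_eq_self f
  tendsto x := by
    simpa only [mul_smul] using
      hF.tendsto_expect_sub_mul_left (r := fun a => f (a • x)) (fun _ => hM _) g

lemma memLp [IsFiniteMeasure μ] (hu : IsAveragingReplacement μ F M f u) (p : ℝ≥0∞) :
    MemLp u p μ :=
  .of_bound hu.measurable.aestronglyMeasurable M (.of_forall hu.abs_apply_le)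

lemma add_smul [IsFiniteMeasure μ] (hu : IsAveragingReplacement μ F M f u)
    (hv : IsAveragingReplacement μ F M f v) {a b : ℝ} (ha : 0 ≤ a) (hb : 0 ≤ b)
    (hab : a + b = 1) : IsAveragingReplacement μ F M f fun x => a * u x + b * v x where
  measurable := (hu.measurable.const_mul a).add (hv.measurable.const_mul b)
  abs_apply_le x := by
    exact abs_le.2 <| convex_Icc (-M) M (abs_le.1 (hu.abs_apply_le x))
      (abs_le.1 (hv.abs_apply_le x)) ha hb hab
  integral_eq := by
    have hui := memLp_one_iff_integrable.1 (hu.memLp 1)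
    have hvi := memLp_one_iff_integrable.1 (hv.memLp 1)
    rw [integral_add (hui.const_mul a) (hvi.const_mul b), integral_const_mul,
      integral_const_mul, hu.integral_eq, hv.integral_eq, ← add_mul, hab, one_mul]
  tendsto x := by
    have hlim := ((hu.tendsto x).const_mul a).add ((hv.tendsto x).const_mul b)
    rw [mul_zero, mul_zero, add_zero] at hlim
    refine hlim.congr fun n => ?_
    rw [Finset.mul_expect, Finset.mul_expect, ← Finset.expect_add_distrib]
    refine Finset.expect_congr rfl fun g _ => ?_
    linear_combination f (g • x) * hab

lemma exists_of_mem_convexHull_orbit [MeasurableConstSMul G X] [SMulInvariantMeasure G X μ]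
    [IsFiniteMeasure μ] (hF : IsFolnerSeq F) (hf : Measurable f) (hM : ∀ x, |f x| ≤ M)
    (hfL : MemLp f 2 μ) {w : Lp ℝ 2 μ}
    (hw : w ∈ convexHull ℝ (MulAction.orbit Gᵈᵐᵃ (hfL.toLp f))) :
    ∃ u, IsAveragingReplacement μ F M f u ∧ w =ᵐ[μ] u := by
  revert w
  change convexHull ℝ (MulAction.orbit Gᵈᵐᵃ (hfL.toLp f)) ⊆
    {w : Lp ℝ 2 μ | ∃ u, IsAveragingReplacement μ F M f u ∧ w =ᵐ[μ] u}
  refine convexHull_min ?_ ?_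
  · rintro _ ⟨g, rfl⟩
    exact ⟨_, comp_smul hF hf hM (DomMulAct.mk.symm g), MemLp.coeFn_toLp
      (hfL.comp_measurePreserving (measurePreserving_smul (DomMulAct.mk.symm g) μ))⟩
  · rintro w₁ ⟨u₁, hu₁, hw₁⟩ w₂ ⟨u₂, hu₂, hw₂⟩ a b ha hb hab
    refine ⟨_, hu₁.add_smul hu₂ ha hb hab, ?_⟩
    filter_upwards [Lp.coeFn_add (a • w₁) (b • w₂), Lp.coeFn_smul a w₁, Lp.coeFn_smul b w₂,
      hw₁, hw₂] with x hadd hsmul₁ hsmul₂ hx₁ hx₂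
    simp only [hadd, Pi.add_apply, hsmul₁, hsmul₂, Pi.smul_apply, hx₁, hx₂, smul_eq_mul]

end IsAveragingReplacement

lemma integral_norm_sub_le_dist_Lp [IsProbabilityMeasure μ] (v w : Lp ℝ 2 μ) :
    ∫ x, |v x - w x| ∂μ ≤ dist v w := by
  have hsub : MemLp (v - w : X → ℝ) 2 μ := (Lp.memLp v).sub (Lp.memLp w)
  calc ∫ x, |v x - w x| ∂μ = (eLpNorm (v - w : X → ℝ) 1 μ).toReal := by
        rw [eLpNorm_one_eq_lintegral_enorm, ← integral_norm_eq_lintegral_enorm hsub.1]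
        rfl
    _ ≤ (eLpNorm (v - w : X → ℝ) 2 μ).toReal :=
        ENNReal.toReal_mono hsub.eLpNorm_ne_top
          (eLpNorm_le_eLpNorm_of_exponent_le one_le_two hsub.1)
    _ = dist v w := (Lp.dist_def v w).symm

/-- The constant function `∫ f` is the minimal-norm point of the closed convex hull of the orbit
of `f` in `L²`; convex combinations of translates of `f` approximate it. -/
lemma exists_isAveragingReplacement_integral_lt [MeasurableConstSMul G X]
    [IsProbabilityMeasure μ] [ErgodicSMul G X μ] (hF : IsFolnerSeq F) {f : X → ℝ}
    (hf : Measurable f) {M : ℝ} (hM : ∀ x, |f x| ≤ M) {ε : ℝ} (hε : 0 < ε) :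
    ∃ u, IsAveragingReplacement μ F M f u ∧ ∫ x, |u x - ∫ y, f y ∂μ| ∂μ < ε := by
  have hfL : MemLp f 2 μ := .of_bound hf.aestronglyMeasurable M (.of_forall hM)
  obtain ⟨v, hv, hfix⟩ := exists_mem_forall_smul_eq (Γ := Gᵈᵐᵃ) smul_zero
    ((MulAction.nonempty_orbit (hfL.toLp f)).convexHull (𝕜 := ℝ)).closure isClosed_closure
    (convex_convexHull ℝ _).closure fun g _ => smul_mem_closure_convexHull_orbit _ g
  obtain ⟨c, hc⟩ := ae_eq_const_of_forall_ae_eq_smul (G := G) (μ := μ)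
    (Lp.stronglyMeasurable v).measurable fun g => by
      have hg := DomMulAct.smul_Lp_ae_eq (DomMulAct.mk g) v
      rw [hfix] at hg
      exact hg.symm
  obtain ⟨w, hw, hvw⟩ := Metric.mem_closure_iff.1 hv (ε / 2) (half_pos hε)
  obtain ⟨u, hu, hwu⟩ := IsAveragingReplacement.exists_of_mem_convexHull_orbit hF hf hM hfL hw
  have hui : Integrable u μ := memLp_one_iff_integrable.1 (hu.memLp 1)
  have huc : ∫ x, |u x - c| ∂μ < ε / 2 := by
    refine lt_of_le_of_lt (Eq.trans_le ?_ (integral_norm_sub_le_dist_Lp v w)) hvw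
    refine integral_congr_ae ?_
    filter_upwards [hc, hwu] with x hcx hwx
    rw [hcx, hwx, abs_sub_comm, Function.const_apply]
  have hcf : |c - ∫ y, f y ∂μ| < ε / 2 := by
    refine lt_of_le_of_lt ?_ huc
    have hmean : ∫ x, (u x - c) ∂μ = ∫ y, f y ∂μ - c := by
      rw [integral_sub hui (integrable_const c), hu.integral_eq, integral_const, probReal_univ,
        one_smul]
    rw [abs_sub_comm, ← hmean]
    exact abs_integral_le_integral_abs
  have hintegral : Integrable (fun x => |u x - c|) μ := (hui.sub (integrable_const c)).abs
  refine ⟨u, hu, ?_⟩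
  calc ∫ x, |u x - ∫ y, f y ∂μ| ∂μ ≤ ∫ x, (|u x - c| + |c - ∫ y, f y ∂μ|) ∂μ :=
        integral_mono (hui.sub (integrable_const _)).abs (hintegral.add (integrable_const _))
          fun x => abs_sub_le _ _ _
    _ = ∫ x, |u x - c| ∂μ + |c - ∫ y, f y ∂μ| := by
        rw [integral_add hintegral (integrable_const _), integral_const, probReal_univ, one_smul]
    _ < ε := by linarith

end Ergodic

section PointwiseErgodic

open scoped BigOperators RightActions

variable [Group G] {F : ℕ → Finset G}

lemma IsFolnerSeq.eventually_sum_card_filter_le [DecidableEq G] (hF : IsFolnerSeq F)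
    (K : Finset G) {ε : ℝ} (hε : 0 < ε) :
    ∀ᶠ n in atTop,
      ∑ k ∈ K, (((F n).filter fun a => k * a ∉ F n).card : ℝ) ≤ ε * (F n).card := by
  have hlim : Tendsto (fun n => ∑ k ∈ K,
      (((F n).filter fun a => k * a ∉ F n).card : ℝ) / (F n).card) atTop (𝓝 (∑ _k ∈ K, 0)) :=
    tendsto_finsetSum _ fun k _ => hF.tendsto_card_filter k
  rw [Finset.sum_const_zero] at hlim
  filter_upwards [hlim.eventually_lt_const hε] with n hn
  rcases (F n).eq_empty_or_nonempty with hempty | hne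
  · simp [hempty]
  · rw [← Finset.sum_div, div_lt_iff₀ (Nat.cast_pos.2 hne.card_pos)] at hn
    exact hn.le

lemma IsFolnerSeq.eventually_card_filter_exists_le [DecidableEq G] (hF : IsFolnerSeq F)
    (K : Finset G) {ε : ℝ} (hε : 0 < ε) :
    ∀ᶠ n in atTop,
      (((F n).filter fun a => ∃ k ∈ K, k * a ∉ F n).card : ℝ) ≤ ε * (F n).card := by
  filter_upwards [hF.eventually_sum_card_filter_le K hε] with n hn
  refine le_trans ?_ hn
  have hsub : (F n).filter (fun a => ∃ k ∈ K, k * a ∉ F n) ⊆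
      K.biUnion fun k => (F n).filter fun a => k * a ∉ F n := by
    intro a ha
    obtain ⟨ha, k, hk, hka⟩ := Finset.mem_filter.1 ha
    exact Finset.mem_biUnion.2 ⟨k, hk, Finset.mem_filter.2 ⟨ha, hka⟩⟩
  exact_mod_cast (Finset.card_le_card hsub).trans Finset.card_biUnion_le

lemma IsFolnerSeq.eventually_card_mul_sdiff_le [DecidableEq G] (hF : IsFolnerSeq F)
    (K : Finset G) {ε : ℝ} (hε : 0 < ε) :
    ∀ᶠ n in atTop, (((K * F n) \ F n).card : ℝ) ≤ ε * (F n).card := by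
  filter_upwards [hF.eventually_sum_card_filter_le K hε] with n hn
  refine le_trans ?_ hn
  have hsub : (K * F n) \ F n ⊆
      K.biUnion fun k => ((F n).filter fun a => k * a ∉ F n).image (k * ·) := by
    intro b hb
    obtain ⟨hb, hbF⟩ := Finset.mem_sdiff.1 hb
    obtain ⟨k, hk, a, ha, rfl⟩ := Finset.mem_mul.1 hb
    exact Finset.mem_biUnion.2
      ⟨k, hk, Finset.mem_image_of_mem _ (Finset.mem_filter.2 ⟨ha, hbF⟩)⟩
  exact_mod_cast (Finset.card_le_card hsub).trans
    (Finset.card_biUnion_le.trans (Finset.sum_le_sum fun k _ => Finset.card_image_le))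

lemma half_mul_card_le_sum_of_subset {ι : Type*} {A E : Finset ι} (hEA : E ⊆ A) {η M lam : ℝ}
    (hE : (1 - η) * A.card ≤ E.card) {r : ι → ℝ} (hrM : ∀ i, r i ≤ M) (hM : 0 ≤ M)
    (hlam : 0 ≤ lam) (hη : M * η ≤ lam / 2) (hA : lam * A.card ≤ ∑ i ∈ A, r i) :
    lam / 2 * E.card ≤ ∑ i ∈ E, r i := by
  classical
  have hcard : (E.card : ℝ) ≤ A.card := Nat.cast_le.2 (Finset.card_le_card hEA)
  have hsdiff : ((A \ E).card : ℝ) ≤ η * A.card := by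
    rw [Finset.cast_card_sdiff hEA]
    linarith
  have hrest : ∑ i ∈ A \ E, r i ≤ lam / 2 * A.card :=
    calc ∑ i ∈ A \ E, r i ≤ (A \ E).card • M := Finset.sum_le_card_nsmul _ _ _ fun i _ => hrM i
      _ = M * (A \ E).card := by rw [nsmul_eq_mul, mul_comm]
      _ ≤ M * η * A.card := by rw [mul_assoc]; gcongr
      _ ≤ lam / 2 * A.card := by gcongr
  have hsplit := Finset.sum_sdiff (f := r) hEA
  have : lam / 2 * E.card ≤ lam / 2 * A.card := by gcongr
  linarith

lemma card_le_mul_sum_of_forall_lt_expect [DecidableEq G] {C : ℝ}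
    (hC : ∀ n, (((Finset.range n).biUnion fun k => (F k)⁻¹ * F n).card : ℝ) ≤ C * (F n).card)
    (hC0 : 0 ≤ C) {η M lam : ℝ} (hη0 : 0 < η) (hη1 : η < 1) (hM : 0 ≤ M) (hlam : 0 < lam)
    (hMη : M * η ≤ lam / 2) {r : G → ℝ} (hr0 : ∀ a, 0 ≤ r a) (hrM : ∀ a, r a ≤ M) {m : ℕ}
    {D : Finset G} (hD : ∀ c ∈ D, ∃ n < m, lam < 𝔼 g ∈ F n, r (g * c)) :
    (D.card : ℝ) ≤
      (1 / η + C / (1 - η)) * (2 / lam) * ∑ g ∈ (Finset.range m).biUnion F * D, r g := by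
  choose! n hnm hn using hD
  have hne (c) (hc : c ∈ D) : (F (n c)).Nonempty := by
    by_contra hempty
    have hlt := hn c hc
    rw [Finset.not_nonempty_iff_eq_empty.1 hempty, Finset.expect_empty] at hlt
    exact hlt.not_ge hlam.le
  obtain ⟨I, hID, E, hE, hcard⟩ := exists_isQuasiDisjoint_card_le hC hC0 hη0 hη1 m D
    fun c hc => ⟨hnm c hc, hne c hc⟩
  have hpiece (c) (hc : c ∈ I) : lam / 2 * (E c).card ≤ ∑ g ∈ E c, r g := by
    refine half_mul_card_le_sum_of_subset (hE.subset c hc) (hE.le_card c hc) hrM hM hlam.le hMη ?_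
    have hlt := hn c (hID hc)
    rw [Finset.expect_eq_sum_div_card, lt_div_iff₀ (Nat.cast_pos.2 (hne c (hID hc)).card_pos)]
      at hlt
    rw [Finset.card_smul_finset, sum_rightTranslate]
    exact hlt.le
  have hsub : I.biUnion E ⊆ (Finset.range m).biUnion F * D := by
    intro g hg
    obtain ⟨c, hc, hgc⟩ := Finset.mem_biUnion.1 hg
    have hgF := mem_rightTranslate_iff.1 (hE.subset c hc hgc)
    rw [← inv_mul_cancel_right g c]
    exact Finset.mul_mem_mul
      (Finset.mem_biUnion.2 ⟨n c, Finset.mem_range.2 (hnm c (hID hc)), hgF⟩) (hID hc)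
  have : 0 < 1 - η := sub_pos.2 hη1
  have hsum : lam / 2 * ((I.biUnion fun c => F (n c) <• c).card : ℝ) ≤
      ∑ g ∈ (Finset.range m).biUnion F * D, r g :=
    calc lam / 2 * ((I.biUnion fun c => F (n c) <• c).card : ℝ)
        = ∑ c ∈ I, lam / 2 * ((E c).card : ℝ) := by rw [← hE.sum_card_eq, Finset.mul_sum]
      _ ≤ ∑ c ∈ I, ∑ g ∈ E c, r g := Finset.sum_le_sum hpiece
      _ = ∑ g ∈ I.biUnion E, r g := (Finset.sum_biUnion hE.pairwiseDisjoint).symm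
      _ ≤ _ := Finset.sum_le_sum_of_subset_of_nonneg hsub fun g _ _ => hr0 g
  refine hcard.trans ?_
  rw [mul_assoc]
  gcongr
  rw [div_mul_eq_mul_div, le_div_iff₀ hlam]
  linarith

variable [MulAction G X] [MeasurableSpace X] {μ : Measure X}

section Integral

variable [MeasurableConstSMul G X] [SMulInvariantMeasure G X μ]

lemma integrable_sum_smul (A : Finset G) {f : X → ℝ} (hf : Integrable f μ) :
    Integrable (fun x => ∑ g ∈ A, f (g • x)) μ :=
  integrable_finsetSum _ fun g _ => (measurePreserving_smul g μ).integrable_comp_of_integrable hf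

lemma integral_sum_smul (A : Finset G) {f : X → ℝ} (hf : Integrable f μ) :
    ∫ x, ∑ g ∈ A, f (g • x) ∂μ = A.card * ∫ x, f x ∂μ := by
  have hfg (g : G) : Integrable (fun x => f (g • x)) μ :=
    (measurePreserving_smul g μ).integrable_comp_of_integrable hf
  rw [integral_finsetSum _ fun g _ => hfg g]
  simp only [integral_smul_eq_self, Finset.sum_const, nsmul_eq_mul]

lemma measureReal_le_of_forall_card_filter_le [DecidableEq G] [IsFiniteMeasure μ]
    (hF : IsFolnerSeq F) (hne : ∀ᶠ n in atTop, (F n).Nonempty) {E : Set X} [DecidablePred (· ∈ E)]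
    (hE : MeasurableSet E) (K : Finset G) {κ : ℝ} (hκ : 0 ≤ κ) {r : X → ℝ}
    (hr0 : ∀ x, 0 ≤ r x) (hr : Integrable r μ)
    (h : ∀ x, ∀ A : Finset G,
      ((A.filter fun c => c • x ∈ E).card : ℝ) ≤ κ * ∑ g ∈ K * A, r (g • x)) :
    μ.real E ≤ κ * 2 * ∫ x, r x ∂μ := by
  obtain ⟨n, hK, hn⟩ := ((hF.eventually_card_mul_sdiff_le K one_pos).and hne).exists
  have hpos : (0 : ℝ) < (F n).card := Nat.cast_pos.2 hn.card_pos
  have hcard : ((K * F n).card : ℝ) ≤ 2 * (F n).card := by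
    have hle : ((K * F n).card : ℝ) ≤ ((K * F n) \ F n).card + (F n).card := by
      exact_mod_cast Finset.card_le_card_sdiff_add_card
    linarith
  have hind : Integrable (E.indicator fun _ => (1 : ℝ)) μ := (integrable_const 1).indicator hE
  have hpt (x : X) : ∑ c ∈ F n, E.indicator (fun _ => (1 : ℝ)) (c • x) ≤
      κ * ∑ g ∈ K * F n, r (g • x) := by
    refine Eq.trans_le ?_ (h x (F n))
    simp only [Set.indicator_apply, Finset.sum_boole]
  have hintegral := integral_mono (integrable_sum_smul (F n) hind)
    ((integrable_sum_smul (K * F n) hr).const_mul κ) hpt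
  rw [integral_const_mul, integral_sum_smul _ hind, integral_sum_smul _ hr,
    integral_indicator_const _ hE, smul_eq_mul, mul_one] at hintegral
  refine le_of_mul_le_mul_left (hintegral.trans ?_) hpos
  calc κ * ((K * F n).card * ∫ x, r x ∂μ) ≤ κ * (2 * (F n).card * ∫ x, r x ∂μ) := by
        gcongr
        exact integral_nonneg hr0
    _ = (F n).card * (κ * 2 * ∫ x, r x ∂μ) := by ring

lemma measurable_expect_smul (A : Finset G) {f : X → ℝ} (hf : Measurable f) :
    Measurable fun x => 𝔼 g ∈ A, f (g • x) := by
  simp only [Finset.expect_eq_sum_div_card]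
  exact (Finset.measurable_fun_sum _ fun g _ => hf.comp (measurable_const_smul g)).div_const _

/-- Lindenstrauss' weak type (1,1) maximal inequality, with a constant that is allowed to depend
on the level and on the bound `M`. -/
lemma exists_maximal_inequality [IsFiniteMeasure μ] (hF : IsFolnerSeq F) (hT : IsTemperedSeq F)
    (hne : ∀ᶠ n in atTop, (F n).Nonempty) {M lam : ℝ} (hM : 0 < M) (hlam : 0 < lam) :
    ∃ κ : ℝ, 0 < κ ∧ ∀ r : X → ℝ, Measurable r → (∀ x, 0 ≤ r x) → (∀ x, r x ≤ M) →
      μ.real {x | ∃ n, lam < 𝔼 g ∈ F n, r (g • x)} ≤ κ * ∫ x, r x ∂μ := by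
  classical
  obtain ⟨C, hC0, hC⟩ := hT.exists_card_biUnion_le
  set η : ℝ := min (1 / 2) (lam / (2 * M))
  have hη0 : 0 < η := lt_min one_half_pos (by positivity)
  have hη1 : η < 1 := (min_le_left _ _).trans_lt one_half_lt_one
  have hMη : M * η ≤ lam / 2 :=
    calc M * η ≤ M * (lam / (2 * M)) := by gcongr; exact min_le_right _ _
      _ = lam / 2 := by field_simp
  have : 0 < 1 - η := sub_pos.2 hη1
  refine ⟨(1 / η + C / (1 - η)) * (2 / lam) * 2, by positivity, fun r hr hr0 hrM => ?_⟩
  have hri : Integrable r μ := .of_bound hr.aestronglyMeasurable M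
    (.of_forall fun x => by rw [Real.norm_eq_abs, abs_of_nonneg (hr0 x)]; exact hrM x)
  set E : ℕ → Set X := fun m => {x | ∃ n < m, lam < 𝔼 g ∈ F n, r (g • x)} with hE
  have hE_meas (m : ℕ) : MeasurableSet (E m) := by
    simp only [hE, ← exists_prop, ofPred_exists]
    exact .iUnion fun n => .iUnion fun _ =>
      measurableSet_lt measurable_const (measurable_expect_smul _ hr)
  have hE_mono : Monotone E := fun a b hab x ⟨n, hn, hx⟩ => ⟨n, hn.trans_le hab, hx⟩
  have hE_iUnion : {x | ∃ n, lam < 𝔼 g ∈ F n, r (g • x)} = ⋃ m, E m := by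
    ext x
    simp only [hE, mem_iUnion, mem_ofPred_eq]
    exact ⟨fun ⟨n, hn⟩ => ⟨n + 1, n, n.lt_succ_self, hn⟩, fun ⟨_, n, _, hn⟩ => ⟨n, hn⟩⟩
  rw [hE_iUnion]
  refine le_of_tendsto' ((ENNReal.tendsto_toReal (measure_ne_top _ _)).comp
    (tendsto_measure_iUnion_atTop hE_mono)) fun m => ?_
  refine measureReal_le_of_forall_card_filter_le hF hne (hE_meas m) ((Finset.range m).biUnion F)
    (by positivity) hr0 hri fun x A => ?_
  refine (card_le_mul_sum_of_forall_lt_expect hC hC0.le hη0 hη1 hM.le hlam hMη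
    (r := fun g => r (g • x)) (fun _ => hr0 _) (fun _ => hrM _) (m := m) fun c hc => ?_).trans ?_
  · obtain ⟨n, hnm, hn⟩ := (Finset.mem_filter.1 hc).2
    exact ⟨n, hnm, by simpa only [mul_smul] using hn⟩
  · gcongr
    · exact fun _ _ _ => hr0 _
    · exact Finset.filter_subset _ _

end Integral

variable [MeasurableConstSMul G X] [IsProbabilityMeasure μ] [ErgodicSMul G X μ]

lemma ae_eventually_abs_expect_sub_integral_le (hF : IsFolnerSeq F) (hT : IsTemperedSeq F)
    (hne : ∀ᶠ n in atTop, (F n).Nonempty) {f : X → ℝ} (hf : Measurable f) {M : ℝ}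
    (hM : ∀ x, |f x| ≤ M) {ε : ℝ} (hε : 0 < ε) :
    ∀ᵐ x ∂μ, ∀ᶠ n in atTop, |𝔼 g ∈ F n, f (g • x) - ∫ y, f y ∂μ| ≤ ε := by
  set c := ∫ y, f y ∂μ
  have hcM : |c| ≤ M := by
    simpa using norm_integral_le_of_norm_le_const (μ := μ) (f := f) (C := M) (.of_forall hM)
  have hM0 : 0 ≤ M := (abs_nonneg c).trans hcM
  obtain ⟨κ, hκ, hmax⟩ := exists_maximal_inequality (μ := μ) hF hT hne
    (M := 2 * M + 1) (by positivity) (half_pos hε)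
  rw [ae_iff, ← nonpos_iff_eq_zero]
  refine ENNReal.le_of_forall_pos_le_add fun e he _ => ?_
  have he' : (0 : ℝ) < e := he
  obtain ⟨u, hu, hu_int⟩ := exists_isAveragingReplacement_integral_lt (μ := μ) hF hf hM
    (div_pos he' hκ)
  have hbad : μ {x | ∃ n, ε / 2 < 𝔼 g ∈ F n, |u (g • x) - c|} ≤ e := by
    rw [← ofReal_measureReal, ← ENNReal.ofReal_coe_nnreal]
    refine ENNReal.ofReal_le_ofReal <| (hmax (fun x => |u x - c|)
      (hu.measurable.sub_const c).abs (fun x => abs_nonneg _) fun x => ?_).trans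
        ((le_div_iff₀' hκ).1 hu_int.le)
    linarith [abs_sub (u x) c, hu.abs_apply_le x]
  rw [zero_add]
  refine (measure_mono fun x hx => ?_).trans hbad
  by_contra! hcon
  simp only [mem_ofPred_eq, not_exists, not_lt] at hcon
  refine hx ?_
  filter_upwards [Metric.tendsto_nhds.1 (hu.tendsto x) _ (half_pos hε), hne] with n hn hFn
  rw [dist_zero_right, Real.norm_eq_abs] at hn
  calc |𝔼 g ∈ F n, f (g • x) - c|
      = |𝔼 g ∈ F n, (f (g • x) - u (g • x)) + 𝔼 g ∈ F n, (u (g • x) - c)| := by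
        rw [← Finset.expect_add_distrib]
        simp only [sub_add_sub_cancel, Finset.expect_sub_distrib, Finset.expect_const hFn]
    _ ≤ ε / 2 + ε / 2 :=
        (abs_add_le _ _).trans (add_le_add hn.le ((Finset.abs_expect_le _ _).trans (hcon n)))
    _ = ε := add_halves ε

theorem ae_tendsto_expect_smul (hF : IsFolnerSeq F) (hT : IsTemperedSeq F)
    (hne : ∀ᶠ n in atTop, (F n).Nonempty) {f : X → ℝ} (hf : Measurable f) {M : ℝ}
    (hM : ∀ x, |f x| ≤ M) :
    ∀ᵐ x ∂μ, Tendsto (fun n => 𝔼 g ∈ F n, f (g • x)) atTop (𝓝 (∫ y, f y ∂μ)) := by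
  have hae (j : ℕ) := ae_eventually_abs_expect_sub_integral_le (μ := μ) hF hT hne hf hM
    (Nat.one_div_pos_of_nat (α := ℝ) (n := j))
  filter_upwards [ae_all_iff.2 hae] with x hx
  refine Metric.tendsto_nhds.2 fun ε hε => ?_
  obtain ⟨j, hj⟩ := exists_nat_one_div_lt hε
  filter_upwards [hx j] with n hn using hn.trans_lt hj

end PointwiseErgodic

section ConsistentWeights

variable {ι κ α : Type*}

section Holder

variable [Fintype α] {J : Finset κ} {w : κ → ℝ} {b : κ → α → ℝ}

lemma sum_prod_rpow_le_one (hw : ∀ i ∈ J, 0 ≤ w i) (hw1 : 1 ≤ ∑ i ∈ J, w i)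
    (hb : ∀ i ∈ J, ∀ a, 0 ≤ b i a) (hb1 : ∀ i ∈ J, ∑ a, b i a ≤ 1) :
    ∑ a, ∏ i ∈ J, b i a ^ w i ≤ 1 := by
  set W := ∑ i ∈ J, w i
  have hW : 0 < W := one_pos.trans_le hw1
  have hle (i) (hi : i ∈ J) (a : α) : b i a ≤ 1 :=
    (Finset.single_le_sum (f := b i) (fun a _ => hb i hi a) (Finset.mem_univ a)).trans (hb1 i hi)
  have hWw (i) (hi : i ∈ J) : 0 ≤ w i / W := div_nonneg (hw i hi) hW.le
  have hsum : ∑ i ∈ J, w i / W = 1 := by rw [← Finset.sum_div, div_self hW.ne']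
  calc ∑ a, ∏ i ∈ J, b i a ^ w i
      ≤ ∑ a, ∏ i ∈ J, b i a ^ (w i / W) := by
        refine Finset.sum_le_sum fun a _ => Finset.prod_le_prod
          (fun i hi => Real.rpow_nonneg (hb i hi a) _) fun i hi => ?_
        exact Real.rpow_le_rpow_of_exponent_ge' (hb i hi a) (hle i hi a) (hWw i hi)
          (div_le_self (hw i hi) hw1)
    _ ≤ ∑ a, ∑ i ∈ J, w i / W * b i a := Finset.sum_le_sum fun a _ =>
        Real.geom_mean_le_arith_mean_weighted J _ _ hWw hsum fun i hi => hb i hi a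
    _ = ∑ i ∈ J, w i / W * ∑ a, b i a := by
        rw [Finset.sum_comm]
        simp only [Finset.mul_sum]
    _ ≤ ∑ i ∈ J, w i / W :=
        Finset.sum_le_sum fun i hi => mul_le_of_le_one_right (hWw i hi) (hb1 i hi)
    _ = 1 := hsum

lemma sum_prod_rpow_le_prod_sum_rpow (hw : ∀ i ∈ J, 0 ≤ w i) (hw1 : 1 ≤ ∑ i ∈ J, w i)
    (hb : ∀ i ∈ J, ∀ a, 0 ≤ b i a) :
    ∑ a, ∏ i ∈ J, b i a ^ w i ≤ ∏ i ∈ J, (∑ a, b i a) ^ w i := by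
  have hB (i) (hi : i ∈ J) : 0 ≤ ∑ a, b i a := Finset.sum_nonneg fun a _ => hb i hi a
  have hnormalize (i) (hi : i ∈ J) (a : α) :
      b i a ^ w i = (b i a / ∑ a, b i a) ^ w i * (∑ a, b i a) ^ w i := by
    rw [← Real.mul_rpow (div_nonneg (hb i hi a) (hB i hi)) (hB i hi), div_mul_cancel_of_imp]
    exact fun h => (Finset.sum_eq_zero_iff_of_nonneg fun a _ => hb i hi a).1 h a
      (Finset.mem_univ a)
  calc ∑ a, ∏ i ∈ J, b i a ^ w i
      = (∑ a, ∏ i ∈ J, (b i a / ∑ a, b i a) ^ w i) * ∏ i ∈ J, (∑ a, b i a) ^ w i := by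
        rw [Finset.sum_mul]
        refine Finset.sum_congr rfl fun a _ => ?_
        rw [← Finset.prod_mul_distrib]
        exact Finset.prod_congr rfl fun i hi => hnormalize i hi a
    _ ≤ ∏ i ∈ J, (∑ a, b i a) ^ w i := by
        refine mul_le_of_le_one_left
          (Finset.prod_nonneg fun i hi => Real.rpow_nonneg (hB i hi) _) ?_
        refine sum_prod_rpow_le_one hw hw1 (fun i hi a => div_nonneg (hb i hi a) (hB i hi))
          fun i _ => ?_
        rw [← Finset.sum_div]
        exact div_self_le_one _

end Holder

variable [DecidableEq ι]

section Configurations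

variable [Fintype α] {u₀ u : ι → α} {S : Finset ι}

/-- The configurations `ι → α` that agree with the reference configuration `u₀` outside the finite
set `S`; summing over them amounts to summing over `S → α`. -/
def configs (u₀ : ι → α) (S : Finset ι) : Finset (ι → α) :=
  Finset.univ.map ⟨Function.updateFinset u₀ S, fun v w h => by
    rw [← Function.restrict_updateFinset u₀ v, h, Function.restrict_updateFinset]⟩

lemma mem_configs : u ∈ configs u₀ S ↔ ∀ i ∉ S, u i = u₀ i := by
  simp only [configs, Finset.mem_map, Finset.mem_univ, true_and]
  refine ⟨?_, fun h => ⟨S.restrict u, ?_⟩⟩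
  · rintro ⟨v, rfl⟩ i hi
    exact dif_neg hi
  · ext i
    by_cases hi : i ∈ S
    · exact dif_pos hi
    · exact (dif_neg hi).trans (h i hi).symm

lemma exists_mem_configs_eqOn (u₀ v : ι → α) (S : Finset ι) :
    ∃ u ∈ configs u₀ S, ∀ i ∈ S, v i = u i :=
  ⟨fun i => if i ∈ S then v i else u₀ i, mem_configs.2 fun _ hi => if_neg hi,
    fun _ hi => (if_pos hi).symm⟩

lemma eq_of_mem_configs_of_eqOn {v : ι → α} (hu : u ∈ configs u₀ S) (hv : v ∈ configs u₀ S)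
    (h : ∀ i ∈ S, u i = v i) : u = v := by
  ext i
  by_cases hi : i ∈ S
  · exact h i hi
  · rw [mem_configs.1 hu i hi, mem_configs.1 hv i hi]

lemma sum_configs_eq_sum_updateFinset {M : Type*} [AddCommMonoid M] (u₀ : ι → α) (S : Finset ι)
    (f : (ι → α) → M) :
    ∑ u ∈ configs u₀ S, f u = ∑ v : S → α, f (Function.updateFinset u₀ S v) :=
  Finset.sum_map _ _ _

lemma sum_configs_empty {M : Type*} [AddCommMonoid M] (u₀ : ι → α) (f : (ι → α) → M) :
    ∑ u ∈ configs u₀ ∅, f u = f u₀ := by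
  simp only [sum_configs_eq_sum_updateFinset, Function.updateFinset_empty, Fintype.sum_unique]

lemma sum_configs_insert {M : Type*} [AddCommMonoid M] {i : ι} (hi : i ∉ S)
    (f : (ι → α) → M) :
    ∑ u ∈ configs u₀ (insert i S), f u =
      ∑ u ∈ configs u₀ S, ∑ a, f (Function.update u i a) := by
  rw [← Finset.sum_product']
  refine (Finset.sum_bij' (fun z _ => Function.update z.1 i z.2)
    (fun u _ => (Function.update u i (u₀ i), u i)) ?_ ?_ ?_ ?_ fun _ _ => rfl).symm
  · rintro ⟨u, a⟩ hu
    refine mem_configs.2 fun j hj => ?_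
    obtain ⟨hji, hjS⟩ := not_or.1 (mt Finset.mem_insert.2 hj)
    exact (Function.update_of_ne hji _ _).trans
      (mem_configs.1 (Finset.mem_product.1 hu).1 j hjS)
  · intro u hu
    refine Finset.mem_product.2 ⟨mem_configs.2 fun j hj => ?_, Finset.mem_univ _⟩
    rcases eq_or_ne j i with rfl | hji
    · exact Function.update_self ..
    · exact (Function.update_of_ne hji _ _).trans
        (mem_configs.1 hu j (Finset.mem_insert.not.2 (not_or.2 ⟨hji, hj⟩)))
  · rintro ⟨u, a⟩ hu
    simp [← mem_configs.1 (Finset.mem_product.1 hu).1 i hi]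
  · intro u _
    simp

lemma sum_configs_prod {R : Type*} [CommSemiring R] (u₀ : ι → α) (S : Finset ι)
    (w : ι → α → R) :
    ∑ u ∈ configs u₀ S, ∏ i ∈ S, w i (u i) = ∏ i ∈ S, ∑ a, w i a := by
  rw [sum_configs_eq_sum_updateFinset, ← Finset.prod_coe_sort S, Finset.prod_univ_sum,
    Fintype.piFinset_univ]
  refine Finset.sum_congr rfl fun v _ => ?_
  rw [← Finset.prod_coe_sort S]
  exact Finset.prod_congr rfl fun i _ =>
    congrArg (w i) (congrFun (Function.restrict_updateFinset u₀ v) i)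

end Configurations

/-- A consistent family of finite-dimensional distributions on configurations `ι → α`: `q S u` is
the probability of seeing `u` on the finite set `S`, for some distribution on `α^ι`. -/
structure IsConsistentFamily [Fintype α] (q : Finset ι → (ι → α) → ℝ) : Prop where
  nonneg : ∀ S u, 0 ≤ q S u
  dependsOn : ∀ S, DependsOn (q S) (S : Set ι)
  sum_insert : ∀ S u i, i ∉ S → ∑ a, q (insert i S) (Function.update u i a) = q S u
  empty : ∀ u, q ∅ u = 1

namespace IsConsistentFamily

variable [Fintype α] {q r : Finset ι → (ι → α) → ℝ} (hq : IsConsistentFamily q)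

include hq

lemma sum_configs (u₀ : ι → α) (S : Finset ι) : ∑ u ∈ configs u₀ S, q S u = 1 := by
  induction S using Finset.induction_on with
  | empty => rw [sum_configs_empty, hq.empty]
  | insert i S hi ih =>
    rw [sum_configs_insert hi, ← ih]
    exact Finset.sum_congr rfl fun u _ => hq.sum_insert S u i hi

lemma antitone (u : ι → α) : Antitone fun S => q S u := by
  refine Finset.antitone_iff_forall_insert_le.2 fun S i hi => ?_
  rw [← hq.sum_insert S u i hi]
  refine le_of_eq_of_le ?_ (Finset.single_le_sum (fun a _ => hq.nonneg _ _)
    (Finset.mem_univ (u i)))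
  rw [Function.update_eq_self]

lemma le_one (S : Finset ι) (u : ι → α) : q S u ≤ 1 :=
  hq.empty u ▸ hq.antitone u S.empty_subset

lemma add_div_two (hr : IsConsistentFamily r) :
    IsConsistentFamily fun S u => (q S u + r S u) / 2 where
  nonneg S u := div_nonneg (add_nonneg (hq.nonneg S u) (hr.nonneg S u)) zero_le_two
  dependsOn S u v h := by
    change (q S u + r S u) / 2 = (q S v + r S v) / 2
    rw [hq.dependsOn S h, hr.dependsOn S h]
  sum_insert S u i hi := by
    rw [← Finset.sum_div, Finset.sum_add_distrib, hq.sum_insert S u i hi, hr.sum_insert S u i hi]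
  empty u := by rw [hq.empty, hr.empty, add_self_div_two]

end IsConsistentFamily

lemma isConsistentFamily_uniform [Fintype α] [Nonempty α] :
    IsConsistentFamily fun (S : Finset ι) (_ : ι → α) => (Fintype.card α : ℝ)⁻¹ ^ S.card where
  nonneg S _ := by positivity
  dependsOn S _ _ _ := rfl
  sum_insert S _ i hi := by
    rw [Finset.sum_const, Finset.card_univ, nsmul_eq_mul, Finset.card_insert_of_notMem hi,
      pow_succ', mul_inv_cancel_left₀ (Nat.cast_ne_zero.2 Fintype.card_ne_zero)]
  empty _ := pow_zero _

lemma prod_rpow_inter_insert_update [Fintype α] {J : Finset κ} {w : κ → ℝ}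
    {q : κ → Finset ι → (ι → α) → ℝ} (hq : ∀ j ∈ J, IsConsistentFamily (q j))
    (A : κ → Finset ι) (S : Finset ι) (i : ι) (u : ι → α) (a : α) :
    ∏ j ∈ J, q j (A j ∩ insert i S) (Function.update u i a) ^ w j =
      (∏ j ∈ J with i ∈ A j, q j (insert i (A j ∩ S)) (Function.update u i a) ^ w j) *
        ∏ j ∈ J with i ∉ A j, q j (A j ∩ S) u ^ w j := by
  rw [← Finset.prod_filter_mul_prod_filter_not J fun j => i ∈ A j]
  congr 1
  · refine Finset.prod_congr rfl fun j hj => ?_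
    rw [Finset.inter_insert_of_mem (Finset.mem_filter.1 hj).2]
  · refine Finset.prod_congr rfl fun j hj => ?_
    obtain ⟨hjJ, hij⟩ := Finset.mem_filter.1 hj
    rw [Finset.inter_insert_of_notMem hij, (hq j hjJ).dependsOn _ fun i' hi' => ?_]
    exact Function.update_of_ne (ne_of_mem_of_not_mem (Finset.mem_inter.1 hi').1 hij) _ _

/-- A discrete Finner inequality: the weights `w j` form a fractional cover of `S` by the
sets `A j`. -/
lemma sum_configs_prod_rpow_le_one [Fintype α] {J : Finset κ} {w : κ → ℝ}
    (hw : ∀ j ∈ J, 0 ≤ w j) {q : κ → Finset ι → (ι → α) → ℝ}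
    (hq : ∀ j ∈ J, IsConsistentFamily (q j)) (A : κ → Finset ι) (u₀ : ι → α) (S : Finset ι)
    (hcov : ∀ i ∈ S, 1 ≤ ∑ j ∈ J with i ∈ A j, w j) :
    ∑ u ∈ configs u₀ S, ∏ j ∈ J, q j (A j ∩ S) u ^ w j ≤ 1 := by
  induction S using Finset.induction_on with
  | empty =>
    rw [sum_configs_empty]
    refine (Finset.prod_eq_one fun j hj => ?_).le
    rw [Finset.inter_empty, (hq j hj).empty, Real.one_rpow]
  | insert i S hi ih =>
    rw [sum_configs_insert hi]
    refine le_trans (Finset.sum_le_sum fun u _ => ?_)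
      (ih fun i' hi' => hcov i' (Finset.mem_insert_of_mem hi'))
    simp only [prod_rpow_inter_insert_update hq, ← Finset.sum_mul]
    rw [← Finset.prod_filter_mul_prod_filter_not J fun j => i ∈ A j]
    refine mul_le_mul_of_nonneg_right ?_ (Finset.prod_nonneg fun j hj =>
      Real.rpow_nonneg ((hq j (Finset.mem_filter.1 hj).1).nonneg _ _) _)
    refine (sum_prod_rpow_le_prod_sum_rpow (fun j hj => hw j (Finset.mem_filter.1 hj).1)
      (hcov i (Finset.mem_insert_self ..))
      fun j hj a => (hq j (Finset.mem_filter.1 hj).1).nonneg _ _).trans_eq ?_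
    refine Finset.prod_congr rfl fun j hj => ?_
    rw [(hq j (Finset.mem_filter.1 hj).1).sum_insert]
    exact fun h => hi (Finset.mem_inter.1 h).2

end ConsistentWeights

section Information

open scoped RightActions

variable {α : Type*} [Group G] [MulAction G X] {p : X → α} {S : Finset G} {x : X}

/-- The itinerary `g ↦ p (g • x)` of a point `x`, for a partition of `X` that is presented by the
label `p x` of the part containing `x`. -/
def itinerary (p : X → α) (x : X) : G → α := fun g => p (g • x)

/-- The points whose itinerary agrees with `u` on `S`; these sets are the atoms of the join
`⋁_{g∈S} g⁻¹𝒫`. -/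
def itineraryCylinder (p : X → α) (S : Finset G) (u : G → α) : Set X :=
  {x | ∀ g ∈ S, itinerary p x g = u g}

lemma itineraryCylinder_eq_iUnion_insert [DecidableEq G] {g : G} (hg : g ∉ S) (u : G → α) :
    itineraryCylinder p S u =
      ⋃ a, itineraryCylinder p (insert g S) (Function.update u g a) := by
  ext x
  simp only [mem_iUnion]
  constructor
  · intro hx
    refine ⟨p (g • x), fun h hh => ?_⟩
    rcases eq_or_ne h g with rfl | hne
    · rw [Function.update_self, itinerary]
    · rw [Function.update_of_ne hne]
      exact hx h (Finset.mem_of_mem_insert_of_ne hh hne)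
  · rintro ⟨a, hx⟩ h hh
    rw [hx h (Finset.mem_insert_of_mem hh), Function.update_of_ne (ne_of_mem_of_not_mem hh hg)]

lemma pairwise_disjoint_itineraryCylinder_update [DecidableEq G] (p : X → α) (S : Finset G) (g : G)
    (u : G → α) :
    Pairwise (Function.onFun Disjoint
      fun a => itineraryCylinder p (insert g S) (Function.update u g a)) := by
  refine fun a b hab => Set.disjoint_left.2 fun x ha hb => hab ?_
  have hag := ha g (Finset.mem_insert_self ..)
  have hbg := hb g (Finset.mem_insert_self ..)
  rw [Function.update_self] at hag hbg
  exact hag.symm.trans hbg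

lemma itineraryCylinder_rightTranslate [DecidableEq G] (p : X → α) (S : Finset G) (c : G) (x : X) :
    itineraryCylinder p (S <• c) (itinerary p x) =
      (c • ·) ⁻¹' itineraryCylinder p S (itinerary p (c • x)) := by
  ext y
  refine Finset.forall_mem_image.trans (forall₂_congr fun g _ => ?_)
  simp only [itinerary, MulOpposite.smul_eq_mul_unop, MulOpposite.unop_op, mul_smul]

lemma comp_itinerary_eq_sum_indicator [Fintype α] [DecidableEq G] {V : (G → α) → ℝ}
    (hV : DependsOn V (S : Set G)) (p : X → α) (u₀ : G → α) (x : X) :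
    V (itinerary p x) =
      ∑ u ∈ configs u₀ S, (itineraryCylinder p S u).indicator (fun _ => V u) x := by
  obtain ⟨u, hu, hxu⟩ := exists_mem_configs_eqOn u₀ (itinerary p x) S
  rw [Finset.sum_eq_single_of_mem u hu, Set.indicator_of_mem (by exact hxu), hV hxu]
  intro v hv hvu
  exact Set.indicator_of_notMem (fun hxv => hvu (eq_of_mem_configs_of_eqOn hv hu fun g hg =>
    (hxv g hg).symm.trans (hxu g hg))) _

variable [MeasurableSpace X]

lemma measurableSet_itineraryCylinder [MeasurableConstSMul G X] [MeasurableSpace α]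
    [MeasurableSingletonClass α] (hp : Measurable p) (S : Finset G) (u : G → α) :
    MeasurableSet (itineraryCylinder p S u) := by
  simp only [itineraryCylinder, Set.ofPred_forall]
  exact Finset.measurableSet_biInter _ fun g _ =>
    hp.comp (measurable_const_smul g) (measurableSet_singleton _)

/-- The measure of `itineraryCylinder p S u`, as a real number. -/
noncomputable def cylinderMass (μ : Measure X) (p : X → α) (S : Finset G) (u : G → α) : ℝ :=
  μ.real (itineraryCylinder p S u)

/-- The average of the cylinder mass and the uniform mass. It is bounded below by
`|α|⁻¹ ^ |S| / 2`, so that its logarithm is bounded. -/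
noncomputable def mixedMass [Fintype α] (μ : Measure X) (p : X → α) (S : Finset G) (u : G → α) :
    ℝ :=
  (cylinderMass μ p S u + (Fintype.card α : ℝ)⁻¹ ^ S.card) / 2

/-- The information function of `⋁_{g∈S} g⁻¹𝒫`: minus the logarithm of the measure of the atom
containing `x`. -/
noncomputable def information (μ : Measure X) (p : X → α) (S : Finset G) (x : X) : ℝ :=
  -Real.log (cylinderMass μ p S (itinerary p x))

/-- The information function computed with `mixedMass`; unlike `information` it is bounded. -/
noncomputable def mixedInformation [Fintype α] (μ : Measure X) (p : X → α) (S : Finset G)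
    (x : X) : ℝ :=
  -Real.log (mixedMass μ p S (itinerary p x))

/-- `mixedInformation` per element of `S`. -/
noncomputable def meanInformation [Fintype α] (μ : Measure X) (p : X → α) (S : Finset G)
    (x : X) : ℝ :=
  (S.card : ℝ)⁻¹ * mixedInformation μ p S x

lemma cylinderMass_nonneg (μ : Measure X) (p : X → α) (S : Finset G) (u : G → α) :
    0 ≤ cylinderMass μ p S u :=
  measureReal_nonneg

lemma dependsOn_cylinderMass (μ : Measure X) (p : X → α) (S : Finset G) :
    DependsOn (cylinderMass μ p S) (S : Set G) := fun u v h =>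
  congrArg μ.real (Set.ext fun x => forall₂_congr fun g hg => by rw [h g hg])

lemma dependsOn_mixedMass [Fintype α] (μ : Measure X) (p : X → α) (S : Finset G) :
    DependsOn (mixedMass μ p S) (S : Set G) := fun u v h => by
  rw [mixedMass, dependsOn_cylinderMass μ p S h, mixedMass]

lemma mixedMass_pos [Fintype α] (μ : Measure X) (p : X → α) (S : Finset G) (u : G → α) :
    0 < mixedMass μ p S u := by
  have : Nonempty α := ⟨u 1⟩
  have := cylinderMass_nonneg μ p S u
  unfold mixedMass
  positivity

lemma mixedInformation_le [Fintype α] (μ : Measure X) (p : X → α) (hS : S.Nonempty) (x : X) :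
    mixedInformation μ p S x ≤ (Real.log (Fintype.card α) + 1) * S.card := by
  have : Nonempty α := ⟨p x⟩
  have hmass : (Fintype.card α : ℝ)⁻¹ ^ S.card / 2 ≤ mixedMass μ p S (itinerary p x) :=
    div_le_div_of_nonneg_right (le_add_of_nonneg_left (cylinderMass_nonneg ..)) zero_le_two
  have hlog := Real.log_le_log (by positivity) hmass
  rw [Real.log_div (by positivity) two_ne_zero, Real.log_pow, Real.log_inv] at hlog
  have hcard : (1 : ℝ) ≤ S.card := by exact_mod_cast hS.card_pos
  have htwo : Real.log 2 ≤ 1 := by linarith [Real.log_two_lt_d9]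
  unfold mixedInformation
  linarith

lemma mixedInformation_le_information_add_log_two [Fintype α] {μ : Measure X}
    (hx : 0 < cylinderMass μ p S (itinerary p x)) :
    mixedInformation μ p S x ≤ information μ p S x + Real.log 2 := by
  have hmass : cylinderMass μ p S (itinerary p x) / 2 ≤ mixedMass μ p S (itinerary p x) :=
    div_le_div_of_nonneg_right (le_add_of_nonneg_right (by positivity)) zero_le_two
  have hlog := Real.log_le_log (by positivity) hmass
  rw [Real.log_div hx.ne' two_ne_zero] at hlog
  unfold mixedInformation information
  linarith

lemma information_empty (μ : Measure X) [IsProbabilityMeasure μ] (p : X → α) (x : X) :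
    information μ p (∅ : Finset G) x = 0 := by
  simp [information, cylinderMass, itineraryCylinder]

lemma information_nonneg (μ : Measure X) [IsProbabilityMeasure μ] (p : X → α) (S : Finset G)
    (x : X) : 0 ≤ information μ p S x :=
  neg_nonneg.2 (Real.log_nonpos measureReal_nonneg measureReal_le_one)

section Finite

variable {μ : Measure X} [IsFiniteMeasure μ]

lemma measureReal_setOf_itinerary_mem_le [Fintype α] [DecidableEq G] {D : Set (G → α)}
    [DecidablePred (· ∈ D)] (hD : DependsOn (· ∈ D) (S : Set G)) (u₀ : G → α) :
    μ.real {x | itinerary p x ∈ D} ≤ ∑ u ∈ configs u₀ S with u ∈ D, cylinderMass μ p S u := by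
  have hsub : {x | itinerary p x ∈ D} ⊆
      ⋃ u ∈ (configs u₀ S).filter (· ∈ D), itineraryCylinder p S u := by
    intro x hx
    obtain ⟨u, hu, hxu⟩ := exists_mem_configs_eqOn u₀ (itinerary p x) S
    exact Set.mem_biUnion (Finset.mem_coe.2 (Finset.mem_filter.2 ⟨hu, (hD hxu).mp hx⟩)) hxu
  exact (measureReal_mono hsub (measure_ne_top _ _)).trans (measureReal_biUnion_finset_le _ _)

lemma antitone_cylinderMass (μ : Measure X) [IsFiniteMeasure μ] (p : X → α) (u : G → α) :
    Antitone fun S => cylinderMass μ p S u := fun _ _ hST =>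
  measureReal_mono (fun _ hx g hg => hx g (hST hg)) (measure_ne_top _ _)

/-- Barron's lemma. -/
lemma measureReal_cylinderMass_lt_le [Fintype α] [DecidableEq G] {V : (G → α) → ℝ}
    (hV0 : ∀ u, 0 ≤ V u) (hV : DependsOn V (S : Set G)) (u₀ : G → α) {B t : ℝ} (ht : 0 ≤ t)
    (hB : ∑ u ∈ configs u₀ S, V u ≤ B) :
    μ.real {x | cylinderMass μ p S (itinerary p x) < t * V (itinerary p x)} ≤ t * B := by
  classical
  have hD : DependsOn (· ∈ {u | cylinderMass μ p S u < t * V u}) (S : Set G) := fun u v h => by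
    simp only [mem_ofPred_eq, hV h, dependsOn_cylinderMass μ p S h]
  calc μ.real {x | cylinderMass μ p S (itinerary p x) < t * V (itinerary p x)}
      ≤ ∑ u ∈ configs u₀ S with u ∈ {u | cylinderMass μ p S u < t * V u}, cylinderMass μ p S u :=
        measureReal_setOf_itinerary_mem_le hD u₀
    _ ≤ ∑ u ∈ configs u₀ S with u ∈ {u | cylinderMass μ p S u < t * V u}, t * V u :=
        Finset.sum_le_sum fun u hu => (Finset.mem_filter.1 hu).2.le
    _ ≤ ∑ u ∈ configs u₀ S, t * V u := Finset.sum_le_sum_of_subset_of_nonneg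
        (Finset.filter_subset _ _) fun u _ _ => mul_nonneg ht (hV0 u)
    _ ≤ t * B := by rw [← Finset.mul_sum]; gcongr

lemma ae_cylinderMass_itinerary_pos [Countable G] [Finite α] (p : X → α) :
    ∀ᵐ x ∂μ, ∀ S : Finset G, 0 < cylinderMass μ p S (itinerary p x) := by
  classical
  have := Fintype.ofFinite α
  refine ae_all_iff.2 fun S => ?_
  rcases isEmpty_or_nonempty X with _ | ⟨⟨x₀⟩⟩
  · exact Eventually.of_forall isEmptyElim
  have hnull := measureReal_setOf_itinerary_mem_le (μ := μ) (p := p) (S := S)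
    (D := {u | cylinderMass μ p S u ≤ 0})
    (fun u v h => by simp only [mem_ofPred_eq, dependsOn_cylinderMass μ p S h]) (itinerary p x₀)
  have hzero := hnull.trans (Finset.sum_nonpos fun u hu => (Finset.mem_filter.1 hu).2)
  simp only [ae_iff, not_lt]
  exact (measureReal_eq_zero_iff (measure_ne_top _ _)).1 (hzero.antisymm measureReal_nonneg)

end Finite

section Measurable

variable [MeasurableConstSMul G X] [MeasurableSpace α] [MeasurableSingletonClass α]

lemma isConsistentFamily_cylinderMass [Fintype α] [DecidableEq G] (μ : Measure X)
    [IsProbabilityMeasure μ] (hp : Measurable p) :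
    IsConsistentFamily (cylinderMass (G := G) μ p) where
  nonneg := cylinderMass_nonneg μ p
  dependsOn := dependsOn_cylinderMass μ p
  sum_insert S u g hg := by
    unfold cylinderMass
    rw [itineraryCylinder_eq_iUnion_insert hg,
      measureReal_iUnion_fintype (pairwise_disjoint_itineraryCylinder_update p S g u)
        fun a => measurableSet_itineraryCylinder hp _ _]
  empty u := by
    simp [cylinderMass, itineraryCylinder]

lemma isConsistentFamily_mixedMass [Fintype α] [Nonempty α] [DecidableEq G] (μ : Measure X)
    [IsProbabilityMeasure μ] (hp : Measurable p) :
    IsConsistentFamily (mixedMass (G := G) μ p) :=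
  (isConsistentFamily_cylinderMass μ hp).add_div_two isConsistentFamily_uniform

section Shift

variable [DecidableEq G] (μ : Measure X) [SMulInvariantMeasure G X μ]

lemma cylinderMass_rightTranslate (hp : Measurable p) (S : Finset G) (c : G) (x : X) :
    cylinderMass μ p (S <• c) (itinerary p x) = cylinderMass μ p S (itinerary p (c • x)) := by
  rw [cylinderMass, itineraryCylinder_rightTranslate,
    (measurePreserving_smul c μ).measureReal_preimage
      (measurableSet_itineraryCylinder hp _ _).nullMeasurableSet, cylinderMass]

lemma mixedMass_rightTranslate [Fintype α] (hp : Measurable p) (S : Finset G) (c : G) (x : X) :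
    mixedMass μ p (S <• c) (itinerary p x) = mixedMass μ p S (itinerary p (c • x)) := by
  rw [mixedMass, cylinderMass_rightTranslate μ hp, Finset.card_smul_finset, mixedMass]

end Shift

section Integral

lemma measurable_comp_itinerary [Finite α] {V : (G → α) → ℝ} (hV : DependsOn V (S : Set G))
    (hp : Measurable p) : Measurable fun x => V (itinerary p x) := by
  classical
  have := Fintype.ofFinite α
  rcases isEmpty_or_nonempty X with _ | ⟨⟨x₀⟩⟩
  · exact measurable_of_empty _
  simp only [comp_itinerary_eq_sum_indicator hV p (itinerary p x₀)]
  exact Finset.measurable_fun_sum _ fun u _ =>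
    measurable_const.indicator (measurableSet_itineraryCylinder hp _ _)

lemma measurable_information [Finite α] (μ : Measure X) (hp : Measurable p) (S : Finset G) :
    Measurable (information μ p S) :=
  measurable_comp_itinerary (S := S) (V := fun u => -Real.log (cylinderMass μ p S u))
    (fun u v h => by simp only [dependsOn_cylinderMass μ p S h]) hp

lemma measurable_mixedInformation [Fintype α] (μ : Measure X) (hp : Measurable p) (S : Finset G) :
    Measurable (mixedInformation μ p S) :=
  measurable_comp_itinerary (S := S) (V := fun u => -Real.log (mixedMass μ p S u))
    (fun u v h => by simp only [dependsOn_mixedMass μ p S h]) hp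

lemma measurable_meanInformation [Fintype α] (μ : Measure X) (hp : Measurable p) (S : Finset G) :
    Measurable (meanInformation μ p S) :=
  (measurable_mixedInformation μ hp S).const_mul _

variable {μ : Measure X} [IsProbabilityMeasure μ]

lemma mixedInformation_nonneg [Fintype α] (hp : Measurable p) (S : Finset G) (x : X) :
    0 ≤ mixedInformation μ p S x := by
  classical
  have : Nonempty α := ⟨p x⟩
  have hcons := isConsistentFamily_mixedMass (G := G) μ hp
  exact neg_nonneg.2 (Real.log_nonpos (hcons.nonneg S _) (hcons.le_one S _))

lemma meanInformation_nonneg [Fintype α] (hp : Measurable p) (S : Finset G) (x : X) :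
    0 ≤ meanInformation μ p S x :=
  mul_nonneg (by positivity) (mixedInformation_nonneg hp S x)

lemma integrable_comp_itinerary [Finite α] {V : (G → α) → ℝ} (hV : DependsOn V (S : Set G))
    (hp : Measurable p) : Integrable (fun x => V (itinerary p x)) μ := by
  classical
  have := Fintype.ofFinite α
  obtain ⟨x₀⟩ := nonempty_of_isProbabilityMeasure μ
  simp only [comp_itinerary_eq_sum_indicator hV p (itinerary p x₀)]
  exact integrable_finsetSum _ fun u _ =>
    (integrable_const _).indicator (measurableSet_itineraryCylinder hp _ _)

lemma integral_comp_itinerary [Fintype α] [DecidableEq G] {V : (G → α) → ℝ}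
    (hV : DependsOn V (S : Set G)) (hp : Measurable p) (u₀ : G → α) :
    ∫ x, V (itinerary p x) ∂μ = ∑ u ∈ configs u₀ S, cylinderMass μ p S u * V u := by
  simp only [comp_itinerary_eq_sum_indicator hV p u₀]
  rw [integral_finsetSum _ fun u _ =>
    (integrable_const _).indicator (measurableSet_itineraryCylinder hp _ _)]
  exact Finset.sum_congr rfl fun u _ =>
    integral_indicator_const _ (measurableSet_itineraryCylinder hp _ _)

lemma integrable_information [Finite α] (hp : Measurable p) (S : Finset G) :
    Integrable (information μ p S) μ :=
  integrable_comp_itinerary (S := S) (V := fun u => -Real.log (cylinderMass μ p S u))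
    (fun u v h => by simp only [dependsOn_cylinderMass μ p S h]) hp

variable [Fintype α]

lemma integrable_mixedInformation (hp : Measurable p) (S : Finset G) :
    Integrable (mixedInformation μ p S) μ :=
  integrable_comp_itinerary (S := S) (V := fun u => -Real.log (mixedMass μ p S u))
    (fun u v h => by simp only [dependsOn_mixedMass μ p S h]) hp

lemma integral_information_eq [DecidableEq G] (hp : Measurable p) (S : Finset G) (u₀ : G → α) :
    ∫ x, information μ p S x ∂μ = ∑ u ∈ configs u₀ S, Real.negMulLog (cylinderMass μ p S u) := by
  simp only [Real.negMulLog, neg_mul_comm]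
  exact integral_comp_itinerary (S := S) (V := fun u => -Real.log (cylinderMass μ p S u))
    (fun u v h => by simp only [dependsOn_cylinderMass μ p S h]) hp u₀

lemma integral_mixedInformation_eq [DecidableEq G] (hp : Measurable p) (S : Finset G)
    (u₀ : G → α) :
    ∫ x, mixedInformation μ p S x ∂μ =
      ∑ u ∈ configs u₀ S, cylinderMass μ p S u * -Real.log (mixedMass μ p S u) :=
  integral_comp_itinerary (S := S) (V := fun u => -Real.log (mixedMass μ p S u))
    (fun u v h => by simp only [dependsOn_mixedMass μ p S h]) hp u₀

lemma integral_information_le_integral_mixedInformation (hp : Measurable p) (S : Finset G) :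
    ∫ x, information μ p S x ∂μ ≤ ∫ x, mixedInformation μ p S x ∂μ := by
  classical
  obtain ⟨x₀⟩ := nonempty_of_isProbabilityMeasure μ
  have : Nonempty α := ⟨p x₀⟩
  have hterm : ∀ u, Real.negMulLog (cylinderMass μ p S u) ≤
      cylinderMass μ p S u * -Real.log (mixedMass μ p S u) +
        (mixedMass μ p S u - cylinderMass μ p S u) := by
    intro u
    have hq := mixedMass_pos μ p S u
    rcases (cylinderMass_nonneg μ p S u).eq_or_lt with h | h
    · simpa only [← h, Real.negMulLog_zero, zero_mul, zero_add, sub_zero] using hq.le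
    have hlog := mul_le_mul_of_nonneg_left (Real.log_le_sub_one_of_pos (div_pos hq h)) h.le
    rw [Real.log_div hq.ne' h.ne', mul_sub, mul_sub, mul_div_cancel₀ _ h.ne'] at hlog
    rw [Real.negMulLog]
    linarith
  calc ∫ x, information μ p S x ∂μ
      = ∑ u ∈ configs (itinerary p x₀) S, Real.negMulLog (cylinderMass μ p S u) :=
        integral_information_eq hp S _
    _ ≤ ∑ u ∈ configs (itinerary p x₀) S, (cylinderMass μ p S u * -Real.log (mixedMass μ p S u) +
          (mixedMass μ p S u - cylinderMass μ p S u)) := Finset.sum_le_sum fun u _ => hterm u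
    _ = ∫ x, mixedInformation μ p S x ∂μ := by
        rw [Finset.sum_add_distrib, Finset.sum_sub_distrib,
          (isConsistentFamily_mixedMass μ hp).sum_configs,
          (isConsistentFamily_cylinderMass μ hp).sum_configs, sub_self, add_zero,
          integral_mixedInformation_eq hp S (itinerary p x₀)]

lemma integral_mixedInformation_le [Countable G] (hp : Measurable p) (S : Finset G) :
    ∫ x, mixedInformation μ p S x ∂μ ≤ ∫ x, information μ p S x ∂μ + Real.log 2 := by
  have hae : ∀ᵐ x ∂μ, mixedInformation μ p S x ≤ information μ p S x + Real.log 2 := by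
    filter_upwards [ae_cylinderMass_itinerary_pos (μ := μ) (G := G) p] with x hx
    exact mixedInformation_le_information_add_log_two (hx S)
  refine (integral_mono_ae (integrable_mixedInformation hp S)
    ((integrable_information hp S).add (integrable_const _)) hae).trans_eq ?_
  rw [integral_add' (integrable_information hp S) (integrable_const _), integral_const,
    probReal_univ, one_smul]

lemma abs_meanInformation_le (hp : Measurable p) (S : Finset G) (x : X) :
    |meanInformation μ p S x| ≤ Real.log (Fintype.card α) + 1 := by
  have hlog := Real.log_natCast_nonneg (Fintype.card α)
  rcases S.eq_empty_or_nonempty with rfl | hS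
  · simpa [meanInformation] using by linarith
  rw [meanInformation, abs_of_nonneg
    (mul_nonneg (by positivity) (mixedInformation_nonneg hp S x)),
    inv_mul_le_iff₀ (Nat.cast_pos.2 hS.card_pos), mul_comm]
  exact mixedInformation_le μ p hS x

lemma integral_information_div_card_le_integral_meanInformation (hp : Measurable p)
    (S : Finset G) :
    (∫ x, information μ p S x ∂μ) / S.card ≤ ∫ x, meanInformation μ p S x ∂μ := by
  simp only [meanInformation]
  rw [integral_const_mul, div_eq_inv_mul]
  exact mul_le_mul_of_nonneg_left (integral_information_le_integral_mixedInformation hp S)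
    (by positivity)

lemma integral_meanInformation_le [Countable G] (hp : Measurable p) (S : Finset G) :
    ∫ x, meanInformation μ p S x ∂μ ≤ (∫ x, information μ p S x ∂μ + Real.log 2) / S.card := by
  simp only [meanInformation]
  rw [integral_const_mul, div_eq_inv_mul]
  exact mul_le_mul_of_nonneg_left (integral_mixedInformation_le hp S) (by positivity)

end Integral

end Measurable

end Information

namespace GrowthCond

variable {F : ℕ → Finset G} (hF : GrowthCond F)

include hF

lemma eventually_mul_log_le (a : ℝ) : ∀ᶠ n : ℕ in atTop, a * Real.log n ≤ (F n).card := by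
  filter_upwards [hF.eventually_ge_atTop a, eventually_ge_atTop 2] with n hn h2
  exact (le_div_iff₀ (Real.log_pos (by exact_mod_cast h2))).1 hn

lemma tendsto_card_atTop : Tendsto (fun n => ((F n).card : ℝ)) atTop atTop := by
  refine tendsto_atTop_mono' _ ?_ (Real.tendsto_log_atTop.comp tendsto_natCast_atTop_atTop)
  filter_upwards [hF.eventually_mul_log_le 1] with n hn
  rwa [one_mul] at hn

lemma eventually_nonempty : ∀ᶠ n in atTop, (F n).Nonempty := by
  filter_upwards [hF.tendsto_card_atTop.eventually_gt_atTop 0] with n hn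
  exact Finset.card_pos.1 (by exact_mod_cast hn)

lemma summable_exp {s : ℝ} (hs : 0 < s) : Summable fun n => Real.exp (-s * (F n).card) := by
  refine Summable.of_norm_bounded_eventually_nat (Real.summable_nat_rpow_inv.2 one_lt_two) ?_
  filter_upwards [hF.eventually_mul_log_le (2 / s), eventually_gt_atTop 0] with n hn hpos
  rw [div_mul_eq_mul_div, div_le_iff₀' hs] at hn
  rw [Real.norm_eq_abs, Real.abs_exp, ← Real.rpow_neg (Nat.cast_nonneg n),
    Real.rpow_def_of_pos (Nat.cast_pos.2 hpos), Real.exp_le_exp]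
  linarith

lemma eventually_sum_exp_le {s ε : ℝ} (hs : 0 < s) (hε : 0 < ε) :
    ∀ᶠ n₀ in atTop, ∀ M, ∑ n ∈ Finset.Ico n₀ M, Real.exp (-s * (F n).card) ≤ ε := by
  have hsum := hF.summable_exp hs
  filter_upwards [(tendsto_sum_nat_add fun n => Real.exp (-s * (F n).card)).eventually_lt_const hε]
    with n₀ hn₀ M
  rw [Finset.sum_Ico_eq_sum_range]
  simp only [add_comm n₀]
  exact (((summable_nat_add_iff n₀).2 hsum).sum_le_tsum _
    fun i _ => (Real.exp_pos _).le).trans hn₀.le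

lemma ae_eventually_notMem [MeasurableSpace X] {μ : Measure X} [IsFiniteMeasure μ] {s : ℝ}
    (hs : 0 < s) {B : ℕ → Set X} (hB : ∀ n, μ.real (B n) ≤ Real.exp (-s * (F n).card)) :
    ∀ᵐ x ∂μ, ∀ᶠ n in atTop, x ∉ B n := by
  refine MeasureTheory.ae_eventually_notMem (ne_top_of_le_ne_top ?_
    (ENNReal.tsum_le_tsum fun n => (ENNReal.le_ofReal_iff_toReal_le (measure_ne_top μ _)
      (Real.exp_pos _).le).2 (hB n)))
  rw [← ENNReal.ofReal_tsum_of_nonneg (fun n => (Real.exp_pos _).le) (hF.summable_exp hs)]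
  exact ENNReal.ofReal_ne_top

end GrowthCond

section Coding

open scoped RightActions

variable {α : Type*} [Group G] [DecidableEq G]

lemma one_le_sum_tiles_add_sum_translates {K S : Finset G} (hK : K.Nonempty) (t : G → Finset G)
    {g : G} (hg : g ∈ S) :
    1 ≤ ∑ c ∈ S, (if g ∈ t c then 1 else 0 : ℝ) +
      ∑ c ∈ K⁻¹ * S, if g ∈ K <• c \ S.biUnion t then (K.card : ℝ)⁻¹ else 0 := by
  by_cases hgt : g ∈ S.biUnion t
  · obtain ⟨c, hc, hgc⟩ := Finset.mem_biUnion.1 hgt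
    refine le_add_of_le_of_nonneg ?_ (Finset.sum_nonneg fun _ _ => by positivity)
    exact (if_pos hgc).ge.trans (Finset.single_le_sum
      (f := fun c => if g ∈ t c then (1 : ℝ) else 0) (fun _ _ => by positivity) hc)
  · refine le_add_of_nonneg_of_le (Finset.sum_nonneg fun _ _ => by positivity) ?_
    have hsub : K⁻¹ <• g ⊆ {c ∈ K⁻¹ * S | g ∈ K <• c \ S.biUnion t} := by
      intro c hc
      have hcK := mem_rightTranslate_iff.1 hc
      refine Finset.mem_filter.2 ⟨?_, Finset.mem_sdiff.2 ⟨mem_rightTranslate_iff.2 ?_, hgt⟩⟩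
      · simpa only [inv_mul_cancel_right] using Finset.mul_mem_mul hcK hg
      · simpa only [mul_inv_rev, inv_inv] using Finset.mem_inv'.1 hcK
    have hcard : (K.card : ℝ) ≤ {c ∈ K⁻¹ * S | g ∈ K <• c \ S.biUnion t}.card := by
      exact_mod_cast (Finset.card_le_card hsub).trans_eq' (by simp)
    rw [← Finset.sum_filter, Finset.sum_const, nsmul_eq_mul, ← div_eq_mul_inv]
    exact (one_le_div (by exact_mod_cast hK.card_pos)).2 hcard

variable [MulAction G X] [MeasurableSpace X] {μ : Measure X} {p : X → α} {K S : Finset G}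

lemma exp_neg_sum_information_le_prod [IsFiniteMeasure μ] [SMulInvariantMeasure G X μ]
    [MeasurableConstSMul G X] [MeasurableSpace α] [MeasurableSingletonClass α] (hp : Measurable p)
    {x : X} (hx : ∀ A : Finset G, 0 < cylinderMass μ p A (itinerary p x)) (S : Finset G)
    (T : G → Finset G) :
    Real.exp (-∑ c ∈ S, information μ p (T c) (c • x)) ≤
      ∏ c ∈ S, cylinderMass μ p (T c <• c ∩ S) (itinerary p x) := by
  rw [← Finset.sum_neg_distrib, Real.exp_sum]
  refine Finset.prod_le_prod (fun _ _ => (Real.exp_pos _).le) fun c _ => ?_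
  rw [information, neg_neg, ← cylinderMass_rightTranslate μ hp, Real.exp_log (hx _)]
  exact antitone_cylinderMass μ p _ Finset.inter_subset_left

variable [Fintype α]

/-- The weight given to a configuration `u` on `S` by describing it first on the tiles `t c`, and
then, on what the tiles leave uncovered, by the geometric mean of the `|K|` ways to cover `S` by
translates of `K`. -/
noncomputable def codeWeight (μ : Measure X) (p : X → α) (K S : Finset G) (t : G → Finset G)
    (u : G → α) : ℝ :=
  (∏ c ∈ S, cylinderMass μ p (t c ∩ S) u) *
    ∏ c ∈ K⁻¹ * S, mixedMass μ p ((K <• c \ S.biUnion t) ∩ S) u ^ (K.card : ℝ)⁻¹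

lemma codeWeight_nonneg (μ : Measure X) (p : X → α) (K S : Finset G) (t : G → Finset G)
    (u : G → α) : 0 ≤ codeWeight μ p K S t u :=
  mul_nonneg (Finset.prod_nonneg fun _ _ => cylinderMass_nonneg ..)
    (Finset.prod_nonneg fun _ _ => Real.rpow_nonneg (mixedMass_pos ..).le _)

lemma dependsOn_codeWeight (μ : Measure X) (p : X → α) (K S : Finset G) (t : G → Finset G) :
    DependsOn (codeWeight μ p K S t) (S : Set G) := by
  intro u v h
  have hsub : ∀ A : Finset G, ∀ g ∈ A ∩ S, u g = v g := fun A g hg =>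
    h g (Finset.mem_inter.1 hg).2
  simp only [codeWeight, dependsOn_cylinderMass μ p _ (hsub _), dependsOn_mixedMass μ p _ (hsub _)]

lemma exp_neg_sum_meanInformation_le_prod [SMulInvariantMeasure G X μ] [MeasurableConstSMul G X]
    [MeasurableSpace α] [MeasurableSingletonClass α] [IsProbabilityMeasure μ] (hp : Measurable p)
    (x : X) (D K S U : Finset G) :
    Real.exp (-∑ c ∈ D with ¬ K <• c ∩ S ⊆ U, meanInformation μ p K (c • x)) ≤
      ∏ c ∈ D, mixedMass μ p ((K <• c \ U) ∩ S) (itinerary p x) ^ (K.card : ℝ)⁻¹ := by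
  have : Nonempty α := ⟨p x⟩
  have hcons := isConsistentFamily_mixedMass (G := G) μ hp
  rw [Finset.sum_filter, ← Finset.sum_neg_distrib, Real.exp_sum]
  refine Finset.prod_le_prod (fun _ _ => (Real.exp_pos _).le) fun c _ => ?_
  split_ifs with hc
  · rw [Finset.sdiff_inter_right_comm, Finset.sdiff_eq_empty_iff_subset.2 hc, hcons.empty,
      Real.one_rpow, neg_zero, Real.exp_zero]
  · rw [meanInformation, mixedInformation, mul_neg, neg_neg, ← mixedMass_rightTranslate μ hp,
      mul_comm, ← Real.rpow_def_of_pos (mixedMass_pos ..)]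
    exact Real.rpow_le_rpow (mixedMass_pos ..).le
      (hcons.antitone _ (Finset.inter_subset_left.trans Finset.sdiff_subset)) (by positivity)

section Probability

variable [MeasurableConstSMul G X] [MeasurableSpace α] [MeasurableSingletonClass α]
  [IsProbabilityMeasure μ]

lemma sum_configs_codeWeight_le_one (hp : Measurable p) (hK : K.Nonempty) (S : Finset G)
    (t : G → Finset G) (u₀ : G → α) : ∑ u ∈ configs u₀ S, codeWeight μ p K S t u ≤ 1 := by
  have : Nonempty α := ⟨u₀ 1⟩
  have hcover := sum_configs_prod_rpow_le_one (J := S.disjSum (K⁻¹ * S))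
    (w := Sum.elim (fun _ => 1) fun _ => (K.card : ℝ)⁻¹) (by rintro (_ | _) _ <;> simp)
    (q := Sum.elim (fun _ => cylinderMass μ p) fun _ => mixedMass μ p)
    (by
      rintro (_ | _) _
      exacts [isConsistentFamily_cylinderMass μ hp, isConsistentFamily_mixedMass μ hp])
    (Sum.elim t fun c => K <• c \ S.biUnion t) u₀ S fun g hg => by
      rw [Finset.sum_filter, Finset.sum_disjSum]
      exact one_le_sum_tiles_add_sum_translates hK t hg
  simpa only [codeWeight, Finset.prod_disjSum, Sum.elim_inl, Sum.elim_inr, Real.rpow_one]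
    using hcover

lemma measureReal_cylinderMass_lt_sum_codeWeight_le (hp : Measurable p) (hK : K.Nonempty)
    (S : Finset G) {𝒯 : Finset (Finset G)} {s : ℝ}
    (h𝒯 : ∑ T ∈ 𝒯, Real.exp (-s * T.card) ≤ Real.exp s) (σ₀ : G → 𝒯) :
    μ.real {x | cylinderMass μ p S (itinerary p x) < Real.exp (-(2 * s * S.card)) *
      ∑ σ ∈ configs σ₀ S, (∏ c ∈ S, Real.exp (-s * (σ c).1.card)) *
        codeWeight μ p K S (fun c => (σ c).1 <• c) (itinerary p x)} ≤
      Real.exp (-s * S.card) := by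
  obtain ⟨x₀⟩ := nonempty_of_isProbabilityMeasure μ
  have hprod : ∀ σ : G → 𝒯, 0 ≤ ∏ c ∈ S, Real.exp (-s * (σ c).1.card) := fun σ =>
    Finset.prod_nonneg fun _ _ => (Real.exp_pos _).le
  have hsum : ∑ u ∈ configs (itinerary p x₀) S, ∑ σ ∈ configs σ₀ S,
      (∏ c ∈ S, Real.exp (-s * (σ c).1.card)) * codeWeight μ p K S (fun c => (σ c).1 <• c) u ≤
        Real.exp (s * S.card) := by
    rw [Finset.sum_comm]
    calc ∑ σ ∈ configs σ₀ S, ∑ u ∈ configs (itinerary p x₀) S,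
          (∏ c ∈ S, Real.exp (-s * (σ c).1.card)) * codeWeight μ p K S (fun c => (σ c).1 <• c) u
        ≤ ∑ σ ∈ configs σ₀ S, ∏ c ∈ S, Real.exp (-s * (σ c).1.card) := by
          refine Finset.sum_le_sum fun σ _ => ?_
          rw [← Finset.mul_sum]
          exact mul_le_of_le_one_right (hprod σ) (sum_configs_codeWeight_le_one hp hK S _ _)
      _ = (∑ T ∈ 𝒯, Real.exp (-s * T.card)) ^ S.card := by
          refine (sum_configs_prod σ₀ S fun _ (T : 𝒯) => Real.exp (-s * T.1.card)).trans ?_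
          rw [Finset.prod_const, Finset.univ_eq_attach,
            Finset.sum_attach 𝒯 fun T => Real.exp (-s * T.card)]
      _ ≤ Real.exp s ^ S.card :=
          pow_le_pow_left₀ (Finset.sum_nonneg fun _ _ => (Real.exp_pos _).le) h𝒯 _
      _ = Real.exp (s * S.card) := by rw [← Real.exp_nat_mul, mul_comm]
  refine (measureReal_cylinderMass_lt_le (fun u => Finset.sum_nonneg fun σ _ =>
    mul_nonneg (hprod σ) (codeWeight_nonneg ..)) (fun u v huv => ?_) (itinerary p x₀)
    (Real.exp_pos _).le hsum).trans_eq ?_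
  · exact Finset.sum_congr rfl fun σ _ => by rw [dependsOn_codeWeight μ p K S _ huv]
  · rw [← Real.exp_add]
    ring_nf

variable [SMulInvariantMeasure G X μ]

lemma information_le_of_codeWeight_le (hp : Measurable p) {x : X}
    (hx : ∀ A : Finset G, 0 < cylinderMass μ p A (itinerary p x)) {s : ℝ} {T : G → Finset G}
    (h : Real.exp (-(2 * s * S.card)) * ((∏ c ∈ S, Real.exp (-s * (T c).card)) *
      codeWeight μ p K S (fun c => T c <• c) (itinerary p x)) ≤
        cylinderMass μ p S (itinerary p x)) :
    information μ p S x ≤ 2 * s * S.card +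
      ∑ c ∈ S, (s * (T c).card + information μ p (T c) (c • x)) +
      ∑ c ∈ K⁻¹ * S with ¬ K <• c ∩ S ⊆ S.biUnion fun c => T c <• c,
        meanInformation μ p K (c • x) := by
  have htiles := exp_neg_sum_information_le_prod hp hx S T
  have hrest := exp_neg_sum_meanInformation_le_prod (μ := μ) hp x (K⁻¹ * S) K S
    (S.biUnion fun c => T c <• c)
  have hcode := mul_le_mul htiles hrest (Real.exp_pos _).le
    (Finset.prod_nonneg fun _ _ => cylinderMass_nonneg ..)
  rw [← Real.exp_sum] at h
  have hmass := (mul_le_mul_of_nonneg_left (mul_le_mul_of_nonneg_left hcode (Real.exp_pos _).le)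
    (Real.exp_pos _).le).trans h
  simp only [← Real.exp_add] at hmass
  have hlog := (Real.le_log_iff_exp_le (hx S)).2 hmass
  simp only [neg_mul, Finset.sum_neg_distrib] at hlog
  rw [Finset.sum_add_distrib, information]
  linarith

lemma ae_eventually_information_le [Countable G] (hp : Measurable p) {F : ℕ → Finset G}
    (hF : GrowthCond F) (hK : K.Nonempty) {s : ℝ} (hs : 0 < s) {𝒯 : Finset (Finset G)}
    (h𝒯 : ∑ T ∈ 𝒯, Real.exp (-s * T.card) ≤ Real.exp s) :
    ∀ᵐ x ∂μ, ∀ᶠ N in atTop, ∀ T : G → Finset G, (∀ c, T c ∈ 𝒯) →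
      information μ p (F N) x ≤ 2 * s * (F N).card +
        ∑ c ∈ F N, (s * (T c).card + information μ p (T c) (c • x)) +
        ∑ c ∈ K⁻¹ * F N with ¬ K <• c ∩ F N ⊆ (F N).biUnion fun c => T c <• c,
          meanInformation μ p K (c • x) := by
  rcases 𝒯.eq_empty_or_nonempty with rfl | ⟨T₀, hT₀⟩
  · exact ae_of_all _ fun x => Eventually.of_forall fun N T hT => absurd (hT 1) (by simp)
  filter_upwards [ae_cylinderMass_itinerary_pos (μ := μ) (G := G) p,
    hF.ae_eventually_notMem hs fun n => measureReal_cylinderMass_lt_sum_codeWeight_le (μ := μ) hp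
      hK (F n) h𝒯 fun _ => ⟨T₀, hT₀⟩] with x hx hcode
  filter_upwards [hcode] with N hN T hT
  obtain ⟨σ, hσ, hTσ⟩ := exists_mem_configs_eqOn (fun _ => ⟨T₀, hT₀⟩)
    (fun c => (⟨T c, hT c⟩ : 𝒯)) (F N)
  replace hTσ : ∀ c ∈ F N, T c = (σ c).1 := fun c hc => congrArg Subtype.val (hTσ c hc)
  rw [Finset.sum_congr rfl fun c hc => by rw [hTσ c hc],
    Finset.biUnion_congr rfl fun c hc => by rw [hTσ c hc]]
  refine information_le_of_codeWeight_le hp hx (le_trans ?_ (not_lt.1 hN))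
  gcongr
  exact Finset.single_le_sum (f := fun σ : G → 𝒯 =>
    (∏ c ∈ F N, Real.exp (-s * (σ c).1.card)) *
      codeWeight μ p K (F N) (fun c => (σ c).1 <• c) (itinerary p x))
    (fun σ _ => mul_nonneg (Finset.prod_nonneg fun _ _ => (Real.exp_pos _).le)
      (codeWeight_nonneg ..)) hσ

/-- The coding theorem: for large `N`, the name of `x` on `F N` is not much longer than any of its
descriptions by tiles taken from a library `𝒯` of controlled size, followed by what remains on the
translates of `K` that the tiles leave uncovered. -/
theorem ae_eventually_information_le_of_tiles [Countable G] (hp : Measurable p)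
    {F : ℕ → Finset G} (hF : GrowthCond F) (hK : K.Nonempty) {s : ℝ} (hs : 0 < s)
    {𝒯 : Finset (Finset G)} (h𝒯 : ∑ T ∈ 𝒯, Real.exp (-s * T.card) ≤ s) :
    ∀ᵐ x ∂μ, ∀ᶠ N in atTop, ∀ I ⊆ F N, ∀ T : G → Finset G, (∀ c ∈ I, T c ∈ 𝒯) →
      information μ p (F N) x ≤ 2 * s * (F N).card +
        ∑ c ∈ I, (s * (T c).card + information μ p (T c) (c • x)) +
        ∑ c ∈ K⁻¹ * F N with ¬ K <• c ∩ F N ⊆ I.biUnion fun c => T c <• c,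
          meanInformation μ p K (c • x) := by
  have hkraft : ∑ T ∈ {∅} ∪ 𝒯, Real.exp (-s * T.card) ≤ Real.exp s := by
    have hinter := Finset.sum_union_inter (s₁ := ({∅} : Finset (Finset G))) (s₂ := 𝒯)
      (f := fun T => Real.exp (-s * T.card))
    have hpos : 0 ≤ ∑ T ∈ ({∅} : Finset (Finset G)) ∩ 𝒯, Real.exp (-s * T.card) :=
      Finset.sum_nonneg fun _ _ => (Real.exp_pos _).le
    rw [Finset.sum_singleton, Finset.card_empty, Nat.cast_zero, mul_zero, Real.exp_zero] at hinter
    linarith [Real.add_one_le_exp s]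
  filter_upwards [ae_eventually_information_le (μ := μ) hp hF hK hs hkraft] with x hx
  filter_upwards [hx] with N hN I hI T hT
  have hcode := hN (fun c => if c ∈ I then T c else ∅) fun c => by
    split_ifs with hc
    exacts [Finset.mem_union_right _ (hT c hc),
      Finset.mem_union_left _ (Finset.mem_singleton_self _)]
  have hsum : ∑ c ∈ F N, (s * ((if c ∈ I then T c else ∅).card : ℝ) +
      information μ p (if c ∈ I then T c else ∅) (c • x)) =
        ∑ c ∈ I, (s * (T c).card + information μ p (T c) (c • x)) :=
    (Finset.sum_subset_zero_on_sdiff hI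
      (fun c hc => by simp [(Finset.mem_sdiff.1 hc).2, information_empty μ p])
      fun c hc => by simp only [if_pos hc]).symm
  have hunion : ((F N).biUnion fun c => (if c ∈ I then T c else ∅) <• c) =
      I.biUnion fun c => T c <• c := by
    ext g
    simp only [Finset.mem_biUnion]
    refine ⟨fun ⟨c, _, hg⟩ => ?_, fun ⟨c, hc, hg⟩ => ⟨c, hI hc, by rwa [if_pos hc]⟩⟩
    split_ifs at hg with hc
    exacts [⟨c, hc, hg⟩, by simp at hg]
  rwa [hsum, hunion] at hcode

end Probability
end Coding

section Tilings

open scoped RightActions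

lemma sum_le_sum_add_mul_card_sdiff {ι : Type*} [DecidableEq ι] {ψ : ι → ℝ} {L : ℝ}
    (hψ0 : ∀ g, 0 ≤ ψ g) (hψL : ∀ g, ψ g ≤ L) (B S : Finset ι) :
    ∑ g ∈ B, ψ g ≤ ∑ g ∈ S, ψ g + L * (B \ S).card := by
  rw [← Finset.sum_inter_add_sum_sdiff B S]
  refine add_le_add (Finset.sum_le_sum_of_subset_of_nonneg Finset.inter_subset_right
    fun g _ _ => hψ0 g) ?_
  rw [mul_comm, ← nsmul_eq_mul]
  exact Finset.sum_le_card_nsmul _ _ _ fun g _ => hψL g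

variable [Group G] [DecidableEq G] {K S I : Finset G} {A E : G → Finset G} {ψ : G → ℝ}

lemma card_filter_rightTranslate (A : Finset G) (c : G) (P : G → Prop) [DecidablePred P] :
    {g ∈ A <• c | P g}.card = {a ∈ A | P (a * c)}.card := by
  simp only [Finset.card_filter, sum_rightTranslate]

lemma card_filter_exists_rightTranslate (K A : Finset G) (c : G) :
    {g ∈ A <• c | ∃ k ∈ K, k * g ∉ A <• c}.card = {a ∈ A | ∃ k ∈ K, k * a ∉ A}.card := by
  simp only [card_filter_rightTranslate, mem_rightTranslate_iff, ← mul_assoc,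
    mul_inv_cancel_right]

/-- The points of `S` all of whose left translates by `K` lie in `A c` start no uncovered
translate of `K`. -/
lemma sum_uncovered_add_sum_core_le (hE : (I : Set G).PairwiseDisjoint E)
    (hES : ∀ c ∈ I, E c ⊆ S) (hψ : ∀ g, 0 ≤ ψ g) :
    ∑ c ∈ K⁻¹ * S with ¬ K <• c ∩ S ⊆ I.biUnion A, ψ c +
      ∑ c ∈ I, ∑ g ∈ E c with ∀ k ∈ K, k * g ∈ A c, ψ g ≤ ∑ g ∈ K⁻¹ * S ∪ S, ψ g := by
  rw [← Finset.sum_biUnion (hE.mono_on fun c _ => Finset.filter_subset _ _), ← Finset.sum_union]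
  · refine Finset.sum_le_sum_of_subset_of_nonneg (Finset.union_subset_union
      (Finset.filter_subset _ _) (Finset.biUnion_subset.2 fun c hc => ?_)) fun g _ _ => hψ g
    exact (Finset.filter_subset _ _).trans (hES c hc)
  · refine Finset.disjoint_left.2 fun g hg hgI => (Finset.mem_filter.1 hg).2 fun z hz => ?_
    obtain ⟨c, hc, hgc⟩ := Finset.mem_biUnion.1 hgI
    obtain ⟨k, hk, rfl⟩ := Finset.mem_smul_finset.1 (Finset.mem_inter.1 hz).1
    exact Finset.mem_biUnion.2 ⟨c, hc, (Finset.mem_filter.1 hgc).2 k hk⟩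

namespace IsQuasiDisjoint

variable {η s L : ℝ}

lemma card_sdiff_core_le (hE : IsQuasiDisjoint η I A E) {c : G} (hc : c ∈ I)
    (hs : ({g ∈ A c | ∃ k ∈ K, k * g ∉ A c}.card : ℝ) ≤ s * (A c).card) :
    ((A c \ {g ∈ E c | ∀ k ∈ K, k * g ∈ A c}).card : ℝ) ≤ (η + s) * (A c).card := by
  have hsub : A c \ {g ∈ E c | ∀ k ∈ K, k * g ∈ A c} ⊆
      (A c \ E c) ∪ {g ∈ A c | ∃ k ∈ K, k * g ∉ A c} := by
    intro g hg
    simp only [Finset.mem_union, Finset.mem_sdiff, Finset.mem_filter] at hg ⊢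
    by_contra! hcon
    exact hg.2 ⟨hcon.1 hg.1, hcon.2 hg.1⟩
  have hcard : ((A c \ {g ∈ E c | ∀ k ∈ K, k * g ∈ A c}).card : ℝ) ≤
      (A c \ E c).card + {g ∈ A c | ∃ k ∈ K, k * g ∉ A c}.card :=
    mod_cast (Finset.card_le_card hsub).trans (Finset.card_union_le _ _)
  have hsdiff : ((A c \ E c).card : ℝ) + (E c).card = (A c).card :=
    mod_cast Finset.card_sdiff_add_card_eq_card (hE.subset c hc)
  linarith [hE.le_card c hc]

lemma le_sum_core (hE : IsQuasiDisjoint η I A E) (hL : 0 ≤ L) (hψ0 : ∀ g, 0 ≤ ψ g)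
    (hψL : ∀ g, ψ g ≤ L) {c : G} (hc : c ∈ I)
    (hs : ({g ∈ A c | ∃ k ∈ K, k * g ∉ A c}.card : ℝ) ≤ s * (A c).card) :
    ∑ g ∈ A c, ψ g - L * (η + s) * (A c).card ≤ ∑ g ∈ E c with ∀ k ∈ K, k * g ∈ A c, ψ g := by
  have hsplit := sum_le_sum_add_mul_card_sdiff hψ0 hψL (A c) {g ∈ E c | ∀ k ∈ K, k * g ∈ A c}
  have hcard := mul_le_mul_of_nonneg_left (hE.card_sdiff_core_le hc hs) hL
  linarith

lemma sum_uncovered_le (hE : IsQuasiDisjoint η I A E) (hAS : ∀ c ∈ I, A c ⊆ S)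
    (hL : 0 ≤ L) (hψ0 : ∀ g, 0 ≤ ψ g) (hψL : ∀ g, ψ g ≤ L) {a b : ℝ}
    (ha : ∀ c ∈ I, a * (A c).card ≤ ∑ g ∈ A c, ψ g) (hb : ∑ g ∈ S, ψ g ≤ b * S.card)
    (hs : ∀ c ∈ I, ({g ∈ A c | ∃ k ∈ K, k * g ∉ A c}.card : ℝ) ≤ s * (A c).card)
    (hsS : (((K⁻¹ * S) \ S).card : ℝ) ≤ s * S.card) :
    ∑ c ∈ K⁻¹ * S with ¬ K <• c ∩ S ⊆ I.biUnion A, ψ c ≤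
      (b + L * s) * S.card - (a - L * (η + s)) * ∑ c ∈ I, ((A c).card : ℝ) := by
  have hcore : (a - L * (η + s)) * ∑ c ∈ I, ((A c).card : ℝ) ≤
      ∑ c ∈ I, ∑ g ∈ E c with ∀ k ∈ K, k * g ∈ A c, ψ g := by
    rw [Finset.mul_sum]
    refine Finset.sum_le_sum fun c hc => ?_
    linarith [ha c hc, hE.le_sum_core hL hψ0 hψL hc (hs c hc)]
  have htotal := sum_uncovered_add_sum_core_le (K := K) (A := A) hE.pairwiseDisjoint
    (fun c hc => (hE.subset c hc).trans (hAS c hc)) hψ0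
  have hbdd := sum_le_sum_add_mul_card_sdiff hψ0 hψL (K⁻¹ * S ∪ S) S
  rw [Finset.union_sdiff_right] at hbdd
  linarith [mul_le_mul_of_nonneg_left hsS hL]

end IsQuasiDisjoint

end Tilings

section Averages

variable [MeasurableSpace X] {μ : Measure X}

lemma exists_lt_measureReal_biUnion_Ico [IsFiniteMeasure μ] {A : Set X} {B : ℕ → Set X}
    (h : ∀ᵐ x ∂μ, x ∈ A → ∃ᶠ n in atTop, x ∈ B n) {a : ℝ} (ha : a < μ.real A) (n₀ : ℕ) :
    ∃ M, a < μ.real (⋃ n ∈ Finset.Ico n₀ M, B n) := by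
  have hmono : Monotone fun M => ⋃ n ∈ Finset.Ico n₀ M, B n := fun M M' hM =>
    biUnion_mono (Finset.Ico_subset_Ico_right hM) fun _ _ => Subset.rfl
  have hle : μ.real A ≤ μ.real (⋃ M, ⋃ n ∈ Finset.Ico n₀ M, B n) := by
    refine ENNReal.toReal_mono (measure_ne_top _ _) (measure_mono_ae ?_)
    filter_upwards [h] with x hx hxA
    obtain ⟨n, hn, hxn⟩ := frequently_atTop.1 (hx hxA) n₀
    exact mem_iUnion.2 ⟨n + 1, mem_iUnion₂.2 ⟨n, Finset.mem_Ico.2 ⟨hn, n.lt_succ_self⟩, hxn⟩⟩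
  have htends : Tendsto (fun M => μ.real (⋃ n ∈ Finset.Ico n₀ M, B n)) atTop
      (𝓝 (μ.real (⋃ M, ⋃ n ∈ Finset.Ico n₀ M, B n))) :=
    (ENNReal.tendsto_toReal (measure_ne_top _ _)).comp (tendsto_measure_iUnion_atTop hmono)
  exact (htends.eventually_const_lt (ha.trans_le hle)).exists

lemma eventually_integral_lt_of_ae_eventually_le [IsProbabilityMeasure μ] {f : ℕ → X → ℝ}
    (hf : ∀ n, Measurable (f n)) {L : ℝ} (hL : ∀ n x, |f n x| ≤ L) {c c' : ℝ} (hcc' : c < c')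
    (h : ∀ᵐ x ∂μ, ∀ᶠ n in atTop, f n x ≤ c) : ∀ᶠ n in atTop, ∫ x, f n x ∂μ < c' := by
  have hbound (n : ℕ) (x : X) : |max (f n x) c| ≤ max L |c| :=
    abs_max_le_max_abs_abs.trans (max_le_max_right _ (hL n x))
  have hmeas (n : ℕ) : AEStronglyMeasurable (fun x => max (f n x) c) μ :=
    ((hf n).max measurable_const).aestronglyMeasurable
  have hlim : Tendsto (fun n => ∫ x, max (f n x) c ∂μ) atTop (𝓝 (∫ _, c ∂μ)) := by
    refine tendsto_integral_of_dominated_convergence (fun _ => max L |c|) hmeas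
      (integrable_const _) (fun n => ae_of_all _ (hbound n)) ?_
    filter_upwards [h] with x hx
    exact tendsto_const_nhds.congr' (hx.mono fun n hn => (max_eq_right hn).symm)
  rw [integral_const, probReal_univ, one_smul] at hlim
  filter_upwards [hlim.eventually_lt_const hcc'] with n hn
  refine (integral_mono ?_ ?_ fun x => le_max_left _ c).trans_lt hn
  exacts [.of_bound (hf n).aestronglyMeasurable L (ae_of_all _ (hL n)),
    .of_bound (hmeas n) _ (ae_of_all _ (hbound n))]

variable [Group G] [MulAction G X] [MeasurableConstSMul G X] [IsProbabilityMeasure μ]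
  [ErgodicSMul G X μ] {F : ℕ → Finset G}

lemma ae_eventually_sum_smul_le (hF : IsFolnerSeq F) (hT : IsTemperedSeq F)
    (hne : ∀ᶠ n in atTop, (F n).Nonempty) {f : X → ℝ} (hf : Measurable f) {M : ℝ}
    (hM : ∀ x, |f x| ≤ M) {c : ℝ} (hc : ∫ x, f x ∂μ < c) :
    ∀ᵐ x ∂μ, ∀ᶠ n in atTop, ∑ g ∈ F n, f (g • x) ≤ c * (F n).card := by
  filter_upwards [ae_tendsto_expect_smul (μ := μ) hF hT hne hf hM] with x hx
  filter_upwards [hx.eventually_lt_const hc, hne] with n hn hFn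
  rw [Finset.expect_eq_sum_div_card, div_lt_iff₀ (Nat.cast_pos.2 hFn.card_pos)] at hn
  exact hn.le

lemma ae_eventually_le_sum_smul (hF : IsFolnerSeq F) (hT : IsTemperedSeq F)
    (hne : ∀ᶠ n in atTop, (F n).Nonempty) {f : X → ℝ} (hf : Measurable f) {M : ℝ}
    (hM : ∀ x, |f x| ≤ M) {c : ℝ} (hc : c < ∫ x, f x ∂μ) :
    ∀ᵐ x ∂μ, ∀ᶠ n in atTop, c * (F n).card ≤ ∑ g ∈ F n, f (g • x) := by
  filter_upwards [ae_tendsto_expect_smul (μ := μ) hF hT hne hf hM] with x hx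
  filter_upwards [hx.eventually_const_lt hc, hne] with n hn hFn
  rw [Finset.expect_eq_sum_div_card, lt_div_iff₀ (Nat.cast_pos.2 hFn.card_pos)] at hn
  exact hn.le

lemma ae_eventually_mul_card_le_card_filter [DecidableEq G] (hF : IsFolnerSeq F)
    (hT : IsTemperedSeq F) (hne : ∀ᶠ n in atTop, (F n).Nonempty) {A : Set X}
    [DecidablePred (· ∈ A)] (hA : MeasurableSet A) {ρ : ℝ} (hρ : ρ < μ.real A) (U : Finset G) :
    ∀ᵐ x ∂μ, ∀ᶠ n in atTop,
      ρ * (F n).card ≤ {c ∈ F n | c • x ∈ A ∧ ∀ u ∈ U, u * c ∈ F n}.card := by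
  obtain ⟨r, hρr, hrA⟩ := exists_between hρ
  have hvisits := ae_eventually_le_sum_smul (μ := μ) hF hT hne (f := A.indicator 1)
    (measurable_one.indicator hA) (M := 1)
    (fun x => by by_cases hx : x ∈ A <;> simp [hx]) (by rwa [integral_indicator_one hA])
  filter_upwards [hvisits] with x hx
  filter_upwards [hx, hF.eventually_card_filter_exists_le U (sub_pos.2 hρr)] with n hn hU
  have hsub : {c ∈ F n | c • x ∈ A} ⊆ {c ∈ F n | c • x ∈ A ∧ ∀ u ∈ U, u * c ∈ F n} ∪
      {c ∈ F n | ∃ u ∈ U, u * c ∉ F n} := by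
    intro c hc
    simp only [Finset.mem_union, Finset.mem_filter] at hc ⊢
    by_contra! hcon
    exact hcon.1 hc.1 hc.2 |>.elim fun u hu => hu.2 (hcon.2 hc.1 u hu.1)
  have hcard : ({c ∈ F n | c • x ∈ A}.card : ℝ) ≤
      {c ∈ F n | c • x ∈ A ∧ ∀ u ∈ U, u * c ∈ F n}.card +
        {c ∈ F n | ∃ u ∈ U, u * c ∉ F n}.card :=
    mod_cast (Finset.card_le_card hsub).trans (Finset.card_union_le _ _)
  simp only [Set.indicator_apply, Pi.one_apply, Finset.sum_boole] at hn
  linarith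

open scoped RightActions in
lemma exists_ae_eventually_isQuasiDisjoint [DecidableEq G] (hF : IsFolnerSeq F)
    (hT : IsTemperedSeq F) {η : ℝ} (hη0 : 0 < η) (hη1 : η < 1) :
    ∃ κ : ℝ, 0 < κ ∧ ∀ n₀, (∀ n ≥ n₀, (F n).Nonempty) → ∀ B : ℕ → Set X,
      (∀ n, MeasurableSet (B n)) → ∀ M ρ, ρ < μ.real (⋃ n ∈ Finset.Ico n₀ M, B n) →
      ∀ᵐ x ∂μ, ∀ᶠ N in atTop, ∃ I ⊆ F N, ∃ (n : G → ℕ) (E : G → Finset G),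
        IsQuasiDisjoint η I (fun c => F (n c) <• c) E ∧
        (∀ c ∈ I, n c ∈ Finset.Ico n₀ M ∧ c • x ∈ B (n c) ∧ F (n c) <• c ⊆ F N) ∧
        ρ * (F N).card ≤ κ * ∑ c ∈ I, ((F (n c)).card : ℝ) := by
  classical
  obtain ⟨C, hC0, hC⟩ := hT.exists_card_biUnion_le
  have hκ : 0 < 1 / η + C / (1 - η) := by
    have := sub_pos.2 hη1
    positivity
  refine ⟨_, hκ, fun n₀ hne B hB M ρ hρ => ?_⟩
  filter_upwards [ae_eventually_mul_card_le_card_filter (μ := μ) hF hT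
    (eventually_atTop.2 ⟨n₀, hne⟩) (Finset.measurableSet_biUnion _ fun n _ => hB n) hρ
    ((Finset.range M).biUnion F)] with x hx
  filter_upwards [hx] with N hN
  set D := {c ∈ F N | c • x ∈ ⋃ n ∈ Finset.Ico n₀ M, B n ∧
    ∀ u ∈ (Finset.range M).biUnion F, u * c ∈ F N}
  have hvisit : ∀ c : G, ∃ n, c ∈ D → n ∈ Finset.Ico n₀ M ∧ c • x ∈ B n := by
    intro c
    by_cases hc : c ∈ D
    · obtain ⟨n, hn, hcn⟩ := mem_iUnion₂.1 (Finset.mem_filter.1 hc).2.1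
      exact ⟨n, fun _ => ⟨hn, hcn⟩⟩
    · exact ⟨0, fun h => absurd h hc⟩
  choose n hn using hvisit
  obtain ⟨I, hID, E, hE, hDI⟩ := exists_isQuasiDisjoint_card_le hC hC0.le hη0 hη1 M (n := n) D
    fun c hc => ⟨(Finset.mem_Ico.1 (hn c hc).1).2, hne _ (Finset.mem_Ico.1 (hn c hc).1).1⟩
  refine ⟨I, hID.trans (Finset.filter_subset _ _), n, E, hE, fun c hc =>
    ⟨(hn c (hID hc)).1, (hn c (hID hc)).2, fun g hg => ?_⟩, ?_⟩
  · have hgU : g * c⁻¹ ∈ (Finset.range M).biUnion F := Finset.mem_biUnion.2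
      ⟨n c, Finset.mem_range.2 (Finset.mem_Ico.1 (hn c (hID hc)).1).2, mem_rightTranslate_iff.1 hg⟩
    simpa only [inv_mul_cancel_right] using (Finset.mem_filter.1 (hID hc)).2.2 _ hgU
  · refine hN.trans (hDI.trans (mul_le_mul_of_nonneg_left ?_ hκ.le))
    exact_mod_cast Finset.card_biUnion_le.trans_eq (by simp)

end Averages

section EntropyRate

variable {α : Type*} [Group G] [MulAction G X] [MeasurableSpace X] {μ : Measure X} {p : X → α}
  {F : ℕ → Finset G}

/-- The entropy `h_μ(G,𝒫)`, for the partition `𝒫` of `X` into the fibres of `p`. -/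
noncomputable def entropyRate (μ : Measure X) (p : X → α) (F : ℕ → Finset G) : ℝ :=
  liminf (fun n => (∫ x, information μ p (F n) x ∂μ) / (F n).card) atTop

variable [MeasurableSpace α] [MeasurableSingletonClass α] [MeasurableConstSMul G X]
  [IsProbabilityMeasure μ]

lemma integral_information_div_card_mem_Icc [Fintype α] (hp : Measurable p) (S : Finset G) :
    (∫ x, information μ p S x ∂μ) / S.card ∈ Icc 0 (Real.log (Fintype.card α) + 1) := by
  refine ⟨div_nonneg (integral_nonneg fun x => information_nonneg μ p S x) (Nat.cast_nonneg _),
    (integral_information_div_card_le_integral_meanInformation hp S).trans ?_⟩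
  have hnorm := norm_integral_le_of_norm_le_const (μ := μ)
    (ae_of_all μ fun x =>
    (Real.norm_eq_abs _).trans_le (abs_meanInformation_le (μ := μ) hp S x))
  rw [probReal_univ, mul_one] at hnorm
  exact (le_abs_self _).trans hnorm

lemma isBoundedUnder_ge_integral_information [Finite α] (hp : Measurable p)
    (F : ℕ → Finset G) :
    IsBoundedUnder (· ≥ ·) atTop fun n => (∫ x, information μ p (F n) x ∂μ) / (F n).card :=
  have := Fintype.ofFinite α
  isBoundedUnder_of ⟨0, fun n => (integral_information_div_card_mem_Icc hp (F n)).1⟩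

lemma isCoboundedUnder_ge_integral_information [Finite α] (hp : Measurable p)
    (F : ℕ → Finset G) :
    IsCoboundedUnder (· ≥ ·) atTop fun n => (∫ x, information μ p (F n) x ∂μ) / (F n).card :=
  have := Fintype.ofFinite α
  (isBoundedUnder_of ⟨_, fun n =>
    (integral_information_div_card_mem_Icc hp (F n)).2⟩).isCoboundedUnder_ge

variable [Countable G]

lemma exists_abs_integral_meanInformation_sub_lt [Fintype α] (hp : Measurable p)
    (hF : GrowthCond F) {s : ℝ} (hs : 0 < s) : ∃ K : Finset G, K.Nonempty ∧
      |∫ x, meanInformation μ p K x ∂μ - entropyRate μ p F| < s := by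
  have hfreq : ∃ᶠ n in atTop, (∫ x, information μ p (F n) x ∂μ) / (F n).card <
      entropyRate μ p F + s / 2 :=
    frequently_lt_of_liminf_lt (isCoboundedUnder_ge_integral_information hp F)
      (lt_add_of_pos_right _ (half_pos hs))
  have hev : ∀ᶠ n in atTop, entropyRate μ p F - s <
      (∫ x, information μ p (F n) x ∂μ) / (F n).card :=
    eventually_lt_of_lt_liminf (sub_lt_self _ hs) (isBoundedUnder_ge_integral_information hp F)
  have hlog : ∀ᶠ n in atTop, Real.log 2 / (F n).card < s / 2 :=
    (hF.tendsto_card_atTop.const_div_atTop _).eventually_lt_const (half_pos hs)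
  obtain ⟨m, hm, hm', hlogm, hne⟩ :=
    (hfreq.and_eventually (hev.and (hlog.and hF.eventually_nonempty))).exists
  refine ⟨F m, hne, abs_sub_lt_iff.2 ⟨?_, ?_⟩⟩
  · have hmean := integral_meanInformation_le (μ := μ) hp (F m)
    rw [add_div] at hmean
    linarith
  · linarith [integral_information_div_card_le_integral_meanInformation (μ := μ) hp (F m)]

lemma entropyRate_le_of_ae_eventually_information_le [Finite α] (hp : Measurable p)
    (hF : GrowthCond F) {c : ℝ}
    (h : ∀ᵐ x ∂μ, ∀ᶠ N in atTop, information μ p (F N) x ≤ c * (F N).card) :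
    entropyRate μ p F ≤ c := by
  have := Fintype.ofFinite α
  refine le_of_forall_gt_imp_ge_of_dense fun c' hc' => ?_
  obtain ⟨b, hcb, hbc'⟩ := exists_between hc'
  have hmean : ∀ᵐ x ∂μ, ∀ᶠ N in atTop, meanInformation μ p (F N) x ≤ b := by
    filter_upwards [h, ae_cylinderMass_itinerary_pos (μ := μ) (G := G) p] with x hx hpos
    filter_upwards [hx, hF.eventually_nonempty,
      hF.tendsto_card_atTop.eventually_ge_atTop (Real.log 2 / (b - c))] with N hN hne hlog
    rw [div_le_iff₀' (sub_pos.2 hcb)] at hlog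
    rw [meanInformation, inv_mul_le_iff₀ (Nat.cast_pos.2 hne.card_pos)]
    linarith [mixedInformation_le_information_add_log_two (hpos (F N))]
  have hintegral := eventually_integral_lt_of_ae_eventually_le
    (fun N => measurable_meanInformation μ hp (F N)) (fun N => abs_meanInformation_le hp (F N))
    hbc' hmean
  refine liminf_le_of_frequently_le (hintegral.mono fun N hN => ?_).frequently
    (isBoundedUnder_ge_integral_information hp F)
  exact (integral_information_div_card_le_integral_meanInformation hp (F N)).trans hN.le

end EntropyRate

section CheapPoints

open scoped RightActions

variable {α : Type*} [Fintype α] [Group G] [MulAction G X] [MeasurableSpace X] {p : X → α}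

/-- The points whose name on `S` costs at most `b` per symbol, whereas the code that describes
names by translates of `K` charges them at least `a` per symbol. -/
def cheapPoints (μ : Measure X) (p : X → α) (K : Finset G) (a b : ℝ) (S : Finset G) :
    Set X :=
  {x | information μ p S x ≤ b * S.card ∧ a * S.card ≤ ∑ g ∈ S, meanInformation μ p K (g • x)}

variable [MeasurableSpace α] [MeasurableSingletonClass α] [MeasurableConstSMul G X]

lemma measurableSet_cheapPoints (μ : Measure X) (hp : Measurable p) (K : Finset G)
    (a b : ℝ) (S : Finset G) : MeasurableSet (cheapPoints μ p K a b S) :=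
  (measurableSet_le (measurable_information μ hp S) measurable_const).inter
    (measurableSet_le measurable_const (Finset.measurable_fun_sum _ fun g _ =>
      (measurable_meanInformation μ hp K).comp (measurable_const_smul g)))

lemma information_le_of_isQuasiDisjoint [DecidableEq G] {μ : Measure X} [IsProbabilityMeasure μ]
    (hp : Measurable p) {x : X} {K S I : Finset G} {T E : G → Finset G} {η s a b r : ℝ}
    (hE : IsQuasiDisjoint η I (fun c => T c <• c) E) (hTS : ∀ c ∈ I, T c <• c ⊆ S)
    (hcheap : ∀ c ∈ I, c • x ∈ cheapPoints μ p K a b (T c))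
    (hT : ∀ c ∈ I, ({g ∈ T c | ∃ k ∈ K, k * g ∉ T c}.card : ℝ) ≤ s * (T c).card)
    (hsum : ∑ g ∈ S, meanInformation μ p K (g • x) ≤ r * S.card)
    (hS : (((K⁻¹ * S) \ S).card : ℝ) ≤ s * S.card)
    (hcode : information μ p S x ≤ 2 * s * S.card +
      ∑ c ∈ I, (s * (T c).card + information μ p (T c) (c • x)) +
      ∑ c ∈ K⁻¹ * S with ¬ K <• c ∩ S ⊆ I.biUnion fun c => T c <• c,
        meanInformation μ p K (c • x)) :
    information μ p S x ≤ (r + (2 + (Real.log (Fintype.card α) + 1)) * s) * S.card -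
      (a - b - s - (Real.log (Fintype.card α) + 1) * (η + s)) * ∑ c ∈ I, ((T c).card : ℝ) := by
  have hψL := abs_meanInformation_le (G := G) (μ := μ) hp K
  have htiles : ∑ c ∈ I, (s * (T c).card + information μ p (T c) (c • x)) ≤
      (s + b) * ∑ c ∈ I, ((T c).card : ℝ) := by
    rw [Finset.mul_sum]
    refine Finset.sum_le_sum fun c hc => ?_
    linarith [(hcheap c hc).1]
  have huncovered := hE.sum_uncovered_le (K := K) (ψ := fun g => meanInformation μ p K (g • x))
    hTS ((abs_nonneg _).trans (hψL x)) (fun g => meanInformation_nonneg hp K _)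
    (fun g => (le_abs_self _).trans (hψL _)) (a := a)
    (fun c hc => by
      simpa only [sum_rightTranslate, mul_smul, Finset.card_smul_finset] using (hcheap c hc).2)
    hsum (fun c hc => by
      simpa only [card_filter_exists_rightTranslate, Finset.card_smul_finset] using hT c hc) hS
  simp only [Finset.card_smul_finset] at huncovered
  linarith

end CheapPoints

section ShannonMcMillanBreiman

open scoped RightActions

variable {α : Type*} [Group G] [MulAction G X] [MeasurableSpace X] {μ : Measure X} {p : X → α}
  {F : ℕ → Finset G} [MeasurableSpace α] [MeasurableSingletonClass α] [MeasurableConstSMul G X]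
  [IsProbabilityMeasure μ] [ErgodicSMul G X μ]

lemma ae_frequently_mem_cheapPoints [Fintype α] (hF : IsFolnerSeq F) (hT : IsTemperedSeq F)
    (hG : GrowthCond F) (hp : Measurable p) {K : Finset G} {a b : ℝ}
    (ha : a < ∫ x, meanInformation μ p K x ∂μ) :
    ∀ᵐ x ∂μ, (∃ᶠ n in atTop, information μ p (F n) x < b * (F n).card) →
      ∃ᶠ n in atTop, x ∈ cheapPoints μ p K a b (F n) := by
  filter_upwards [ae_eventually_le_sum_smul (μ := μ) hF hT hG.eventually_nonempty
    (measurable_meanInformation μ hp K) (abs_meanInformation_le hp K) ha] with x hmean hinfo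
  exact (hinfo.and_eventually hmean).mono fun n hn => ⟨hn.1.le, hn.2⟩

variable [Countable G]

lemma ae_eventually_information_le_of_entropyRate_lt [Finite α]
    (hF : IsFolnerSeq F) (hT : IsTemperedSeq F) (hG : GrowthCond F) (hp : Measurable p) {c : ℝ}
    (hc : entropyRate μ p F < c) :
    ∀ᵐ x ∂μ, ∀ᶠ N in atTop, information μ p (F N) x ≤ c * (F N).card := by
  classical
  have := Fintype.ofFinite α
  set h := entropyRate μ p F
  set L := Real.log (Fintype.card α) + 1
  have hL : 0 < L := by positivity
  obtain ⟨s, hs, hsc⟩ : ∃ s > 0, (4 + L) * s ≤ c - h :=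
    ⟨(c - h) / (4 + L), div_pos (sub_pos.2 hc) (by positivity),
      (mul_div_cancel₀ _ (by positivity)).le⟩
  obtain ⟨K, hK, hKh⟩ := exists_abs_integral_meanInformation_sub_lt (μ := μ) hp hG hs
  have hψ0 := meanInformation_nonneg (G := G) (μ := μ) hp K
  have hψL := abs_meanInformation_le (G := G) (μ := μ) hp K
  filter_upwards [ae_eventually_information_le_of_tiles (μ := μ) hp hG hK hs (𝒯 := ∅)
      (by simpa using hs.le),
    ae_eventually_sum_smul_le (μ := μ) hF hT hG.eventually_nonempty
      (measurable_meanInformation μ hp K) hψL (c := h + 2 * s)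
      (by linarith [(abs_sub_lt_iff.1 hKh).1])] with x hcode hsum
  filter_upwards [hcode, hsum, hF.eventually_card_mul_sdiff_le K⁻¹ hs] with N hcodeN hsumN hKN
  have huncovered : ∑ g ∈ K⁻¹ * F N with
        ¬ K <• g ∩ F N ⊆ (∅ : Finset G).biUnion fun c => (∅ : Finset G) <• c,
        meanInformation μ p K (g • x) ≤
      ∑ g ∈ F N, meanInformation μ p K (g • x) + L * ((K⁻¹ * F N) \ F N).card :=
    (Finset.sum_le_sum_of_subset_of_nonneg (Finset.filter_subset _ _) fun _ _ _ => hψ0 _).trans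
      (sum_le_sum_add_mul_card_sdiff (fun g => hψ0 _) (fun g => (le_abs_self _).trans (hψL _)) _ _)
  have hbound := hcodeN ∅ (Finset.empty_subset _) (fun _ => ∅) (by simp)
  rw [Finset.sum_empty, add_zero] at hbound
  have hbdry := mul_le_mul_of_nonneg_left hKN hL.le
  have hslack := mul_le_mul_of_nonneg_right hsc (Nat.cast_nonneg (F N).card)
  linarith

/-- A set of positive measure of points with `information < b * #(F n)` infinitely often makes a
fixed fraction `t` of almost every long orbit segment covered by windows that the tile code
describes at rate about `b` rather than at the entropy rate. -/
lemma exists_ae_eventually_information_le_sub [Fintype α] (hF : IsFolnerSeq F)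
    (hT : IsTemperedSeq F) (hG : GrowthCond F) (hp : Measurable p) {b η : ℝ} (hη0 : 0 < η)
    (hη1 : η < 1) (hcon : ¬ ∀ᵐ x ∂μ, ∀ᶠ N in atTop, b * (F N).card ≤ information μ p (F N) x) :
    ∃ ρ > (0 : ℝ), ∀ s > (0 : ℝ), ∀ᵐ x ∂μ, ∀ᶠ N in atTop, ∃ t, ρ * (F N).card ≤ t ∧
      information μ p (F N) x ≤
        (entropyRate μ p F + (4 + (Real.log (Fintype.card α) + 1)) * s) * (F N).card -
          (entropyRate μ p F - b - 3 * s - (Real.log (Fintype.card α) + 1) * (η + s)) * t := by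
  classical
  set h := entropyRate μ p F
  set A : Set X := {x | ¬ ∀ᶠ N in atTop, b * (F N).card ≤ information μ p (F N) x}
  have hA : 0 < μ.real A := ENNReal.toReal_pos hcon (measure_ne_top _ _)
  obtain ⟨κ, hκ, hpack⟩ := exists_ae_eventually_isQuasiDisjoint (μ := μ) hF hT hη0 hη1
  refine ⟨μ.real A / 2 / κ, by positivity, fun s hs => ?_⟩
  obtain ⟨K, hK, hKh⟩ := exists_abs_integral_meanInformation_sub_lt (μ := μ) hp hG hs
  rw [abs_sub_lt_iff] at hKh
  obtain ⟨n₀, hkraft, hne, hbdry⟩ := ((hG.eventually_sum_exp_le hs hs).and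
    ((eventually_forall_ge_atTop.2 hG.eventually_nonempty).and (eventually_forall_ge_atTop.2
      (hF.eventually_card_filter_exists_le K hs)))).exists
  have hrecur : ∀ᵐ x ∂μ, x ∈ A → ∃ᶠ n in atTop, x ∈ cheapPoints μ p K (h - 2 * s) b (F n) := by
    simpa only [A, mem_ofPred_eq, not_eventually, not_le] using
      ae_frequently_mem_cheapPoints (μ := μ) hF hT hG hp (by linarith)
  obtain ⟨M, hM⟩ := exists_lt_measureReal_biUnion_Ico hrecur (half_lt_self hA) n₀
  filter_upwards [ae_eventually_information_le_of_tiles (μ := μ) hp hG hK hs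
      (𝒯 := (Finset.Ico n₀ M).image F)
      ((Finset.sum_image_le_of_nonneg fun _ _ => (Real.exp_pos _).le).trans (hkraft M)),
    ae_eventually_sum_smul_le (μ := μ) hF hT hG.eventually_nonempty
      (measurable_meanInformation μ hp K) (abs_meanInformation_le hp K) (c := h + 2 * s)
      (by linarith),
    hpack n₀ hne _ (fun n => measurableSet_cheapPoints μ hp K (h - 2 * s) b (F n)) M _ hM]
    with x hcode hsum hx
  filter_upwards [hcode, hsum, hx, hF.eventually_card_mul_sdiff_le K⁻¹ hs]
    with N hcodeN hsumN ⟨I, hI, n, E, hE, hIn, hIN⟩ hKN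
  refine ⟨∑ c ∈ I, ((F (n c)).card : ℝ), by rwa [div_mul_eq_mul_div, div_le_iff₀' hκ], ?_⟩
  have hinfo := information_le_of_isQuasiDisjoint hp hE (fun c hc => (hIn c hc).2.2)
    (fun c hc => (hIn c hc).2.1) (fun c hc => hbdry _ (Finset.mem_Ico.1 (hIn c hc).1).1) hsumN hKN
    (hcodeN I hI (fun c => F (n c)) fun c hc => Finset.mem_image_of_mem F (hIn c hc).1)
  exact hinfo.trans_eq (by ring)

lemma exists_lt_ae_eventually_information_le [Finite α] (hF : IsFolnerSeq F)
    (hT : IsTemperedSeq F) (hG : GrowthCond F) (hp : Measurable p) {b : ℝ}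
    (hb : b < entropyRate μ p F)
    (hcon : ¬ ∀ᵐ x ∂μ, ∀ᶠ N in atTop, b * (F N).card ≤ information μ p (F N) x) :
    ∃ c < entropyRate μ p F,
      ∀ᵐ x ∂μ, ∀ᶠ N in atTop, information μ p (F N) x ≤ c * (F N).card := by
  have := Fintype.ofFinite α
  set L := Real.log (Fintype.card α) + 1
  have hL : 0 < L := by positivity
  obtain ⟨ε, hε, rfl⟩ : ∃ ε > 0, b = entropyRate μ p F - ε :=
    ⟨entropyRate μ p F - b, sub_pos.2 hb, by ring⟩
  obtain ⟨η, hη0, hη1, hLη⟩ : ∃ η > 0, η < 1 ∧ L * η ≤ ε / 4 := by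
    refine ⟨ε / (4 * (L + ε)), by positivity, (div_lt_one (by positivity)).2 (by linarith), ?_⟩
    rw [mul_div_assoc', div_le_div_iff₀ (by positivity) (by positivity)]
    nlinarith
  obtain ⟨ρ, hρ, hsave⟩ := exists_ae_eventually_information_le_sub hF hT hG hp hη0 hη1 hcon
  obtain ⟨s, hs, hs4, hsρ⟩ : ∃ s > 0, (4 + L) * s ≤ ε / 4 ∧ (4 + L) * s ≤ ε * ρ / 4 := by
    refine ⟨min (ε / 4) (ε * ρ / 4) / (4 + L), by positivity, ?_⟩
    rw [mul_div_cancel₀ _ (by positivity)]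
    exact ⟨min_le_left _ _, min_le_right _ _⟩
  refine ⟨entropyRate μ p F - ε * ρ / 4, by linarith [mul_pos hε hρ], ?_⟩
  filter_upwards [hsave s hs] with x hx
  filter_upwards [hx] with N ⟨t, hNt, hinfo⟩
  have hslack := mul_le_mul_of_nonneg_right hsρ (Nat.cast_nonneg (α := ℝ) (F N).card)
  have hgain : ε / 2 * (ρ * (F N).card) ≤
      (entropyRate μ p F - (entropyRate μ p F - ε) - 3 * s - L * (η + s)) * t :=
    mul_le_mul (by linarith) hNt (by positivity) (by linarith)
  linarith

lemma ae_eventually_le_information_of_lt_entropyRate [Finite α]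
    (hF : IsFolnerSeq F) (hT : IsTemperedSeq F) (hG : GrowthCond F) (hp : Measurable p) {b : ℝ}
    (hb : b < entropyRate μ p F) :
    ∀ᵐ x ∂μ, ∀ᶠ N in atTop, b * (F N).card ≤ information μ p (F N) x := by
  by_contra hcon
  obtain ⟨c, hc, hinfo⟩ := exists_lt_ae_eventually_information_le hF hT hG hp hb hcon
  exact hc.not_ge (entropyRate_le_of_ae_eventually_information_le hp hG hinfo)

/-- The Shannon–McMillan–Breiman theorem. -/
theorem ae_tendsto_information_div_card [Finite α] (hF : IsFolnerSeq F) (hT : IsTemperedSeq F)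
    (hG : GrowthCond F) (hp : Measurable p) :
    ∀ᵐ x ∂μ, Tendsto (fun N => information μ p (F N) x / (F N).card) atTop
      (𝓝 (entropyRate μ p F)) := by
  have hupper := ae_all_iff.2 fun k : ℕ => ae_eventually_information_le_of_entropyRate_lt hF hT hG
    hp (lt_add_of_pos_right (entropyRate μ p F) (Nat.one_div_pos_of_nat (n := k)))
  have hlower := ae_all_iff.2 fun k : ℕ => ae_eventually_le_information_of_lt_entropyRate hF hT hG
    hp (sub_lt_self (entropyRate μ p F) (Nat.one_div_pos_of_nat (n := k)))
  filter_upwards [hupper, hlower] with x hxu hxl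
  refine tendsto_order.2 ⟨fun b hb => ?_, fun b hb => ?_⟩
  · obtain ⟨k, hk⟩ := exists_nat_one_div_lt (sub_pos.2 hb)
    filter_upwards [hxl k, hG.eventually_nonempty] with N hN hne
    exact (lt_sub_comm.1 hk).trans_le ((le_div_iff₀ (Nat.cast_pos.2 hne.card_pos)).2 hN)
  · obtain ⟨k, hk⟩ := exists_nat_one_div_lt (sub_pos.2 hb)
    filter_upwards [hxu k, hG.eventually_nonempty] with N hN hne
    exact ((div_le_iff₀ (Nat.cast_pos.2 hne.card_pos)).2 hN).trans_lt (lt_sub_iff_add_lt'.1 hk)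

end ShannonMcMillanBreiman

section Partitions

variable [MeasurableSpace X] {k : ℕ}

lemma isMeasPartition_preimage_singleton {p : X → Fin k} (hp : Measurable p) :
    IsMeasPartition fun i => p ⁻¹' {i} :=
  ⟨fun i => hp (measurableSet_singleton i),
    fun _ _ hij => (disjoint_singleton.2 hij).preimage p,
    by rw [← preimage_iUnion, iUnion_of_singleton, preimage_univ]⟩

lemma IsMeasPartition.exists_eq_preimage_singleton {P : Fin k → Set X} (hP : IsMeasPartition P) :
    ∃ p : X → Fin k, Measurable p ∧ P = fun i => p ⁻¹' {i} := by
  obtain ⟨hmeas, hdisj, hcover⟩ := hP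
  choose p hp using iUnion_eq_univ_iff.1 hcover
  have hpP : P = fun i => p ⁻¹' {i} := by
    ext i x
    refine ⟨fun hx => ?_, fun hx => hx ▸ hp x⟩
    by_contra hne
    exact disjoint_left.1 (hdisj hne) (hp x) hx
  exact ⟨p, measurable_to_countable' fun i => congrFun hpP i ▸ hmeas i, hpP⟩

variable [Group G] [MulAction G X] [MeasurableConstSMul G X] {μ : Measure X}
  [IsProbabilityMeasure μ]

lemma partH_preimage_singleton {p : X → Fin k} (hp : Measurable p) (S : Finset G) :
    partH μ (fun i => p ⁻¹' {i}) S = ∫ x, information μ p S x ∂μ := by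
  classical
  obtain ⟨x₀⟩ := nonempty_of_isProbabilityMeasure μ
  rw [integral_information_eq hp S (itinerary p x₀), sum_configs_eq_sum_updateFinset, partH]
  refine Finset.sum_congr (by ext; simp) fun v _ => ?_
  have hcyl : ⋂ g : S, (fun y => (g : G) • y) ⁻¹' (p ⁻¹' {v g}) =
      itineraryCylinder p S (Function.updateFinset (itinerary p x₀) S v) := by
    ext y
    simp only [mem_iInter, mem_preimage, mem_singleton_iff, Subtype.forall]
    refine forall₂_congr fun g hg => ?_
    rw [← congrFun (Function.restrict_updateFinset (itinerary p x₀) v) ⟨g, hg⟩]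
    rfl
  rw [hcyl]
  rfl

lemma measEnt_eq_iSup_entropyRate (μ : Measure X) [IsProbabilityMeasure μ] (F : ℕ → Finset G) :
    measEnt μ F =
      ⨆ (k : ℕ) (p : X → Fin k) (_ : Measurable p), ENNReal.ofReal (entropyRate μ p F) := by
  have hpart : ∀ {k : ℕ} {p : X → Fin k}, Measurable p →
      partEnt μ F (fun i => p ⁻¹' {i}) = entropyRate μ p F := fun hp => by
    simp only [partEnt, partH_preimage_singleton hp, entropyRate]
  refine iSup_congr fun k => le_antisymm (iSup₂_le fun P hP => ?_) (iSup₂_le fun p hp => ?_)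
  · obtain ⟨p, hp, rfl⟩ := hP.exists_eq_preimage_singleton
    exact le_iSup₂_of_le p hp (hpart hp ▸ le_rfl)
  · exact le_iSup₂_of_le _ (isMeasPartition_preimage_singleton hp) (hpart hp ▸ le_rfl)

end Partitions

section SmallPartitions

variable [PseudoMetricSpace X] [MeasurableSpace X]

lemma exists_measurable_dist_lt [OpensMeasurableSpace X] (hX : TotallyBounded (univ : Set X))
    {δ : ℝ} (hδ : 0 < δ) :
    ∃ (k : ℕ) (p : X → Fin k), Measurable p ∧ ∀ x y, p x = p y → dist x y < δ := by
  obtain ⟨t, ht, hcover⟩ := Metric.totallyBounded_iff.1 hX (δ / 2) (half_pos hδ)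
  obtain ⟨k, c, rfl⟩ := ht.fin_embedding
  have hP : IsMeasPartition (disjointed fun i => Metric.ball (c i) (δ / 2)) := by
    refine ⟨fun i => ?_, disjoint_disjointed _, ?_⟩
    · rw [disjointed_apply, Finset.sup_set_eq_biUnion]
      exact measurableSet_ball.diff (Finset.measurableSet_biUnion _ fun _ _ => measurableSet_ball)
    · rw [iUnion_disjointed]
      exact univ_subset_iff.1 (hcover.trans_eq biUnion_range)
  obtain ⟨p, hp, hpP⟩ := hP.exists_eq_preimage_singleton
  have hball : ∀ x, x ∈ Metric.ball (c (p x)) (δ / 2) := fun x =>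
    disjointed_subset (fun i => Metric.ball (c i) (δ / 2)) (p x)
      ((congrFun hpP (p x)).symm ▸ (rfl : p x = p x))
  refine ⟨k, p, hp, fun x y hxy => ?_⟩
  have hx := Metric.mem_ball.1 (hball x)
  have hy := Metric.mem_ball'.1 (hball y)
  rw [← hxy] at hy
  linarith [dist_triangle x (c (p x)) y]

variable [BorelSpace X] {μ : Measure X} [IsFiniteMeasure μ]

lemma exists_isClosed_measureReal_thickening_sdiff_lt {A : Set X} (hA : MeasurableSet A) {c : ℝ}
    (hc : 0 < c) :
    ∃ C ⊆ A, IsClosed C ∧ ∃ δ > (0 : ℝ),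
      μ.real (A \ C ∪ Metric.thickening δ C \ C) < c := by
  obtain ⟨C, hCA, hC, hlt⟩ := hA.exists_isClosed_sdiff_lt (measure_ne_top μ A)
    (ENNReal.ofReal_pos.2 (half_pos hc)).ne'
  have hthick := ((ENNReal.tendsto_toReal (measure_ne_top μ C)).comp
    (tendsto_measure_thickening_of_isClosed ⟨1, one_pos, measure_ne_top _ _⟩
      hC)).eventually_lt_const (lt_add_of_pos_right _ (half_pos hc))
  obtain ⟨δ, hδ, hδ0⟩ := (hthick.and self_mem_nhdsWithin).exists
  refine ⟨C, hCA, hC, δ, hδ0, ?_⟩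
  have hsdiff : μ.real (Metric.thickening δ C \ C) < c / 2 := by
    rw [measureReal_sdiff (Metric.self_subset_thickening hδ0 C) hC.measurableSet]
    exact sub_lt_iff_lt_add'.2 hδ
  calc μ.real (A \ C ∪ Metric.thickening δ C \ C)
      ≤ μ.real (A \ C) + μ.real (Metric.thickening δ C \ C) := measureReal_union_le _ _
    _ < c / 2 + c / 2 := add_lt_add (ENNReal.toReal_lt_of_lt_ofReal hlt) hsdiff
    _ = c := add_halves c

lemma exists_measurable_eq_of_dist_lt {α : Type*} [Finite α] [Nonempty α] [MeasurableSpace α]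
    [MeasurableSingletonClass α] {p : X → α} (hp : Measurable p) {b : ℝ} (hb : 0 < b) :
    ∃ (B : Set X) (δ : ℝ) (q : X → α), MeasurableSet B ∧ μ.real B < b ∧ 0 < δ ∧ Measurable q ∧
      ∀ x ∉ B, ∀ y, dist x y < δ → q y = p x := by
  have := Fintype.ofFinite α
  have hcard : (0 : ℝ) < Fintype.card α := Nat.cast_pos.2 Fintype.card_pos
  choose C hCp hC r hr hlt using fun a => exists_isClosed_measureReal_thickening_sdiff_lt (μ := μ)
    (hp (measurableSet_singleton a)) (div_pos hb hcard)
  have hCm := fun a => (hC a).measurableSet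
  obtain ⟨a₀, hmin⟩ := Finite.exists_min r
  let U : α → Set X := fun a => Metric.thickening (r a₀ / 2) (C a)
  have hU : ∀ a, MeasurableSet (U a) := fun a => Metric.isOpen_thickening.measurableSet
  obtain ⟨q, hq, hqU⟩ := exists_measurable_piecewise (fun a => U a \ ⋃ j ≠ a, U j)
    (fun a => (hU a).diff (.iUnion fun j => .iUnion fun _ => hU j)) (fun a _ => a)
    (fun _ => measurable_const) fun a j haj x hx =>
      absurd (mem_biUnion haj.symm hx.2.1) hx.1.2
  refine ⟨⋃ a, (p ⁻¹' {a} \ C a ∪ Metric.thickening (r a) (C a) \ C a), r a₀ / 2, q,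
    .iUnion fun a => ((hp (measurableSet_singleton a)).diff (hCm a)).union
      (Metric.isOpen_thickening.measurableSet.diff (hCm a)), ?_, half_pos (hr a₀), hq,
    fun x hx y hxy => hqU (p x) ⟨?_, ?_⟩⟩
  · calc μ.real (⋃ a, (p ⁻¹' {a} \ C a ∪ Metric.thickening (r a) (C a) \ C a))
        ≤ ∑ a, μ.real (p ⁻¹' {a} \ C a ∪ Metric.thickening (r a) (C a) \ C a) :=
          measureReal_iUnion_fintype_le _
      _ < ∑ _a : α, b / Fintype.card α :=
          Finset.sum_lt_sum_of_nonempty Finset.univ_nonempty fun a _ => hlt a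
      _ = b := by rw [Finset.sum_const, Finset.card_univ, nsmul_eq_mul, mul_div_cancel₀ _ hcard.ne']
  all_goals simp only [mem_iUnion, mem_union, Set.mem_sdiff, not_exists, not_or,
    not_and_not_right] at hx
  · exact Metric.mem_thickening_iff.2 ⟨x, (hx (p x)).1 rfl, (dist_comm y x).trans_lt hxy⟩
  · simp only [mem_iUnion, not_exists]
    intro j hj hyj
    obtain ⟨z, hz, hyz⟩ := Metric.mem_thickening_iff.1 hyj
    have hxz : dist x z < r j := by linarith [dist_triangle x y z, hmin j]
    exact hj (hCp j ((hx j).2 (Metric.mem_thickening_iff.2 ⟨z, hz, hxz⟩))).symm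

end SmallPartitions

section Noise

variable {α : Type*} [Fintype α] {γ : ℝ} {a b : α}

/-- The probability of reading `a` for the symbol `b`, when with probability `γ` the symbol is
replaced by a uniformly distributed one. -/
noncomputable def noise (γ : ℝ) (a b : α) : ℝ :=
  open scoped Classical in (1 - γ) * (if a = b then 1 else 0) + γ / Fintype.card α

lemma sum_noise (γ : ℝ) (b : α) : ∑ a, noise γ a b = 1 := by
  have : Nonempty α := ⟨b⟩
  have hcard : (Fintype.card α : ℝ) ≠ 0 := Nat.cast_ne_zero.2 Fintype.card_ne_zero
  simp only [noise, Finset.sum_add_distrib, ← Finset.mul_sum, Finset.sum_const, Finset.card_univ,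
    nsmul_eq_mul, mul_div_cancel₀ _ hcard]
  rw [Finset.sum_eq_single_of_mem b (Finset.mem_univ b) fun _ _ h => if_neg h, if_pos rfl]
  ring

lemma div_card_le_noise (h1 : γ ≤ 1) (a b : α) : γ / Fintype.card α ≤ noise γ a b :=
  le_add_of_nonneg_left (mul_nonneg (sub_nonneg.2 h1) (by split_ifs <;> norm_num))

lemma one_sub_le_noise_self (h0 : 0 ≤ γ) (a : α) : 1 - γ ≤ noise γ a a := by
  rw [noise, if_pos rfl, mul_one]
  exact le_add_of_nonneg_right (by positivity)

lemma noise_nonneg (h0 : 0 ≤ γ) (h1 : γ ≤ 1) (a b : α) : 0 ≤ noise γ a b :=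
  (by positivity : 0 ≤ γ / Fintype.card α).trans (div_card_le_noise h1 a b)

variable [Group G] [MulAction G X] [MeasurableSpace X] {μ : Measure X} {q : X → α} {S : Finset G}

/-- The probability of reading the configuration `w` on `S` when the itinerary of a `μ`-random
point under `q` is corrupted by independent `noise` at every coordinate. -/
noncomputable def noisyMass (μ : Measure X) (q : X → α) (γ : ℝ) (S : Finset G) (w : G → α) : ℝ :=
  ∫ y, ∏ g ∈ S, noise γ (w g) (itinerary q y g) ∂μ

lemma noisyMass_nonneg (h0 : 0 ≤ γ) (h1 : γ ≤ 1) (S : Finset G) (w : G → α) :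
    0 ≤ noisyMass μ q γ S w :=
  integral_nonneg fun _ => Finset.prod_nonneg fun _ _ => noise_nonneg h0 h1 _ _

lemma dependsOn_noisyMass (μ : Measure X) (q : X → α) (γ : ℝ) (S : Finset G) :
    DependsOn (noisyMass μ q γ S) (S : Set G) := fun _ _ h =>
  integral_congr_ae (ae_of_all μ fun _ => Finset.prod_congr rfl fun g hg => by rw [h g hg])

variable [MeasurableSpace α] [MeasurableSingletonClass α] [MeasurableConstSMul G X]
  [IsProbabilityMeasure μ]

lemma integrable_prod_noise (hq : Measurable q) (γ : ℝ) (S : Finset G) (w : G → α) :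
    Integrable (fun y => ∏ g ∈ S, noise γ (w g) (itinerary q y g)) μ :=
  integrable_comp_itinerary (S := S) (V := fun v => ∏ g ∈ S, noise γ (w g) (v g))
    (fun _ _ h => Finset.prod_congr rfl fun g hg => by rw [h g hg]) hq

lemma sum_configs_noisyMass [DecidableEq G] (hq : Measurable q) (γ : ℝ) (S : Finset G)
    (u₀ : G → α) : ∑ w ∈ configs u₀ S, noisyMass μ q γ S w = 1 := by
  simp only [noisyMass]
  rw [← integral_finsetSum _ fun w _ => integrable_prod_noise hq γ S w]
  simp only [fun y => sum_configs_prod u₀ S fun g a => noise γ a (itinerary q y g), sum_noise,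
    Finset.prod_const_one, integral_const, probReal_univ, smul_eq_mul, mul_one]

end Noise

lemma monotone_bowenBall [MetricSpace X] [Group G] [MulAction G X] (S : Finset G) (x : X) :
    Monotone (bowenBall S x) :=
  fun _ _ h _ hy g hg => (hy g hg).trans_le h

section Local

variable [MeasurableSpace X] {μ : Measure X}

lemma antitone_locTerm (μ : Measure X) [IsFiniteMeasure μ] (m : ℕ) :
    Antitone fun B => locTerm μ B m := by
  intro B B' h
  by_cases hB : μ B = 0
  · exact le_top.trans_eq (if_pos hB).symm
  have hB' : μ B' ≠ 0 := fun h' => hB (measure_mono_null h h')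
  simp only [locTerm, if_neg hB, if_neg hB']
  gcongr
  exacts [ENNReal.toReal_pos hB (measure_ne_top _ _), measure_ne_top _ _]

variable [MetricSpace X] [Group G] [MulAction G X]

lemma antitone_upLoc (μ : Measure X) [IsFiniteMeasure μ] (F : ℕ → Finset G) (x : X) :
    Antitone (upLoc μ F x) := fun _ _ h =>
  limsup_le_limsup <| Eventually.of_forall fun n =>
    antitone_locTerm μ _ (monotone_bowenBall (F n) x h)

variable {α : Type*} {p q : X → α} {δ : ℝ}

lemma locTerm_bowenBall_le_of_cylinderMass_pos [IsFiniteMeasure μ] {S : Finset G} {x : X}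
    (hp : ∀ y z, p y = p z → dist y z < δ) (hx : 0 < cylinderMass μ p S (itinerary p x)) :
    locTerm μ (bowenBall S x δ) S.card ≤ ENNReal.ofReal (information μ p S x / S.card) := by
  have hsub : itineraryCylinder p S (itinerary p x) ⊆ bowenBall S x δ :=
    fun y hy g hg => hp _ _ (hy g hg).symm
  refine (antitone_locTerm μ S.card hsub).trans_eq ?_
  exact if_neg fun h0 => hx.ne' (by rw [cylinderMass, Measure.real, h0, ENNReal.toReal_zero])

lemma exp_mul_measureReal_bowenBall_le_noisyMass [Fintype α] [MeasurableSpace α]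
    [MeasurableSingletonClass α] [MeasurableConstSMul G X] [IsProbabilityMeasure μ]
    (hq : Measurable q) {B : Set X} (hB : ∀ x ∉ B, ∀ y, dist x y < δ → q y = p x) {γ ε L : ℝ}
    (hγ0 : 0 ≤ γ) (hγ : Real.exp (-ε) ≤ 1 - γ) (hL : Real.exp (-L) ≤ γ / Fintype.card α)
    (S : Finset G) (x : X) :
    Real.exp (-∑ g ∈ S, (ε + B.indicator (fun _ => L) (g • x))) * μ.real (bowenBall S x δ) ≤
      noisyMass μ q γ S (itinerary p x) := by
  have hγ1 : γ ≤ 1 := by linarith [Real.exp_pos (-ε)]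
  have hε : 0 ≤ ε := neg_nonpos.1 (Real.exp_le_one_iff.1 (by linarith))
  have hsub : bowenBall S x δ ⊆ {y | Real.exp (-∑ g ∈ S, (ε + B.indicator (fun _ => L) (g • x))) ≤
      ∏ g ∈ S, noise γ (itinerary p x g) (itinerary q y g)} := by
    intro y hy
    rw [mem_ofPred_eq, ← Finset.sum_neg_distrib, Real.exp_sum]
    refine Finset.prod_le_prod (fun _ _ => (Real.exp_pos _).le) fun g hg => ?_
    by_cases hgx : g • x ∈ B
    · rw [indicator_of_mem hgx]
      exact ((Real.exp_le_exp.2 (by linarith)).trans hL).trans (div_card_le_noise hγ1 _ _)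
    · rw [indicator_of_notMem hgx, add_zero, itinerary, itinerary, hB _ hgx _ (hy g hg)]
      exact hγ.trans (one_sub_le_noise_self hγ0 _)
  exact (mul_le_mul_of_nonneg_left (measureReal_mono hsub) (Real.exp_pos _).le).trans
    (mul_meas_ge_le_integral_of_nonneg (ae_of_all μ fun y => Finset.prod_nonneg fun g _ =>
      noise_nonneg hγ0 hγ1 _ _) (integrable_prod_noise hq γ S _) _)

end Local

section BrinKatok

variable [Group G] [MulAction G X] [MeasurableSpace X] {μ : Measure X} {F : ℕ → Finset G}

lemma ofReal_le_locTerm [IsFiniteMeasure μ] {B : Set X} {m : ℕ} (hm : 0 < m) {b : ℝ}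
    (h : μ.real B ≤ Real.exp (-(b * m))) : ENNReal.ofReal b ≤ locTerm μ B m := by
  unfold locTerm
  split_ifs with hB
  · exact le_top
  · refine ENNReal.ofReal_le_ofReal ((le_div_iff₀ (Nat.cast_pos.2 hm)).2 (le_neg_of_le_neg ?_))
    exact (Real.log_le_iff_le_exp (ENNReal.toReal_pos hB (measure_ne_top μ B))).2 h

lemma cylinderMass_le_exp_neg_information {α : Type*} (μ : Measure X) (p : X → α) (S : Finset G)
    (x : X) : cylinderMass μ p S (itinerary p x) ≤ Real.exp (-information μ p S x) :=
  (Real.le_exp_log _).trans_eq (by rw [information, neg_neg])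

variable {α : Type*} [MeasurableSpace α] [MeasurableSingletonClass α] [MeasurableConstSMul G X]
  [IsProbabilityMeasure μ]

lemma ae_eventually_exp_mul_noisyMass_le [Fintype α] (hG : GrowthCond F) (p : X → α) {q : X → α}
    (hq : Measurable q) {γ : ℝ} (h0 : 0 ≤ γ) (h1 : γ ≤ 1) {ε : ℝ} (hε : 0 < ε) :
    ∀ᵐ x ∂μ, ∀ᶠ n in atTop, Real.exp (-ε * (F n).card) * noisyMass μ q γ (F n) (itinerary p x) ≤
      cylinderMass μ p (F n) (itinerary p x) := by
  classical
  obtain ⟨x₀⟩ := nonempty_of_isProbabilityMeasure μ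
  have hbad n := measureReal_cylinderMass_lt_le (μ := μ) (p := p) (noisyMass_nonneg h0 h1 (F n))
    (dependsOn_noisyMass μ q γ (F n)) (itinerary p x₀) (Real.exp_pos (-ε * (F n).card)).le
    (sum_configs_noisyMass hq γ (F n) _).le
  filter_upwards [hG.ae_eventually_notMem hε fun n => (hbad n).trans_eq (mul_one _)] with x hx
  exact hx.mono fun n hn => not_lt.1 hn

lemma measureReal_bowenBall_le [Fintype α] [MetricSpace X] {p q : X → α} (hq : Measurable q)
    {B : Set X} {δ : ℝ} (hB : ∀ x ∉ B, ∀ y, dist x y < δ → q y = p x) {γ ε L b : ℝ} (hγ0 : 0 ≤ γ)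
    (hγ : Real.exp (-ε) ≤ 1 - γ) (hL : Real.exp (-L) ≤ γ / Fintype.card α) {S : Finset G} {x : X}
    (hnoisy : Real.exp (-ε * S.card) * noisyMass μ q γ S (itinerary p x) ≤
      cylinderMass μ p S (itinerary p x))
    (hvisits : ∑ g ∈ S, B.indicator (fun _ => L) (g • x) ≤ ε * S.card)
    (hinfo : (b + 3 * ε) * S.card ≤ information μ p S x) :
    μ.real (bowenBall S x δ) ≤ Real.exp (-(b * S.card)) := by
  have hball := exp_mul_measureReal_bowenBall_le_noisyMass (μ := μ) hq hB hγ0 hγ hL S x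
  rw [Finset.sum_add_distrib, Finset.sum_const, nsmul_eq_mul] at hball
  have hexp : Real.exp (-(2 * ε * S.card)) * μ.real (bowenBall S x δ) ≤
      noisyMass μ q γ S (itinerary p x) :=
    (mul_le_mul_of_nonneg_right (Real.exp_le_exp.2 (by linarith)) measureReal_nonneg).trans hball
  have hcyl : Real.exp (-ε * S.card) *
      (Real.exp (-(2 * ε * S.card)) * μ.real (bowenBall S x δ)) ≤
        Real.exp (-((b + 3 * ε) * S.card)) :=
    (mul_le_mul_of_nonneg_left hexp (Real.exp_pos _).le).trans <| hnoisy.trans <|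
      (cylinderMass_le_exp_neg_information μ p S x).trans (Real.exp_le_exp.2 (neg_le_neg hinfo))
  rw [← mul_assoc, ← Real.exp_add, ← le_div_iff₀' (Real.exp_pos _), ← Real.exp_sub] at hcyl
  exact hcyl.trans_eq (congrArg _ (by ring))

variable [ErgodicSMul G X μ]

lemma ae_eventually_sum_indicator_le (hF : IsFolnerSeq F) (hT : IsTemperedSeq F)
    (hne : ∀ᶠ n in atTop, (F n).Nonempty) {B : Set X} (hB : MeasurableSet B) {L ε : ℝ}
    (h : L * μ.real B < ε) :
    ∀ᵐ x ∂μ, ∀ᶠ n in atTop,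
      ∑ g ∈ F n, B.indicator (fun _ => L) (g • x) ≤ ε * (F n).card := by
  refine ae_eventually_sum_smul_le hF hT hne (measurable_const.indicator hB) (M := |L|)
    (fun x => ?_) ?_
  · exact norm_indicator_le_norm_self (f := fun _ => L) x
  · rwa [integral_indicator_const _ hB, smul_eq_mul, mul_comm]

variable [Countable G]

lemma exists_ae_eventually_measureReal_bowenBall_le [Finite α] [MetricSpace X] [BorelSpace X]
    (hF : IsFolnerSeq F) (hT : IsTemperedSeq F) (hG : GrowthCond F) {p : X → α}
    (hp : Measurable p) {b : ℝ} (hb : b < entropyRate μ p F) :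
    ∃ δ, 0 < δ ∧ ∀ᵐ x ∂μ, ∀ᶠ n in atTop,
      μ.real (bowenBall (F n) x δ) ≤ Real.exp (-(b * (F n).card)) := by
  have := Fintype.ofFinite α
  obtain ⟨x₀⟩ := nonempty_of_isProbabilityMeasure μ
  have : Nonempty α := ⟨p x₀⟩
  obtain ⟨ε, hε, hbε⟩ : ∃ ε > 0, b + 3 * ε < entropyRate μ p F :=
    ⟨(entropyRate μ p F - b) / 4, by linarith, by linarith⟩
  set γ := 1 - Real.exp (-ε)
  have hγ : 0 < γ := sub_pos.2 (Real.exp_lt_one_iff.2 (neg_lt_zero.2 hε))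
  have hγ1 : γ ≤ 1 := sub_le_self _ (Real.exp_pos _).le
  set L := -Real.log (γ / Fintype.card α)
  have hL : Real.exp (-L) ≤ γ / Fintype.card α := by
    rw [neg_neg, Real.exp_log (by positivity)]
  have hL0 : 0 ≤ L := neg_nonneg.2 <| Real.log_nonpos (by positivity) <|
    div_le_one_of_le₀ (hγ1.trans (by exact_mod_cast Fintype.card_pos)) (Nat.cast_nonneg _)
  obtain ⟨B, δ, q, hB, hμB, hδ, hq, hpq⟩ :=
    exists_measurable_eq_of_dist_lt (μ := μ) hp (div_pos hε (by linarith : 0 < L + 1))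
  rw [lt_div_iff₀' (by linarith), add_mul, one_mul] at hμB
  refine ⟨δ, hδ, ?_⟩
  filter_upwards [ae_eventually_exp_mul_noisyMass_le hG p hq hγ.le hγ1 hε,
    ae_eventually_sum_indicator_le hF hT hG.eventually_nonempty hB
      ((le_add_of_nonneg_right measureReal_nonneg).trans_lt hμB),
    ae_eventually_le_information_of_lt_entropyRate hF hT hG hp hbε] with x hnoisy hvisits hinfo
  filter_upwards [hnoisy, hvisits, hinfo] with n hn hv hi
  exact measureReal_bowenBall_le hq hpq hγ.le (sub_sub_cancel 1 _).ge hL hn hv hi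

lemma ae_ofReal_le_iSup_lowLoc [Finite α] [MetricSpace X] [BorelSpace X]
    (hF : IsFolnerSeq F) (hT : IsTemperedSeq F) (hG : GrowthCond F) {p : X → α}
    (hp : Measurable p) {b : ℝ} (hb : b < entropyRate μ p F) :
    ∀ᵐ x ∂μ, ENNReal.ofReal b ≤ ⨆ (δ : ℝ) (_ : 0 < δ), lowLoc μ F x δ := by
  obtain ⟨δ, hδ, hball⟩ := exists_ae_eventually_measureReal_bowenBall_le hF hT hG hp hb
  filter_upwards [hball] with x hx
  refine le_iSup₂_of_le δ hδ (le_liminf_of_le (by isBoundedDefault) ?_)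
  filter_upwards [hx, hG.eventually_nonempty] with n hn hne
  exact ofReal_le_locTerm hne.card_pos hn

variable [MetricSpace X] [BorelSpace X]

lemma ae_measEnt_le_iSup_lowLoc (hF : IsFolnerSeq F) (hT : IsTemperedSeq F) (hG : GrowthCond F) :
    ∀ᵐ x ∂μ, measEnt μ F ≤ ⨆ (δ : ℝ) (_ : 0 < δ), lowLoc μ F x δ := by
  have hrat : ∀ᵐ x ∂μ, ∀ r : ℚ, ENNReal.ofReal r < measEnt μ F →
      ENNReal.ofReal r ≤ ⨆ (δ : ℝ) (_ : 0 < δ), lowLoc μ F x δ := by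
    refine ae_all_iff.2 fun r => ?_
    by_cases hr : ENNReal.ofReal r < measEnt μ F
    · rw [measEnt_eq_iSup_entropyRate] at hr
      simp only [lt_iSup_iff] at hr
      obtain ⟨k, p, hp, hr⟩ := hr
      filter_upwards [ae_ofReal_le_iSup_lowLoc hF hT hG hp
        (ENNReal.ofReal_lt_ofReal_iff'.1 hr).1] with x hx _
      exact hx
    · exact Eventually.of_forall fun x h => absurd h hr
  filter_upwards [hrat] with x hx
  refine le_of_forall_lt_imp_le_of_dense fun c hc => ?_
  obtain ⟨r, -, hcr, hr⟩ := ENNReal.lt_iff_exists_rat_btwn.1 hc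
  exact hcr.le.trans (hx r hr)

lemma ae_upLoc_le_measEnt (hX : TotallyBounded (univ : Set X)) (hF : IsFolnerSeq F)
    (hT : IsTemperedSeq F) (hG : GrowthCond F) {δ : ℝ} (hδ : 0 < δ) :
    ∀ᵐ x ∂μ, upLoc μ F x δ ≤ measEnt μ F := by
  obtain ⟨k, p, hp, hpδ⟩ := exists_measurable_dist_lt hX hδ
  filter_upwards [ae_tendsto_information_div_card hF hT hG hp,
    ae_cylinderMass_itinerary_pos (μ := μ) (G := G) p] with x hx hpos
  calc upLoc μ F x δ
      ≤ limsup (fun n => ENNReal.ofReal (information μ p (F n) x / (F n).card)) atTop :=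
        limsup_le_limsup <| Eventually.of_forall fun n =>
          locTerm_bowenBall_le_of_cylinderMass_pos hpδ (hpos (F n))
    _ = ENNReal.ofReal (entropyRate μ p F) := (ENNReal.tendsto_ofReal hx).limsup_eq
    _ ≤ measEnt μ F := by
        rw [measEnt_eq_iSup_entropyRate]
        exact le_iSup₂_of_le k p (le_iSup_of_le hp le_rfl)

lemma ae_iSup_upLoc_le_measEnt (hX : TotallyBounded (univ : Set X)) (hF : IsFolnerSeq F)
    (hT : IsTemperedSeq F) (hG : GrowthCond F) :
    ∀ᵐ x ∂μ, ⨆ (δ : ℝ) (_ : 0 < δ), upLoc μ F x δ ≤ measEnt μ F := by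
  filter_upwards [ae_all_iff.2 fun m : ℕ => ae_upLoc_le_measEnt (μ := μ) hX hF hT hG
    (Nat.one_div_pos_of_nat (n := m))] with x hx
  refine iSup₂_le fun δ hδ => ?_
  obtain ⟨m, hm⟩ := exists_nat_one_div_lt hδ
  exact (antitone_upLoc μ F x hm.le).trans (hx m)

end BrinKatok

theorem brin_katok_formula_general [Group G] [Countable G] [MetricSpace X] [MulAction G X]
    [MeasurableSpace X] [BorelSpace X] [MeasurableConstSMul G X]
    (hX : TotallyBounded (univ : Set X)) (μ : Measure X) [IsProbabilityMeasure μ]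
    [SMulInvariantMeasure G X μ] (herg : IsErgodicGAction G μ) (F : ℕ → Finset G)
    (hF : IsFolnerSeq F) (hT : IsTemperedSeq F) (hG : GrowthCond F) :
    ∀ᵐ x ∂μ,
      (⨆ (δ : ℝ) (_ : 0 < δ), lowLoc μ F x δ) = measEnt μ F ∧
      (⨆ (δ : ℝ) (_ : 0 < δ), upLoc μ F x δ) = measEnt μ F := by
  have := herg.ergodicSMul
  filter_upwards [ae_measEnt_le_iSup_lowLoc (μ := μ) hF hT hG,
    ae_iSup_upLoc_le_measEnt (μ := μ) hX hF hT hG] with x hlow hup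
  have hle : ⨆ (δ : ℝ) (_ : 0 < δ), lowLoc μ F x δ ≤ ⨆ (δ : ℝ) (_ : 0 < δ), upLoc μ F x δ :=
    iSup₂_mono fun δ _ => liminf_le_limsup
  exact ⟨(hle.trans hup).antisymm hlow, hup.antisymm (hlow.trans hle)⟩

/-- Brin–Katok entropy formula, ergodic case. For a `G`-invariant ergodic
Borel probability measure `μ` and a tempered Følner sequence `{F_n}` with
`lim_n |F_n|/log n = ∞`, for `μ`-a.e. `x`,
`lim_{δ→0} liminf_n -(1/|F_n|) log μ(B_{F_n}(x,δ)) = lim_{δ→0} limsup_n -(1/|F_n|) log μ(B_{F_n}(x,δ)) = h_μ(X,G)`. -/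
theorem brin_katok_formula
    [Group G] [Countable G] [MetricSpace X] [CompactSpace X]
    [MulAction G X] [ContinuousConstSMul G X] [MeasurableSpace X] [BorelSpace X]
    (μ : Measure X) [IsProbabilityMeasure μ] [SMulInvariantMeasure G X μ]
    (herg : IsErgodicGAction G μ)
    (F : ℕ → Finset G) (hFol : IsFolnerSeq F) (hTemp : IsTemperedSeq F)
    (hGrow : GrowthCond F) :
    ∀ᵐ x ∂μ,
      (⨆ (δ : ℝ) (_ : 0 < δ), lowLoc μ F x δ) = measEnt μ F ∧
      (⨆ (δ : ℝ) (_ : 0 < δ), upLoc μ F x δ) = measEnt μ F := by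
  exact brin_katok_formula_general isCompact_univ.totallyBounded μ herg F hFol hTemp hGrow
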